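/- arXiv:1110.6239 — 2 statements merged into one kernel-verified Lean document; each statement's English description precedes it below -/
import Mathlib

section
/- Let (A, m) be a noetherian local ring with infinite residue field, M a finitely generated A-module of Krull dimension d > 0, J an m-primary ideal, and I_1, ..., I_s ideals of A. Set I = I_1···I_s and assume ht((I + Ann_A M)/Ann_A M) = h > 0, and that k_0, k_1, ..., k_s are non-negative integers with k_0 + k_1 + ··· + k_s = d − 1 and k_1 + ··· + k_s < h. If x_1, ..., x_d is a Rees superficial sequence of (I_1, ..., I_s, J) with respect to M of the type (k_1, ..., k_s, k_0+1) that is a system of parameters for M, then e_A(J^{[k_0+1]}, I_1^{[k_1]}, ..., I_s^{[k_s]}, M) = e_A(x_1, ..., x_d, M). -/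
open IsLocalRing

section MixedMultDefs

variable (A : Type*) [CommRing A]

/-- The length of an `A`-module `M`, defined as the height of `⊤` in the lattice of
submodules of `M` (i.e. the supremum of lengths of chains of submodules). -/
noncomputable def modLength (M : Type*) [AddCommGroup M] [Module A M] : ℕ∞ :=
  Order.height (⊤ : Submodule A M)

/-- The length of a module as a natural number (`0` if the length is infinite). -/
noncomputable def lenNat (M : Type*) [AddCommGroup M] [Module A M] : ℕ :=
  (modLength A M).toNat

/-- The height of an ideal: the infimum of the heights of the prime ideals containing it. -/
noncomputable def idealHeight (I : Ideal A) : ℕ∞ :=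
  ⨅ (p : PrimeSpectrum A) (_ : I ≤ p.asIdeal), Order.height p

/-- The Krull dimension of a module `M`, i.e. the Krull dimension of `A / Ann_A M`. -/
noncomputable def modDim (M : Type*) [AddCommGroup M] [Module A M] : WithBot ℕ∞ :=
  ringKrullDim (A ⧸ Module.annihilator A M)

/-- `x` is a Rees superficial element of the family of ideals `I = (I 0, …, I (t-1))` with
respect to `M`, as an element of the ideal `I i`:  `x ∈ I i` and
`xM ∩ I_1^{n_1} ⋯ I_i^{n_i + 1} ⋯ I_t^{n_t} M = x I_1^{n_1} ⋯ I_i^{n_i} ⋯ I_t^{n_t} M`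
for all sufficiently large `n i` and arbitrary other exponents. -/
def IsReesSuperficial (M : Type*) [AddCommGroup M] [Module A M] {t : ℕ}
    (I : Fin t → Ideal A) (i : Fin t) (x : A) : Prop :=
  x ∈ I i ∧ ∃ N : ℕ, ∀ n : Fin t → ℕ, N ≤ n i →
    (Ideal.span {x} • (⊤ : Submodule A M)) ⊓
        ((∏ j, I j ^ (n j + if j = i then 1 else 0)) • (⊤ : Submodule A M)) =
      Ideal.span {x} • ((∏ j, I j ^ (n j)) • (⊤ : Submodule A M))

/-- `x 0, …, x (t-1)` is a Rees superficial sequence of the family `I` with respect to `M`,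
where the assignment `c` records to which ideal each element of the sequence belongs:
`x i` is a Rees superficial element of `I`, as an element of `I (c i)`, with respect to
`M / (x 0, …, x (i-1)) M`. -/
def IsReesSuperficialSeq (M : Type*) [AddCommGroup M] [Module A M] {t s : ℕ}
    (I : Fin s → Ideal A) (x : Fin t → A) (c : Fin t → Fin s) : Prop :=
  ∀ i : Fin t,
    IsReesSuperficial A
      (M ⧸ ((Ideal.span (x '' {j | (j : ℕ) < (i : ℕ)})) • (⊤ : Submodule A M)))
      I (c i) (x i)

/-- The assignment `c` has type `(k 0, …, k (s-1))`: for each `i`, exactly `k i` members of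
the sequence are assigned to the ideal indexed by `i`. -/
def OfTypeCount {t s : ℕ} (c : Fin t → Fin s) (k : Fin s → ℕ) : Prop :=
  ∀ i : Fin s, (Finset.univ.filter fun j => c j = i).card = k i

/-- The ideal generated by the members of the sequence `x` assigned (by `c`) to index `i`. -/
def jrIdeal {t s : ℕ} (x : Fin t → A) (c : Fin t → Fin s) (i : Fin s) : Ideal A :=
  Ideal.span (x '' {j | c j = i})

/-- The defining equation of a joint reduction:  all members of the sequence lie in their
assigned ideals, and `I_1^{n_1+1} ⋯ I_s^{n_s+1} M = Σ_i (𝔍_i) I_1^{n_1+1} ⋯ I_i^{n_i} ⋯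
I_s^{n_s+1} M` for all sufficiently large `n_1, …, n_s`, where `𝔍_i` consists of the
members of the sequence assigned to `I i`. -/
def IsJointReductionEq (M : Type*) [AddCommGroup M] [Module A M] {t s : ℕ}
    (I : Fin s → Ideal A) (x : Fin t → A) (c : Fin t → Fin s) : Prop :=
  (∀ j, x j ∈ I (c j)) ∧
  ∃ N : ℕ, ∀ n : Fin s → ℕ, (∀ i, N ≤ n i) →
    ((∏ i, I i ^ (n i + 1)) • (⊤ : Submodule A M)) =
      ∑ i : Fin s, jrIdeal A x c i •
        ((∏ j, I j ^ (n j + if j = i then 0 else 1)) • (⊤ : Submodule A M))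

/-- A joint reduction of the family `I` with respect to `M` of type `k`. -/
def IsJointReduction (M : Type*) [AddCommGroup M] [Module A M] {t s : ℕ}
    (I : Fin s → Ideal A) (x : Fin t → A) (c : Fin t → Fin s) (k : Fin s → ℕ) : Prop :=
  IsJointReductionEq A M I x c ∧ OfTypeCount c k

/-- `x 1, …, x d` is a system of parameters for `M`:  `d = dim M`, the `x j` lie in the
maximal ideal, and `M / (x 1, …, x d) M` has finite length. -/
def IsSOP [IsLocalRing A] (M : Type*) [AddCommGroup M] [Module A M] {d : ℕ}
    (x : Fin d → A) : Prop :=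
  modDim A M = (d : ℕ∞) ∧ (∀ j, x j ∈ maximalIdeal A) ∧
    IsFiniteLength A (M ⧸ ((Ideal.span (Set.range x)) • (⊤ : Submodule A M)))

/-- `e` is the Hilbert–Samuel multiplicity of the ideal `q` on the `d`-dimensional module
`M`: the function `n ↦ ℓ_A(M / q^n M)` is eventually given by a polynomial of degree at
most `d` with `n^d`-coefficient `e / d!`. -/
def IsHSMult (M : Type*) [AddCommGroup M] [Module A M] (q : Ideal A) (d : ℕ) (e : ℕ) :
    Prop :=
  ∃ P : Polynomial ℚ, P.natDegree ≤ d ∧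
    (∃ N : ℕ, ∀ n : ℕ, N ≤ n →
      IsFiniteLength A (M ⧸ (q ^ n • (⊤ : Submodule A M))) ∧
      (lenNat A (M ⧸ (q ^ n • (⊤ : Submodule A M))) : ℚ) = P.eval (n : ℚ)) ∧
    (e : ℚ) = P.coeff d * (Nat.factorial d : ℚ)

/-- The subquotient `J^{n_0} I_1^{n_1} ⋯ I_s^{n_s} M / J^{n_0+1} I_1^{n_1} ⋯ I_s^{n_s} M`. -/
abbrev mixedSub (M : Type*) [AddCommGroup M] [Module A M] {s : ℕ} (J : Ideal A)
    (I : Fin s → Ideal A) (n : Fin (s + 1) → ℕ) : Submodule A M :=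
  (J ^ (n 0) * ∏ i : Fin s, I i ^ (n i.succ)) • (⊤ : Submodule A M)

/-- continued -/
abbrev mixedPiece (M : Type*) [AddCommGroup M] [Module A M] {s : ℕ} (J : Ideal A)
    (I : Fin s → Ideal A) (n : Fin (s + 1) → ℕ) :=
  ↥(mixedSub A M J I n) ⧸
    (Submodule.comap (mixedSub A M J I n).subtype
      ((J ^ (n 0 + 1) * ∏ i : Fin s, I i ^ (n i.succ)) • (⊤ : Submodule A M)))

/-- `e` is the mixed multiplicity `e_A(J^{[k_0+1]}, I_1^{[k_1]}, …, I_s^{[k_s]}; M)`: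
the function `(n_0, …, n_s) ↦ ℓ_A(J^{n_0} I_1^{n_1} ⋯ I_s^{n_s} M / J^{n_0+1} I_1^{n_1}
⋯ I_s^{n_s} M)` is, for all sufficiently large `n_0, …, n_s`, given by a polynomial of
total degree at most `k_0 + k_1 + ⋯ + k_s` whose coefficient of
`n_0^{k_0} n_1^{k_1} ⋯ n_s^{k_s}` is `e / (k_0! k_1! ⋯ k_s!)`. -/
def IsMixedMult (M : Type*) [AddCommGroup M] [Module A M] {s : ℕ} (J : Ideal A)
    (I : Fin s → Ideal A) (k0 : ℕ) (k : Fin s → ℕ) (e : ℕ) : Prop :=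
  ∃ P : MvPolynomial (Fin (s + 1)) ℚ, P.totalDegree ≤ k0 + ∑ i, k i ∧
    (∃ N : ℕ, ∀ n : Fin (s + 1) → ℕ, (∀ i, N ≤ n i) →
      IsFiniteLength A (mixedPiece A M J I n) ∧
      (lenNat A (mixedPiece A M J I n) : ℚ) =
        MvPolynomial.eval (fun i => (n i : ℚ)) P) ∧
    (e : ℚ) = MvPolynomial.coeff (Finsupp.equivFunOnFinite.symm (Fin.cons k0 k)) P *
      ((Nat.factorial k0 * ∏ i, Nat.factorial (k i) : ℕ) : ℚ)

/-- `e` is the mixed multiplicity `e_A(I_1^{[k_1]}, …, I_s^{[k_s]}; M)` of a family of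
`m`-primary ideals: the function `(n_1, …, n_s) ↦ ℓ_A(M / I_1^{n_1} ⋯ I_s^{n_s} M)` is, for
all sufficiently large `n_1, …, n_s`, given by a polynomial of total degree at most
`k_1 + ⋯ + k_s` whose coefficient of `n_1^{k_1} ⋯ n_s^{k_s}` is `e / (k_1! ⋯ k_s!)`. -/
def IsMixedMultPrimary (M : Type*) [AddCommGroup M] [Module A M] {s : ℕ}
    (I : Fin s → Ideal A) (k : Fin s → ℕ) (e : ℕ) : Prop :=
  ∃ P : MvPolynomial (Fin s) ℚ, P.totalDegree ≤ ∑ i, k i ∧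
    (∃ N : ℕ, ∀ n : Fin s → ℕ, (∀ i, N ≤ n i) →
      IsFiniteLength A (M ⧸ ((∏ i, I i ^ (n i)) • (⊤ : Submodule A M))) ∧
      (lenNat A (M ⧸ ((∏ i, I i ^ (n i)) • (⊤ : Submodule A M))) : ℚ) =
        MvPolynomial.eval (fun i => (n i : ℚ)) P) ∧
    (e : ℚ) = MvPolynomial.coeff (Finsupp.equivFunOnFinite.symm k) P *
      ((∏ i, Nat.factorial (k i) : ℕ) : ℚ)

/-- The submodule `(0_M : I^∞) = ⋃_n (0_M : I^n)` of `M`. -/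
def satSub (M : Type*) [AddCommGroup M] [Module A M] (I : Ideal A) : Submodule A M :=
  ⨆ n : ℕ, Submodule.torsionBySet A M ((I ^ n : Ideal A) : Set A)

/-- A polynomial function on an `A`-module `V` with values in the residue field of `A`:
an element of the subalgebra of functions generated by the linear ones. -/
def IsPolyFun [IsLocalRing A] (V : Type*) [AddCommGroup V] [Module A V]
    (f : V → ResidueField A) : Prop :=
  f ∈ Algebra.adjoin A {g : V → ResidueField A | ∃ l : V →ₗ[A] ResidueField A, g = ⇑l}

/-- A Zariski open subset of an `A`-module `V` (for `V` a finite-dimensional vector space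
over the residue field, this is the usual Zariski topology): the complement of the common
zero locus of a set of polynomial functions. -/
def IsZariskiOpen [IsLocalRing A] (V : Type*) [AddCommGroup V] [Module A V]
    (U : Set V) : Prop :=
  ∃ S : Set (V → ResidueField A), (∀ f ∈ S, IsPolyFun A V f) ∧
    U = {v | ∃ f ∈ S, f v ≠ 0}

end MixedMultDefs

namespace MM

section RelLen
variable {A : Type*} [CommRing A] {M : Type*} [AddCommGroup M] [Module A M]

lemma mem_sOf {X Y : Submodule A M} {v : X} : v ∈ Y.submoduleOf X ↔ (v : M) ∈ Y := Iff.rfl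

/-- relative length of `X / (X ∩ Y)` -/
noncomputable def rl (X Y : Submodule A M) : ℕ∞ :=
  Module.length A (X ⧸ Y.submoduleOf X)

lemma rl_of_surj {N : Type*} [AddCommGroup N] [Module A N] (X Y : Submodule A M)
    (f : X →ₗ[A] N) (hf : Function.Surjective f)
    (hk : ∀ v : X, f v = 0 ↔ (v : M) ∈ Y) : rl X Y = Module.length A N := by
  have : Y.submoduleOf X = LinearMap.ker f := by
    ext v; simp [mem_sOf, hk]
  unfold rl
  rw [this]
  exact (f.quotKerEquivOfSurjective hf).length_eq

lemma rl_add {X Y Z : Submodule A M} (h1 : Y ≤ X) (h2 : Z ≤ Y) :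
    rl X Z = rl Y Z + rl X Y := by
  refine Module.length_eq_add_of_exact
    (Submodule.mapQ (Z.submoduleOf Y) (Z.submoduleOf X) (Submodule.inclusion h1) ?_)
    (Submodule.mapQ (Z.submoduleOf X) (Y.submoduleOf X) LinearMap.id ?_) ?_ ?_ ?_
  · intro v hv; simpa [mem_sOf] using hv
  · intro v hv
    simp only [mem_sOf, Submodule.comap_id] at hv ⊢
    exact h2 hv
  · rw [← LinearMap.ker_eq_bot, LinearMap.ker_eq_bot']
    intro m
    induction m using Submodule.Quotient.induction_on with
    | _ v =>
      intro hv
      rw [Submodule.mapQ_apply, Submodule.Quotient.mk_eq_zero] at hv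
      rw [Submodule.Quotient.mk_eq_zero]
      simpa [mem_sOf] using hv
  · intro m
    induction m using Submodule.Quotient.induction_on with
    | _ v => exact ⟨Submodule.Quotient.mk v, by simp⟩
  · intro m
    induction m using Submodule.Quotient.induction_on with
    | _ v =>
      rw [Submodule.mapQ_apply, Submodule.Quotient.mk_eq_zero]
      constructor
      · intro hv
        refine ⟨Submodule.Quotient.mk ⟨v, by simpa [mem_sOf] using hv⟩, ?_⟩
        rw [Submodule.mapQ_apply]
        rfl
      · rintro ⟨w, hw⟩
        induction w using Submodule.Quotient.induction_on with
        | _ u =>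
          rw [Submodule.mapQ_apply, Submodule.Quotient.eq] at hw
          simp only [mem_sOf, LinearMap.id_apply] at hw ⊢
          have h3 : (u : M) - v ∈ Y := h2 (by simpa using hw)
          have := Y.sub_mem u.2 h3
          simpa using this

lemma rl_top (Y : Submodule A M) : rl ⊤ Y = Module.length A (M ⧸ Y) := by
  refine rl_of_surj _ _ (Y.mkQ.comp (⊤ : Submodule A M).subtype) ?_ ?_
  · intro m
    obtain ⟨v, rfl⟩ := Y.mkQ_surjective m
    exact ⟨⟨v, trivial⟩, rfl⟩
  · intro v; simp

lemma rl_sup (X Y : Submodule A M) : rl (X ⊔ Y) Y = rl X (X ⊓ Y) := by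
  symm
  refine rl_of_surj _ _ ((Submodule.mkQ (Y.submoduleOf (X ⊔ Y))).comp
    (Submodule.inclusion le_sup_left)) ?_ ?_
  · intro m
    induction m using Submodule.Quotient.induction_on with
    | _ v =>
      obtain ⟨v, hv⟩ := v
      obtain ⟨a, ha, b, hb, rfl⟩ := Submodule.mem_sup.1 hv
      refine ⟨⟨a, ha⟩, ?_⟩
      simp only [LinearMap.comp_apply, Submodule.mkQ_apply]
      rw [Submodule.Quotient.eq]
      simpa [mem_sOf] using hb
  · intro v
    simp [mem_sOf]

lemma rl_mono {X X' Y Y' : Submodule A M} (h : X ≤ X') (h' : Y' ⊓ X ≤ Y) : rl X Y ≤ rl X' Y' := by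
  have h1 : rl X Y ≤ rl X (Y' ⊓ X) := by
    refine Module.length_le_of_surjective
      (Submodule.mapQ ((Y' ⊓ X).submoduleOf X) (Y.submoduleOf X) LinearMap.id ?_) ?_
    · intro v hv
      simp only [mem_sOf, Submodule.comap_id] at hv ⊢
      exact h' hv
    · intro m
      induction m using Submodule.Quotient.induction_on with
      | _ v => exact ⟨Submodule.Quotient.mk v, by simp⟩
  refine h1.trans ?_
  rw [inf_comm, ← rl_sup]
  have : rl X (X ⊓ Y') ≤ rl X' (X' ⊓ Y') := by
    refine Module.length_le_of_injective
      (Submodule.mapQ ((X ⊓ Y').submoduleOf X) ((X' ⊓ Y').submoduleOf X')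
        (Submodule.inclusion h) ?_) ?_
    · intro v hv
      simp only [mem_sOf, Submodule.mem_comap, Submodule.mem_inf] at hv ⊢
      exact ⟨h hv.1, hv.2⟩
    · rw [← LinearMap.ker_eq_bot, LinearMap.ker_eq_bot']
      intro m
      induction m using Submodule.Quotient.induction_on with
      | _ v =>
        intro hv
        rw [Submodule.mapQ_apply, Submodule.Quotient.mk_eq_zero] at hv
        rw [Submodule.Quotient.mk_eq_zero]
        simp only [mem_sOf, Submodule.mem_inf] at hv ⊢
        exact ⟨v.2, hv.2⟩
  rw [rl_sup]
  refine this.trans (le_of_eq ?_)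
  have h3 : (X' ⊓ Y').submoduleOf X' = Y'.submoduleOf X' := by
    ext v; simp [mem_sOf]
  unfold rl
  rw [h3]

lemma rl_self_zero {X Y : Submodule A M} (h : X ≤ Y) : rl X Y = 0 := by
  unfold rl
  rw [Module.length_eq_zero_iff, Submodule.Quotient.subsingleton_iff,
    Submodule.submoduleOf, Submodule.comap_subtype_eq_top]
  exact h

/-- integer valued relative length -/
noncomputable def rn (X Y : Submodule A M) : ℤ := ((rl X Y).toNat : ℤ)

lemma rn_add {X Y Z : Submodule A M} (h1 : Y ≤ X) (h2 : Z ≤ Y) (hf : rl X Z ≠ ⊤) :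
    rn X Z = rn Y Z + rn X Y := by
  unfold rn
  have := rl_add h1 h2
  rw [this] at hf ⊢
  rw [ENat.toNat_add]
  · push_cast; rfl
  · exact fun h => hf (by simp [h])
  · exact fun h => hf (by simp [h])

end RelLen
end MM

namespace MM

section Koszul
variable {A : Type*} [CommRing A] {M : Type*} [AddCommGroup M] [Module A M] {d : ℕ}

/-- Koszul sign -/
def sg (A : Type*) [CommRing A] (j : Fin d) (S : Finset (Fin d)) : A :=
  (-1) ^ (S.filter (· < j)).card

lemma sg_sq (j : Fin d) (S : Finset (Fin d)) : sg A j S * sg A j S = 1 := by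
  unfold sg; rw [← pow_add, ← two_mul, pow_mul]; simp

lemma sg_insert {i j : Fin d} {S : Finset (Fin d)} (hj : j ∉ S) :
    sg A i (insert j S) = (if j < i then -1 else 1) * sg A i S := by
  unfold sg
  rw [Finset.filter_insert]
  split_ifs with h
  · rw [Finset.card_insert_of_notMem (by simp [hj]), pow_succ]; ring
  · simp

lemma sg_swap {i j : Fin d} {S : Finset (Fin d)} (hij : i ≠ j) (hi : i ∉ S) (hj : j ∉ S) :
    sg A i (insert j S) * sg A j (insert i S) = - (sg A i S * sg A j S) := by
  rw [sg_insert hi, sg_insert hj]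
  rcases lt_or_gt_of_ne hij with h | h
  · rw [if_neg h.not_gt, if_pos h]; ring
  · rw [if_pos h, if_neg h.not_gt]; ring

/-- Koszul coefficient -/
def kc (A : Type*) [CommRing A] (j : Fin d) (S : Finset (Fin d)) : A :=
  if j ∈ S then 0 else sg A j S

lemma kc_swap (i j : Fin d) (S : Finset (Fin d)) :
    kc A j S * kc A i (insert j S) + kc A i S * kc A j (insert i S) = 0 := by
  unfold kc
  by_cases hij : i = j
  · subst hij; simp
  by_cases hi : i ∈ S
  · simp [hi]
  by_cases hj : j ∈ S
  · simp [hj]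
  have h := sg_swap (A := A) hij hi hj
  have e1 := sg_sq (A := A) i S
  have e2 := sg_sq (A := A) j S
  simp only [hi, hj, if_false, Finset.mem_insert, hij, Ne.symm hij, or_self]
  rw [sg_insert hi, sg_insert hj]
  rcases lt_or_gt_of_ne hij with h | h
  · rw [if_neg h.not_gt, if_pos h]; ring
  · rw [if_pos h, if_neg h.not_gt]; ring

/-- Koszul differential -/
def kd (M : Type*) [AddCommGroup M] [Module A M] (x : Fin d → A) :
    (Finset (Fin d) → M) →ₗ[A] (Finset (Fin d) → M) where
  toFun z S := ∑ j, (kc A j S * x j) • z (insert j S)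
  map_add' z w := by
    ext S; simp [smul_add, Finset.sum_add_distrib]
  map_smul' a z := by
    ext S; simp only [Pi.smul_apply, Finset.smul_sum, RingHom.id_apply]
    exact Finset.sum_congr rfl fun j _ => smul_comm _ _ _

lemma kd_apply (x : Fin d → A) (z : Finset (Fin d) → M) (S : Finset (Fin d)) :
    kd M x z S = ∑ j, (kc A j S * x j) • z (insert j S) := rfl

lemma kd_kd (x : Fin d → A) (z : Finset (Fin d) → M) : kd M x (kd M x z) = 0 := by
  ext S
  simp only [kd_apply, Finset.smul_sum, Pi.zero_apply]
  rw [← Finset.sum_product']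
  refine Finset.sum_involution (fun p _ => (p.2, p.1)) ?_ ?_ ?_ ?_
  · rintro ⟨j, i⟩ _
    simp only
    rw [Finset.insert_comm j i, smul_smul, smul_smul, ← add_smul]
    have := kc_swap (A := A) i j S
    have e : kc A j S * x j * (kc A i (insert j S) * x i) +
      kc A i S * x i * (kc A j (insert i S) * x j) = 0 := by
      linear_combination (x j * x i) * this
    rw [e, zero_smul]
  · rintro ⟨j, i⟩ _ h
    simp only [ne_eq, Prod.mk.injEq, not_and]
    rintro rfl
    exfalso; apply h
    simp [kc]
  · simp
  · simp

/-- Koszul homotopy -/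
def kh (j : Fin d) (z : Finset (Fin d) → M) : Finset (Fin d) → M :=
  fun S => if j ∈ S then sg A j (S.erase j) • z (S.erase j) else 0

lemma kd_kh (x : Fin d → A) (j : Fin d) (z : Finset (Fin d) → M) (hz : kd M x z = 0) :
    kd M x (kh (A := A) j z) = x j • z := by
  ext S
  rw [kd_apply, Pi.smul_apply]
  by_cases hj : j ∈ S
  · obtain ⟨T, hT, rfl⟩ : ∃ T, j ∉ T ∧ S = insert j T :=
      ⟨S.erase j, by simp, by simp [Finset.insert_erase hj]⟩
    have h0 : kd M x z T = 0 := by rw [hz]; rfl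
    rw [kd_apply] at h0
    have h1 : ∑ i, (kc A i (insert j T) * x i) • kh (A := A) j z (insert i (insert j T))
        + sg A j T • ∑ i, (kc A i T * x i) • z (insert i T) = x j • z (insert j T) := by
      rw [Finset.smul_sum, ← Finset.sum_add_distrib]
      rw [Finset.sum_eq_single j]
      · have : kc A j T = sg A j T := by simp [kc, hT]
        rw [this, smul_smul, ← mul_assoc, sg_sq]
        simp [kc]
      · intro i _ hij
        by_cases hi : i ∈ T
        · simp [kc, hi]
        have e : (insert i (insert j T)).erase j = insert i T := by
          rw [Finset.insert_comm, Finset.erase_insert]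
          simp [hT, Ne.symm hij]
        simp only [kh, Finset.mem_insert, true_or, or_true, if_true, e]
        rw [smul_smul, smul_smul, ← add_smul]
        have := sg_swap (A := A) hij hi hT
        have e2 : kc A i (insert j T) * x i * sg A j (insert i T) + sg A j T * (kc A i T * x i)
          = 0 := by
          simp only [kc, Finset.mem_insert, hij, hi, or_self, if_false]
          linear_combination (x i) * this
        rw [e2, zero_smul]
      · simp
    rw [h0, smul_zero, add_zero] at h1
    exact h1
  · rw [Finset.sum_eq_single j]
    · simp only [kh, Finset.mem_insert, true_or, if_true, Finset.erase_insert hj, kc, hj, if_false]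
      rw [smul_smul]
      congr 1
      linear_combination (x j) * sg_sq (A := A) j S
    · intro i _ hij
      have : j ∉ insert i S := by simp [hj, Ne.symm hij]
      simp [kh, this]
    · simp

/-- functions with values in a family of submodules -/
def Kf (P : Finset (Fin d) → Submodule A M) : Submodule A (Finset (Fin d) → M) :=
  Submodule.pi Set.univ P

lemma mem_Kf {P : Finset (Fin d) → Submodule A M} {z : Finset (Fin d) → M} :
    z ∈ Kf P ↔ ∀ S, z S ∈ P S := by simp [Kf, Submodule.mem_pi]

/-- exactness of the Koszul subcomplex defined by a family of submodules -/
def KEx (x : Fin d → A) (P : Finset (Fin d) → Submodule A M) : Prop :=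
  ∀ z ∈ Kf P, kd M x z = 0 → ∃ w ∈ Kf P, kd M x w = z

/-- the family is stable under the differential -/
def KSt (x : Fin d → A) (P : Finset (Fin d) → Submodule A M) : Prop :=
  ∀ S, ∀ j ∉ S, ∀ m ∈ P (insert j S), x j • m ∈ P S

lemma KSt.kd_mem {x : Fin d → A} {P : Finset (Fin d) → Submodule A M} (h : KSt x P)
    {z : Finset (Fin d) → M} (hz : z ∈ Kf P) : kd M x z ∈ Kf P := by
  rw [mem_Kf] at hz ⊢
  intro S
  rw [kd_apply]
  refine Submodule.sum_mem _ fun j _ => ?_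
  by_cases hj : j ∈ S
  · simp [kc, hj]
  · rw [mul_smul]
    exact Submodule.smul_mem _ _ (h S j hj _ (hz _))

/-- restriction to subsets of parity `b` -/
def par (b : Bool) (z : Finset (Fin d) → M) : Finset (Fin d) → M :=
  fun S => if decide (Even S.card) = b then z S else 0

/-- functions in `Kf P` supported in parity `b` -/
def Kp (b : Bool) (P : Finset (Fin d) → Submodule A M) : Submodule A (Finset (Fin d) → M) :=
  Kf (fun S => if decide (Even S.card) = b then P S else ⊥)

lemma mem_Kp {b : Bool} {P : Finset (Fin d) → Submodule A M} {z : Finset (Fin d) → M} :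
    z ∈ Kp b P ↔ z ∈ Kf P ∧ ∀ S, decide (Even S.card) = !b → z S = 0 := by
  simp only [Kp, mem_Kf]
  constructor
  · intro h
    refine ⟨fun S => ?_, fun S hS => ?_⟩
    · have := h S
      split_ifs at this with h1
      · exact this
      · rw [(Submodule.mem_bot A).1 this]; exact Submodule.zero_mem _
    · have := h S
      rw [if_neg (by rw [hS]; simp)] at this
      exact this
  · rintro ⟨h1, h2⟩ S
    split_ifs with h
    · exact h1 S
    · exact h2 S (by revert h; cases b <;> simp)

lemma par_mem {b : Bool} {P : Finset (Fin d) → Submodule A M} {z : Finset (Fin d) → M}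
    (h : z ∈ Kf P) : par b z ∈ Kp b P := by
  rw [mem_Kf] at h
  rw [Kp, mem_Kf]
  intro S
  unfold par
  split_ifs
  · exact h S
  · exact Submodule.zero_mem _

lemma par_of_mem {b : Bool} {P : Finset (Fin d) → Submodule A M} {z : Finset (Fin d) → M}
    (h : z ∈ Kp b P) : par b z = z := by
  ext S
  unfold par
  split_ifs with h1
  · rfl
  · exact ((mem_Kp.1 h).2 S (by revert h1; cases b <;> simp)).symm

lemma kd_par (x : Fin d → A) (b : Bool) (z : Finset (Fin d) → M) :
    kd M x (par (!b) z) = par b (kd M x z) := by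
  ext S
  simp only [par, kd_apply]
  have key : ∀ j ∉ S, (decide (Even (insert j S).card) = !b ↔ decide (Even S.card) = b) := by
    intro j hj
    have h1 : Even (insert j S).card ↔ ¬ Even S.card := by
      rw [Finset.card_insert_of_notMem hj, Nat.even_add_one]
    by_cases h2 : Even S.card
    · have h3 : ¬ Even (insert j S).card := fun h => h1.1 h h2
      cases b <;> simp [h2, h3]
    · have h3 : Even (insert j S).card := h1.2 h2
      cases b <;> simp [h2, h3]
  split_ifs with h
  · refine Finset.sum_congr rfl fun j _ => ?_
    by_cases hj : j ∈ S
    · simp [kc, hj]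
    · rw [if_pos ((key j hj).2 h)]
  · refine Finset.sum_eq_zero fun j _ => ?_
    by_cases hj : j ∈ S
    · simp [kc, hj]
    · rw [if_neg (fun h' => h ((key j hj).1 h')), smul_zero]

lemma kd_Kp {x : Fin d → A} {b : Bool} {P : Finset (Fin d) → Submodule A M} (hP : KSt x P)
    {z : Finset (Fin d) → M} (hz : z ∈ Kp (!b) P) : kd M x z ∈ Kp b P := by
  rw [← par_of_mem hz, kd_par]
  exact par_mem (hP.kd_mem (mem_Kp.1 hz).1)

lemma KEx.par {x : Fin d → A} {b : Bool} {P : Finset (Fin d) → Submodule A M} (hP : KEx x P)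
    {z : Finset (Fin d) → M} (hz : z ∈ Kp b P) (h : kd M x z = 0) :
    ∃ w ∈ Kp (!b) P, kd M x w = z := by
  obtain ⟨w, hw, e⟩ := hP z (mem_Kp.1 hz).1 h
  exact ⟨MM.par (!b) w, par_mem hw, by rw [kd_par, e, par_of_mem hz]⟩

/-- cycles modulo P -/
def Zp (x : Fin d → A) (b : Bool) (P Q : Finset (Fin d) → Submodule A M) :
    Submodule A (Finset (Fin d) → M) :=
  Kp b Q ⊓ (Kp (!b) P).comap (kd M x)

lemma rl_step {x : Fin d → A} {b : Bool} {P Q : Finset (Fin d) → Submodule A M}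
    (hPQ : ∀ S, P S ≤ Q S)
    (sQ : KSt x Q) (eP : KEx x P) (eQ : KEx x Q) :
    rl (Kp (!b) Q) (Zp x (!b) P Q) = rl (Zp x b P Q) (Kp b P) := by
  have hle : ∀ b, Kp b P ≤ Kp b Q := by
    intro b z hz
    rw [mem_Kp, mem_Kf] at hz ⊢
    exact ⟨fun S => hPQ S (hz.1 S), hz.2⟩
  have hm : ∀ z : Kp (!b) Q, kd M x z ∈ Zp x b P Q := by
    intro z
    refine ⟨kd_Kp sQ z.2, ?_⟩
    change kd M x (kd M x z) ∈ Kp (!b) P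
    rw [kd_kd]
    exact Submodule.zero_mem _
  let f : Kp (!b) Q →ₗ[A] (Zp x b P Q ⧸ (Kp b P).submoduleOf (Zp x b P Q)) :=
    (Submodule.mkQ _).comp (LinearMap.codRestrict _ ((kd M x).comp (Kp (!b) Q).subtype) hm)
  refine rl_of_surj _ _ f ?_ ?_
  · intro m
    induction m using Submodule.Quotient.induction_on with
    | _ v =>
      obtain ⟨v, hv1, hv2⟩ := v
      obtain ⟨w, hw, e⟩ := eP.par (b := !b) hv2 (kd_kd x v)
      rw [Bool.not_not] at hw
      obtain ⟨u, hu, e2⟩ := eQ.par (b := b) (z := v - w)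
        (Submodule.sub_mem _ hv1 (hle b hw)) (by rw [map_sub, e, sub_self])
      refine ⟨⟨u, hu⟩, ?_⟩
      simp only [f, LinearMap.comp_apply, Submodule.mkQ_apply]
      rw [Submodule.Quotient.eq, mem_sOf]
      change kd M x u - v ∈ Kp b P
      have : v - w - v = - w := by abel
      rw [e2, this]
      exact Submodule.neg_mem _ hw
  · intro v
    simp only [f, LinearMap.comp_apply, Submodule.mkQ_apply]
    rw [Submodule.Quotient.mk_eq_zero, mem_sOf]
    change kd M x v ∈ Kp b P ↔ _
    rw [Zp, Submodule.mem_inf, Submodule.mem_comap, Bool.not_not]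
    exact ⟨fun h => ⟨v.2, h⟩, fun h => h.2⟩

lemma rl_Kp (b : Bool) {P Q : Finset (Fin d) → Submodule A M} :
    rl (Kp b Q) (Kp b P) =
      ∑ S : {S : Finset (Fin d) // decide (Even S.card) = b}, rl (Q S.1) (P S.1) := by
  unfold rl
  rw [← Module.length_pi_of_fintype]
  have hm : ∀ S : {S : Finset (Fin d) // decide (Even S.card) = b}, ∀ z : Kp b Q,
      (z : Finset (Fin d) → M) S.1 ∈ Q S.1 := by
    intro S z; exact mem_Kf.1 (mem_Kp.1 z.2).1 S.1
  let f : Kp b Q →ₗ[A] ((S : {S : Finset (Fin d) // decide (Even S.card) = b}) →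
      (Q S.1 ⧸ (P S.1).submoduleOf (Q S.1))) :=
    LinearMap.pi fun S => (Submodule.mkQ _).comp
      (LinearMap.codRestrict _ ((LinearMap.proj S.1).comp (Kp b Q).subtype) (hm S))
  refine rl_of_surj _ _ f ?_ ?_
  · intro m
    choose g hg using fun S => Submodule.mkQ_surjective _ (m S)
    refine ⟨⟨fun S => if h : decide (Even S.card) = b then (g ⟨S, h⟩ : M) else 0, ?_⟩, ?_⟩
    · rw [Kp, mem_Kf]
      intro S
      split_ifs with h
      · exact (g ⟨S, h⟩).2
      · exact Submodule.zero_mem _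
    · ext S
      simp only [f, LinearMap.pi_apply, LinearMap.comp_apply]
      rw [← hg S]
      congr 1
      apply Subtype.ext
      change (if h : decide (Even S.1.card) = b then (g ⟨S.1, h⟩ : M) else 0) = g S
      rw [dif_pos S.2]
  · intro v
    rw [funext_iff, mem_Kp, mem_Kf]
    simp only [f, LinearMap.pi_apply, LinearMap.comp_apply, Submodule.mkQ_apply, Pi.zero_apply,
      Submodule.Quotient.mk_eq_zero, mem_sOf]
    have hv := (mem_Kp.1 v.2).2
    constructor
    · intro h
      refine ⟨fun S => ?_, hv⟩
      by_cases hS : decide (Even S.card) = b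
      · exact h ⟨S, hS⟩
      · rw [hv S (by revert hS; cases b <;> simp)]
        exact Submodule.zero_mem _
    · intro h S
      exact h.1 S.1

/-- The alternating sum of relative lengths of two exact Koszul subcomplexes vanishes. -/
theorem alt_sum_zero {x : Fin d → A} {P Q : Finset (Fin d) → Submodule A M}
    (hPQ : ∀ S, P S ≤ Q S) (sP : KSt x P)
    (sQ : KSt x Q) (eP : KEx x P) (eQ : KEx x Q) (hf : ∀ S, rl (Q S) (P S) ≠ ⊤) :
    ∑ S : Finset (Fin d), (-1 : ℤ) ^ S.card * rn (Q S) (P S) = 0 := by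
  have hle : ∀ b, Kp b P ≤ Kp b Q := by
    intro b z hz
    rw [mem_Kp, mem_Kf] at hz ⊢
    exact ⟨fun S => hPQ S (hz.1 S), hz.2⟩
  have h1 : ∀ b, rl (Kp b Q) (Kp b P) = rl (Zp x b P Q) (Kp b P) + rl (Kp b Q) (Zp x b P Q) := by
    intro b
    refine rl_add inf_le_left (le_inf (hle b) ?_)
    intro z hz
    refine kd_Kp (b := !b) sP ?_
    rwa [Bool.not_not]
  have h2 : rl (Kp true Q) (Kp true P) = rl (Kp false Q) (Kp false P) := by
    have e1 := rl_step (b := true) hPQ sQ eP eQ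
    have e2 := rl_step (b := false) hPQ sQ eP eQ
    simp only [Bool.not_true, Bool.not_false] at e1 e2
    rw [h1 true, h1 false, e1, e2, add_comm]
  rw [rl_Kp, rl_Kp] at h2
  have hc : ∀ b, ((∑ S : {S : Finset (Fin d) // decide (Even S.card) = b},
      rl (Q S.1) (P S.1)).toNat : ℤ) =
      ∑ S : {S : Finset (Fin d) // decide (Even S.card) = b}, rn (Q S.1) (P S.1) := by
    intro b
    have : ∀ S : {S : Finset (Fin d) // decide (Even S.card) = b},
      rl (Q S.1) (P S.1) = (((rl (Q S.1) (P S.1)).toNat : ℕ) : ℕ∞) := fun S =>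
        (ENat.natCast_toNat (hf _)).symm
    rw [Finset.sum_congr rfl fun S _ => this S, ← Nat.cast_sum, ENat.toNat_natCast]
    simp [rn]
  have h3 := hc true
  rw [h2, hc false] at h3
  rw [← Finset.sum_filter_add_sum_filter_not Finset.univ
    (fun S : Finset (Fin d) => decide (Even S.card) = true)]
  rw [Finset.sum_congr rfl (g := fun S => rn (Q S) (P S))
    (fun S hS => by
      have : Even S.card := by simpa using hS
      simp [this.neg_one_pow])]
  rw [Finset.sum_congr (s₁ := Finset.univ.filter fun S : Finset (Fin d) =>
      ¬ decide (Even S.card) = true) rfl (g := fun S => - rn (Q S) (P S))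
    (fun S hS => by
      have : Odd S.card := by simpa using hS
      simp [this.neg_one_pow])]
  rw [Finset.sum_neg_distrib]
  have e1 : ∑ S : {S : Finset (Fin d) // decide (Even S.card) = true}, rn (Q S.1) (P S.1) =
    ∑ S ∈ Finset.univ.filter (fun S : Finset (Fin d) => decide (Even S.card) = true),
      rn (Q S) (P S) := by
    symm
    exact Finset.sum_subtype _ (by simp) _
  have e2 : ∑ S : {S : Finset (Fin d) // decide (Even S.card) = false}, rn (Q S.1) (P S.1) =
    ∑ S ∈ Finset.univ.filter (fun S : Finset (Fin d) => ¬ decide (Even S.card) = true),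
      rn (Q S) (P S) := by
    symm
    exact Finset.sum_subtype _ (by simp) _
  rw [← e1, ← e2, h3]
  ring

end Koszul
end MM

namespace MM

section AR
variable {A : Type*} [CommRing A] {t : ℕ}

/-- product of powers -/
def aa (K : Fin t → Ideal A) (n : Fin t → ℕ) : Ideal A := ∏ i, K i ^ n i

lemma aa_add (K : Fin t → Ideal A) (m n : Fin t → ℕ) : aa K (m + n) = aa K m * aa K n := by
  simp [aa, pow_add, Finset.prod_mul_distrib]

lemma aa_zero (K : Fin t → Ideal A) : aa K 0 = 1 := by
  simp [aa]

lemma aa_mono (K : Fin t → Ideal A) {m n : Fin t → ℕ} (h : m ≤ n) : aa K n ≤ aa K m := by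
  have : n = m + (n - m) := by ext i; have : m i ≤ n i := h i; simp only [Pi.add_apply, Pi.sub_apply]; omega
  rw [this, aa_add]
  exact Ideal.mul_le_left

lemma aa_mul_le (K : Fin t → Ideal A) {m n p : Fin t → ℕ} (h : p ≤ m + n) :
    aa K m * aa K n ≤ aa K p := by
  rw [← aa_add]; exact aa_mono K h

lemma aa_single (K : Fin t → Ideal A) (i : Fin t) : aa K (Pi.single i 1) = K i := by
  unfold aa
  rw [Finset.prod_eq_single i]
  · simp
  · intro j _ hj; simp [hj]
  · simp

/-- multi-Rees algebra -/
def mRees (K : Fin t → Ideal A) : Subalgebra A (MvPolynomial (Fin t) A) where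
  carrier := {f | ∀ m : Fin t →₀ ℕ, f.coeff m ∈ aa K m}
  mul_mem' {f g} hf hg := by
    intro m
    rw [MvPolynomial.coeff_mul]
    refine Ideal.sum_mem _ fun p hp => ?_
    rw [Finset.HasAntidiagonal.mem_antidiagonal] at hp
    have h : aa K m = aa K p.1 * aa K p.2 := by rw [← aa_add, ← hp]; rfl
    rw [h]
    exact Ideal.mul_mem_mul (hf _) (hg _)
  add_mem' {f g} hf hg := by
    intro m
    rw [MvPolynomial.coeff_add]
    exact Ideal.add_mem _ (hf m) (hg m)
  algebraMap_mem' a := by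
    intro m
    rw [MvPolynomial.algebraMap_eq, MvPolynomial.coeff_C]
    split_ifs with h
    · subst h
      have : aa K (⇑(0 : Fin t →₀ ℕ)) = 1 := by simp [aa]
      rw [this]; simp
    · exact Ideal.zero_mem _

lemma mem_mRees {K : Fin t → Ideal A} {f : MvPolynomial (Fin t) A} :
    f ∈ mRees K ↔ ∀ m : Fin t →₀ ℕ, f.coeff m ∈ aa K m := Iff.rfl

lemma monomial_mem_mRees {K : Fin t → Ideal A} {m : Fin t →₀ ℕ} {a : A} (h : a ∈ aa K m) :
    MvPolynomial.monomial m a ∈ mRees K := by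
  intro n
  rw [MvPolynomial.coeff_monomial]
  split_ifs with e
  · subst e; exact h
  · exact Ideal.zero_mem _

lemma mRees_fg [IsNoetherianRing A] (K : Fin t → Ideal A) : (mRees K).FG := by
  choose s hs using fun i => (IsNoetherian.noetherian (K i) : (K i).FG)
  classical
  let T : Finset (MvPolynomial (Fin t) A) :=
    Finset.univ.biUnion fun i => (s i).image (MvPolynomial.monomial (Finsupp.single i 1))
  refine ⟨T, le_antisymm ?_ ?_⟩
  · rw [Algebra.adjoin_le_iff]
    intro f hf
    simp only [T, Finset.coe_biUnion, Finset.coe_image, Set.mem_iUnion, Set.mem_image] at hf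
    obtain ⟨i, -, a, ha, rfl⟩ := hf
    refine monomial_mem_mRees ?_
    have : (⇑(Finsupp.single i 1) : Fin t → ℕ) = Pi.single i 1 := by
      ext j; rw [Finsupp.single_eq_pi_single]
    rw [this, aa_single, ← hs i]
    exact Ideal.subset_span ha
  · let R0 := Algebra.adjoin A (T : Set (MvPolynomial (Fin t) A))
    let L : (Fin t →₀ ℕ) → Ideal A := fun m =>
      (Subalgebra.toSubmodule R0).comap (MvPolynomial.monomial m)
    have hL : ∀ m a, a ∈ L m ↔ MvPolynomial.monomial m a ∈ R0 := fun m a => Iff.rfl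
    have hLmul : ∀ m n, L m * L n ≤ L (m + n) := by
      intro m n
      rw [Ideal.mul_le]
      intro a ha b hb
      rw [hL] at ha hb ⊢
      rw [← MvPolynomial.monomial_mul]
      exact R0.mul_mem ha hb
    have hL0 : L 0 = 1 := by
      rw [Ideal.one_eq_top, Ideal.eq_top_iff_one, hL]
      exact R0.one_mem
    have hLK : ∀ i, K i ≤ L (Finsupp.single i 1) := by
      intro i
      rw [← hs i]
      change Ideal.span _ ≤ _
      rw [Ideal.span_le]
      intro a ha
      change a ∈ L _
      rw [hL]
      apply Algebra.subset_adjoin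
      simp only [T, Finset.coe_biUnion, Finset.coe_image, Set.mem_iUnion, Set.mem_image]
      exact ⟨i, Finset.mem_coe.2 (Finset.mem_univ i), a, ha, rfl⟩
    have hLKn : ∀ i n, K i ^ n ≤ L (Finsupp.single i n) := by
      intro i n
      induction n with
      | zero => simp [hL0]
      | succ n ih =>
        rw [pow_succ, Finsupp.single_add]
        exact (Ideal.mul_mono ih (hLK i)).trans (hLmul _ _)
    have hP : ∀ (m : Fin t →₀ ℕ) (U : Finset (Fin t)),
        ∏ i ∈ U, K i ^ m i ≤ L (∑ i ∈ U, Finsupp.single i (m i)) := by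
      intro m U
      induction U using Finset.induction_on with
      | empty => simp [hL0]
      | insert i U hi ih =>
        rw [Finset.prod_insert hi, Finset.sum_insert hi]
        exact (Ideal.mul_mono (hLKn i _) ih).trans (hLmul _ _)
    intro f hf
    rw [MvPolynomial.as_sum f]
    refine Subalgebra.sum_mem _ fun m _ => ?_
    rw [← hL]
    have := hP m Finset.univ
    rw [Finsupp.univ_sum_single] at this
    exact this (hf m)

instance [IsNoetherianRing A] (K : Fin t → Ideal A) : IsNoetherianRing (mRees K) := by
  have : Algebra.FiniteType A (mRees K) := (Subalgebra.fg_iff_finiteType _).1 (mRees_fg K)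
  exact Algebra.FiniteType.isNoetherianRing A _

/-- family of coefficients -/
def cv {G : Type*} (n : Fin t →₀ ℕ) (F : G → MvPolynomial (Fin t) A) : G → A :=
  fun g => (F g).coeff n

lemma cv_mul {G : Type*} (n : Fin t →₀ ℕ) (f : MvPolynomial (Fin t) A)
    (F : G → MvPolynomial (Fin t) A) :
    cv n (f • F) = ∑ p ∈ Finset.HasAntidiagonal.antidiagonal n, f.coeff p.1 • cv p.2 F := by
  ext g
  simp [cv, MvPolynomial.coeff_mul]

lemma cv_add {G : Type*} (n : Fin t →₀ ℕ) (F F' : G → MvPolynomial (Fin t) A) :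
    cv n (F + F') = cv n F + cv n F' := by
  ext g; simp [cv]

lemma cv_zero {G : Type*} (n : Fin t →₀ ℕ) :
    cv n (0 : G → MvPolynomial (Fin t) A) = 0 := by
  ext g; simp [cv]

lemma cv_sum {G α : Type*} (n : Fin t →₀ ℕ) (s : Finset α) (F : α → G → MvPolynomial (Fin t) A) :
    cv n (∑ a ∈ s, F a) = ∑ a ∈ s, cv n (F a) := by
  ext g; simp [cv, MvPolynomial.coeff_sum]

/-- polynomial families with coefficients in `Z` -/
def Zs {G : Type*} (K : Fin t → Ideal A) (Z : Submodule A (G → A)) :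
    Submodule (mRees K) (G → MvPolynomial (Fin t) A) where
  carrier := {F | ∀ n, cv n F ∈ Z}
  add_mem' {F F'} h h' n := by rw [cv_add]; exact Z.add_mem (h n) (h' n)
  zero_mem' n := by rw [cv_zero]; exact Z.zero_mem
  smul_mem' f F h n := by
    have : f • F = (f : MvPolynomial (Fin t) A) • F := rfl
    rw [this, cv_mul]
    exact Z.sum_mem fun p _ => Z.smul_mem _ (h _)

/-- shifted free Rees module -/
noncomputable def Ws {G : Type*} [DecidableEq G] (K : Fin t → Ideal A) (δ : G → Fin t →₀ ℕ) :
    Submodule (mRees K) (G → MvPolynomial (Fin t) A) :=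
  Submodule.span (mRees K) (Set.range fun g => Pi.single g (MvPolynomial.monomial (δ g) 1))

lemma Ws_coeff {G : Type*} [DecidableEq G] (K : Fin t → Ideal A) (δ : G → Fin t →₀ ℕ)
    {F : G → MvPolynomial (Fin t) A} (hF : F ∈ Ws K δ) (n : Fin t →₀ ℕ) (g : G) :
    cv n F g ∈ aa K (⇑n - ⇑(δ g)) := by
  revert n
  induction hF using Submodule.span_induction with
  | mem F h =>
    obtain ⟨g', rfl⟩ := h
    intro n
    simp only [cv]
    by_cases hg : g = g'
    · subst hg
      simp only [Pi.single_eq_same, MvPolynomial.coeff_monomial]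
      split_ifs with e
      · have : (⇑n - ⇑(δ g) : Fin t → ℕ) = 0 := by rw [e, tsub_self]
        rw [this, aa_zero]; simp
      · exact Ideal.zero_mem _
    · simp [Pi.single_eq_of_ne hg]
  | zero => intro n; rw [cv_zero]; exact Ideal.zero_mem _
  | add F F' _ _ h h' => intro n; rw [cv_add]; exact Ideal.add_mem _ (h n) (h' n)
  | smul f F _ h =>
    intro n
    have : f • F = (f : MvPolynomial (Fin t) A) • F := rfl
    rw [this, cv_mul, Finset.sum_apply]
    refine Ideal.sum_mem _ fun p hp => ?_
    rw [Finset.HasAntidiagonal.mem_antidiagonal] at hp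
    have h1 : aa K p.1 * aa K (⇑p.2 - ⇑(δ g)) ≤ aa K (⇑n - ⇑(δ g)) := by
      apply aa_mul_le
      intro i
      have : n i = p.1 i + p.2 i := by rw [← hp]; rfl
      simp only [Pi.sub_apply, Pi.add_apply]; omega
    exact h1 (Ideal.mul_mem_mul (f.2 _) (h _))

/-- box submodule -/
def bx {G : Type*} (M : Type*) [AddCommGroup M] [Module A M] (K : Fin t → Ideal A)
    (δ : G → Fin t → ℕ) (n : Fin t → ℕ) : Submodule A (G → M) :=
  Submodule.pi Set.univ fun g => aa K (n - δ g) • (⊤ : Submodule A M)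

lemma mem_bx {G : Type*} {M : Type*} [AddCommGroup M] [Module A M] {K : Fin t → Ideal A}
    {δ : G → Fin t → ℕ} {n : Fin t → ℕ} {z : G → M} :
    z ∈ bx M K δ n ↔ ∀ g, z g ∈ aa K (n - δ g) • (⊤ : Submodule A M) := by
  simp [bx, Submodule.mem_pi]

lemma mem_smul_ring_top {I : Ideal A} {a : A} : a ∈ I • (⊤ : Submodule A A) ↔ a ∈ I := by
  rw [smul_eq_mul]
  change a ∈ I * (⊤ : Ideal A) ↔ _
  rw [Ideal.mul_top]

lemma fg_of_le {R N : Type*} [CommRing R] [IsNoetherianRing R] [AddCommGroup N] [Module R N]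
    {W V : Submodule R N} (hW : W.FG) (h : V ≤ W) : V.FG := by
  have : IsNoetherian R W := isNoetherian_of_fg_of_noetherian _ hW
  exact isNoetherian_submodule.1 this V h

theorem AR_free [IsNoetherianRing A] {G : Type*} [Fintype G] (K : Fin t → Ideal A)
    (δ : G → Fin t → ℕ) (Z : Submodule A (G → A)) :
    ∃ B : Fin t → ℕ, ∀ N' n, B + N' ≤ n →
      Z ⊓ bx A K δ n ≤ aa K N' • (Z ⊓ bx A K δ (n - N')) := by
  classical
  let δ' : G → Fin t →₀ ℕ := fun g => Finsupp.equivFunOnFinite.symm (δ g)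
  have hδ' : ∀ g, ⇑(δ' g) = δ g := fun g => rfl
  have hfg : (Zs K Z ⊓ Ws K δ').FG :=
    fg_of_le (Submodule.fg_span (Set.finite_range _)) inf_le_right
  obtain ⟨T, hT⟩ := hfg
  let U : Finset (Fin t →₀ ℕ) := T.biUnion fun F => Finset.univ.biUnion fun g => (F g).support
  let B : Fin t → ℕ := fun i => U.sup (fun m => m i) + Finset.univ.sup (fun g => δ g i)
  refine ⟨B, ?_⟩
  intro N' n hn z hz
  let n' : Fin t →₀ ℕ := Finsupp.equivFunOnFinite.symm n
  have hn' : ⇑n' = n := rfl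
  let F : G → MvPolynomial (Fin t) A := fun g => MvPolynomial.monomial n' (z g)
  have hcF : cv n' F = z := by ext g; simp [cv, F]
  have hFW : F ∈ Ws K δ' := by
    have : F = ∑ g, Pi.single g (F g) := (Finset.univ_sum_single F).symm
    rw [this]
    refine Submodule.sum_mem _ fun g _ => ?_
    have hle : δ' g ≤ n' := by
      intro i
      change δ g i ≤ n i
      have h1 := hn i
      have h2 : δ g i ≤ Finset.univ.sup (fun g => δ g i) :=
        Finset.le_sup (f := fun g => δ g i) (Finset.mem_univ g)
      simp only [B, Pi.add_apply] at h1; omega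
    have hm : MvPolynomial.monomial (n' - δ' g) (z g) ∈ mRees K := by
      apply monomial_mem_mRees
      have := mem_smul_ring_top.1 (mem_bx.1 hz.2 g)
      exact this
    have : Pi.single g (F g) = (⟨_, hm⟩ : mRees K) •
        (Pi.single g (MvPolynomial.monomial (δ' g) 1) : G → MvPolynomial (Fin t) A) := by
      ext1 g'
      change _ = MvPolynomial.monomial (n' - δ' g) (z g) *
        (Pi.single g (MvPolynomial.monomial (δ' g) 1) : G → MvPolynomial (Fin t) A) g'
      by_cases e : g' = g
      · subst e
        simp only [Pi.single_eq_same, MvPolynomial.monomial_mul, F]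
        rw [tsub_add_cancel_of_le hle, mul_one]
      · simp [Pi.single_eq_of_ne e]
    rw [this]
    exact Submodule.smul_mem _ _ (Submodule.subset_span ⟨g, rfl⟩)
  have hFZ : F ∈ Zs K Z := by
    intro m
    by_cases e : m = n'
    · rw [e, hcF]; exact hz.1
    · have : cv m F = 0 := by
        ext g; simp [cv, F, MvPolynomial.coeff_monomial, Ne.symm e]
      rw [this]; exact Z.zero_mem
  have hF : F ∈ Submodule.span (mRees K) (T : Set (G → MvPolynomial (Fin t) A)) := by
    rw [hT]; exact ⟨hFZ, hFW⟩
  obtain ⟨f, -, hf⟩ := Submodule.mem_span_finset.1 hF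
  rw [← hcF, ← hf, cv_sum]
  refine Submodule.sum_mem _ fun E hE => ?_
  have hEmem : E ∈ Zs K Z ⊓ Ws K δ' := by rw [← hT]; exact Submodule.subset_span hE
  have e1 : f E • E = (f E : MvPolynomial (Fin t) A) • E := rfl
  rw [e1, cv_mul]
  refine Submodule.sum_mem _ fun p hp => ?_
  rw [Finset.HasAntidiagonal.mem_antidiagonal] at hp
  by_cases h0 : cv p.2 E = 0
  · rw [h0, smul_zero]; exact Submodule.zero_mem _
  have hp2 : ∀ i, p.2 i ≤ B i := by
    intro i
    obtain ⟨g, hg⟩ := Function.ne_iff.1 h0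
    have : p.2 ∈ U := by
      simp only [U, Finset.mem_biUnion]
      exact ⟨E, hE, g, Finset.mem_univ _, MvPolynomial.mem_support_iff.2 hg⟩
    exact (Finset.le_sup (f := fun m : Fin t →₀ ℕ => m i) this).trans (Nat.le_add_right _ _)
  have hsum : ∀ i, p.1 i + p.2 i = n i := fun i => by
    have := DFunLike.congr_fun hp i
    exact this
  have hle : N' ≤ p.1 := by
    intro i
    have := hn i; have := hp2 i; have := hsum i
    simp only [Pi.add_apply] at *; omega
  have e2 : aa K p.1 = aa K N' * aa K (⇑p.1 - N') := by
    rw [← aa_add]; congr 1; ext i; have : N' i ≤ p.1 i := hle i; simp only [Pi.add_apply, Pi.sub_apply]; omega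
  have hc : (f E : MvPolynomial (Fin t) A).coeff p.1 ∈ aa K N' * aa K (⇑p.1 - N') := by
    rw [← e2]; exact (f E).2 _
  generalize (f E : MvPolynomial (Fin t) A).coeff p.1 = a at hc
  induction hc using Submodule.mul_induction_on' with
  | mem_mul_mem a ha b hb =>
    rw [mul_smul]
    refine Submodule.smul_mem_smul ha ⟨Z.smul_mem _ (hEmem.1 _), ?_⟩
    refine mem_bx.2 fun g => mem_smul_ring_top.2 ?_
    have h3 := Ws_coeff K δ' hEmem.2 p.2 g
    refine aa_mul_le K ?_ (Ideal.mul_mem_mul hb h3)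
    intro i
    have := hle i; have := hsum i
    simp only [Pi.sub_apply, Pi.add_apply, hδ'] at *; omega
  | add a _ b _ h h' => rw [add_smul]; exact Submodule.add_mem _ h h'

end AR
end MM

namespace MM

section EX
variable {A : Type*} [CommRing A] {M : Type*} [AddCommGroup M] [Module A M] {t d : ℕ}

theorem AR_mod [IsNoetherianRing A] [Module.Finite A M] {G : Type*} [Fintype G]
    (K : Fin t → Ideal A) (δ : G → Fin t → ℕ) (Z : Submodule A (G → M)) :
    ∃ B : Fin t → ℕ, ∀ N' n, B + N' ≤ n →
      Z ⊓ bx M K δ n ≤ aa K N' • (Z ⊓ bx M K δ (n - N')) := by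
  obtain ⟨g, π, hπ⟩ := Module.Finite.exists_fin' A M
  let Pm : (G × Fin g → A) →ₗ[A] (G → M) :=
    LinearMap.pi fun s => π.comp (LinearMap.pi fun i => LinearMap.proj (s, i))
  have hPm : ∀ w s, Pm w s = π (fun i => w (s, i)) := fun w s => rfl
  obtain ⟨B, hB⟩ := AR_free K (fun p : G × Fin g => δ p.1) (Z.comap Pm)
  refine ⟨B, fun N' n hn z hz => ?_⟩
  have lift : ∀ (I : Ideal A) (m : M), m ∈ I • (⊤ : Submodule A M) →
      ∃ w : Fin g → A, (∀ i, w i ∈ I) ∧ π w = m := by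
    intro I m hm
    induction hm using Submodule.smul_induction_on' with
    | smul a ha m _ =>
      obtain ⟨u, rfl⟩ := hπ m
      exact ⟨a • u, fun i => Ideal.mul_mem_right _ _ ha, by simp⟩
    | add m _ m' _ h h' =>
      obtain ⟨w, h1, h2⟩ := h
      obtain ⟨w', h1', h2'⟩ := h'
      exact ⟨w + w', fun i => Ideal.add_mem _ (h1 i) (h1' i), by simp [h2, h2']⟩
  have low : ∀ (I : Ideal A) (w : Fin g → A), (∀ i, w i ∈ I) → π w ∈ I • (⊤ : Submodule A M) := by
    intro I w hw
    have : w = ∑ i, w i • (Pi.single i (1 : A) : Fin g → A) := by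
      ext j; simp [Finset.sum_apply, Pi.single_apply]
    rw [this, map_sum]
    refine Submodule.sum_mem _ fun i _ => ?_
    rw [map_smul]
    exact Submodule.smul_mem_smul (hw i) trivial
  choose w hw1 hw2 using fun s => lift _ _ (mem_bx.1 hz.2 s)
  let W : G × Fin g → A := fun p => w p.1 p.2
  have hW : Pm W = z := by
    ext s; rw [hPm]; exact hw2 s
  have h1 : W ∈ Z.comap Pm ⊓ bx A K (fun p : G × Fin g => δ p.1) n := by
    refine ⟨?_, mem_bx.2 fun p => mem_smul_ring_top.2 (hw1 p.1 p.2)⟩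
    change Pm W ∈ Z; rw [hW]; exact hz.1
  have h2 := Submodule.mem_map_of_mem (f := Pm) (hB N' n hn h1)
  rw [hW, Submodule.map_smul''] at h2
  refine Submodule.smul_mono le_rfl ?_ h2
  rintro _ ⟨v, hv, rfl⟩
  refine ⟨hv.1, mem_bx.2 fun s => ?_⟩
  rw [hPm]
  exact low _ _ fun i => mem_smul_ring_top.1 (mem_bx.1 hv.2 (s, i))

/-- multi-degree of a set -/
def dg (c : Fin d → Fin t) (S : Finset (Fin d)) : Fin t → ℕ :=
  fun i => (S.filter fun j => c j = i).card

lemma dg_insert (c : Fin d → Fin t) {S : Finset (Fin d)} {j : Fin d} (hj : j ∉ S) :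
    dg c (insert j S) = dg c S + Pi.single (c j) 1 := by
  ext i
  simp only [dg, Finset.filter_insert, Pi.add_apply, Pi.single_apply]
  by_cases h : c j = i
  · subst h
    rw [if_pos rfl, if_pos rfl, Finset.card_insert_of_notMem (by simp [hj])]
  · rw [if_neg h, if_neg (Ne.symm h), add_zero]

/-- the family `aa (n - dg S) M` -/
def fam (M : Type*) [AddCommGroup M] [Module A M] (K : Fin t → Ideal A) (c : Fin d → Fin t)
    (n : Fin t → ℕ) (S : Finset (Fin d)) : Submodule A M :=
  aa K (n - dg c S) • ⊤

lemma smul_aa_mem {K : Fin t → Ideal A} {m n p : Fin t → ℕ} (h : p ≤ m + n) {a : A} {u : M}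
    (ha : a ∈ aa K m) (hu : u ∈ aa K n • (⊤ : Submodule A M)) :
    a • u ∈ aa K p • (⊤ : Submodule A M) := by
  have := Submodule.smul_mem_smul ha hu
  rw [← mul_smul] at this
  exact Submodule.smul_mono_left (aa_mul_le K h) this

lemma fam_KSt (K : Fin t → Ideal A) (c : Fin d → Fin t) (x : Fin d → A) (hx : ∀ j, x j ∈ K (c j))
    (n : Fin t → ℕ) : KSt x (fam M K c n) := by
  intro S j hj m hm
  refine smul_aa_mem ?_ (by rw [aa_single]; exact hx j) hm
  rw [dg_insert c hj]
  intro i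
  simp only [Pi.add_apply, Pi.sub_apply]; omega

lemma KSt.inf {x : Fin d → A} {P Q : Finset (Fin d) → Submodule A M} (h : KSt x P) (h' : KSt x Q) :
    KSt x (fun S => P S ⊓ Q S) :=
  fun S j hj m hm => ⟨h S j hj m hm.1, h' S j hj m hm.2⟩

lemma KSt.const {x : Fin d → A} (N : Submodule A M) : KSt x (fun _ => N) :=
  fun _ _ _ _ hm => N.smul_mem _ hm

theorem exact_fam [IsNoetherianRing A] [Module.Finite A M]
    (K : Fin t → Ideal A) (c : Fin d → Fin t) (x : Fin d → A)
    (N' : Fin t → ℕ) (hN' : ∀ j, 1 ≤ N' (c j))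
    (hstar : aa K N' ≤ (⨆ j, Ideal.span {x j} * aa K (N' - Pi.single (c j) 1)) ⊔
      Module.annihilator A M)
    (Ω : Finset (Fin d) → Submodule A M) (hΩ : ∀ S j, Ω S ≤ Ω (insert j S)) :
    ∃ B : Fin t → ℕ, ∀ n, B ≤ n → KEx x (fun S => fam M K c n S ⊓ Ω S) := by
  obtain ⟨B, hB⟩ := AR_mod K (dg c) (LinearMap.ker (kd M x) ⊓ Kf Ω)
  refine ⟨B + N', fun n hn z hz hz0 => ?_⟩
  rw [mem_Kf] at hz
  have h1 := hB N' n hn (x := z) ⟨⟨hz0, mem_Kf.2 fun S => (hz S).2⟩, mem_bx.2 fun S => (hz S).1⟩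
  suffices h : z ∈ (Kf (fun S => fam M K c n S ⊓ Ω S)).map (kd M x) from h
  refine (Submodule.smul_le.2 ?_) h1
  rintro a ha z' ⟨⟨hz'0, hz'Ω⟩, hz'b⟩
  rw [SetLike.mem_coe, LinearMap.mem_ker] at hz'0
  rw [SetLike.mem_coe, mem_Kf] at hz'Ω
  rw [SetLike.mem_coe, mem_bx] at hz'b
  let L : Ideal A := ((Kf (fun S => fam M K c n S ⊓ Ω S)).map (kd M x)).comap
    (LinearMap.toSpanSingleton A _ z')
  have hL : ∀ a, a ∈ L ↔ a • z' ∈ (Kf (fun S => fam M K c n S ⊓ Ω S)).map (kd M x) :=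
    fun a => Iff.rfl
  rw [← hL]
  refine (hstar.trans ?_) ha
  refine sup_le (iSup_le fun j => ?_) ?_
  · rw [Ideal.span_singleton_mul_le_iff]
    intro b hb
    rw [hL]
    refine ⟨b • kh (A := A) j z', ?_, ?_⟩
    · rw [SetLike.mem_coe, mem_Kf]
      intro S
      rw [Pi.smul_apply, kh]
      split_ifs with hj
      · rw [smul_comm]
        refine Submodule.smul_mem _ _ ⟨?_, ?_⟩
        · refine smul_aa_mem ?_ hb (hz'b (S.erase j))
          have e : dg c S = dg c (S.erase j) + Pi.single (c j) 1 := by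
            rw [← dg_insert c (by simp), Finset.insert_erase hj]
          rw [e]
          intro i
          simp only [Pi.add_apply, Pi.sub_apply, Pi.single_apply]
          split_ifs with hi
          · subst hi; have := hN' j; omega
          · omega
        · have := hΩ (S.erase j) j (hz'Ω (S.erase j))
          rw [Finset.insert_erase hj] at this
          exact Submodule.smul_mem _ _ this
      · rw [smul_zero]; exact Submodule.zero_mem _
    · rw [map_smul, kd_kh x j z' hz'0, smul_smul, mul_comm]
  · intro b hb
    rw [hL]
    have : b • z' = 0 := by
      ext S
      exact Module.mem_annihilator.1 hb _
    rw [this]; exact Submodule.zero_mem _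

theorem exact_qadic [IsNoetherianRing A] [Module.Finite A M] (x : Fin d → A)
    (Ω : Finset (Fin d) → Submodule A M) (hΩ : ∀ S j, Ω S ≤ Ω (insert j S)) :
    ∃ B : ℕ, ∀ n, B ≤ n →
      KEx x (fun S => (Ideal.span (Set.range x) ^ (n - S.card)) • (⊤ : Submodule A M) ⊓ Ω S) := by
  let K : Fin 1 → Ideal A := fun _ => Ideal.span (Set.range x)
  have haa : ∀ n : Fin 1 → ℕ, aa K n = Ideal.span (Set.range x) ^ n 0 := by
    intro n; simp [aa, K]
  obtain ⟨B, hB⟩ := exact_fam (M := M) K (fun _ => 0) x 1 (fun _ => le_rfl) (by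
    rw [haa]
    refine le_trans ?_ le_sup_left
    rw [Pi.one_apply, pow_one, Ideal.span_le]
    rintro _ ⟨j, rfl⟩
    refine Submodule.mem_iSup_of_mem j ?_
    rw [haa]
    simp) Ω hΩ
  refine ⟨B 0, fun n hn => ?_⟩
  have := hB (fun _ => n) (fun i => by rw [Subsingleton.elim i 0]; exact hn)
  convert this using 3
  rw [fam, haa]
  simp [dg]

lemma qadic_KSt (x : Fin d → A) (n : ℕ) :
    KSt x (fun S => (Ideal.span (Set.range x) ^ (n - S.card)) • (⊤ : Submodule A M)) := by
  intro S j hj m hm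
  beta_reduce at hm ⊢
  rw [Finset.card_insert_of_notMem hj] at hm
  have h1 := Submodule.smul_mem_smul
    (show x j ∈ Ideal.span (Set.range x) from Ideal.subset_span ⟨j, rfl⟩) hm
  rw [← mul_smul, ← pow_succ'] at h1
  exact Submodule.smul_mono_left (Ideal.pow_le_pow_right (by omega)) h1

end EX
end MM

namespace MM

section RED
variable {A : Type*} [CommRing A] {M : Type*} [AddCommGroup M] [Module A M] {t d : ℕ}

lemma det_elem [Module.Finite A M] {c a : Ideal A} (hca : c ≤ a)
    (h : a • (⊤ : Submodule A M) ≤ c • ⊤) {y : A} (hy : y ∈ a) :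
    ∃ r, y ^ (r + 1) ∈ c * a ^ r ⊔ Module.annihilator A M := by
  obtain ⟨p, hp1, -, hp2, hp3⟩ :=
    LinearMap.exists_monic_and_natDegree_eq_and_coeff_mem_pow_and_aeval_eq_zero A
      (algebraMap A (Module.End A M) y) c (by
        rintro _ ⟨m, rfl⟩
        exact h (Submodule.smul_mem_smul hy trivial))
  refine ⟨p.natDegree, ?_⟩
  have h1 : p.eval y ∈ Module.annihilator A M := by
    rw [Module.mem_annihilator]
    intro m
    rw [Polynomial.aeval_algebraMap_apply] at hp3
    have := LinearMap.congr_fun hp3 m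
    simpa using this
  rw [Polynomial.eval_eq_sum_range, Finset.sum_range_succ, hp1.coeff_natDegree, one_mul] at h1
  have h2 : ∑ i ∈ Finset.range p.natDegree, p.coeff i * y ^ i * y ∈ c * a ^ p.natDegree := by
    refine Ideal.sum_mem _ fun i hi => ?_
    rw [Finset.mem_range] at hi
    obtain ⟨l, hl⟩ : ∃ l, p.natDegree = i + l + 1 := ⟨p.natDegree - i - 1, by omega⟩
    have h3 := hp2 i
    have e1 : p.natDegree - i = l + 1 := by omega
    rw [e1, pow_succ'] at h3
    have h4 : c * c ^ l * a ^ i * a ≤ c * a ^ p.natDegree := by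
      have : c * a ^ p.natDegree = c * a ^ l * a ^ i * a := by rw [hl]; ring
      rw [this]
      gcongr
    exact h4 (Ideal.mul_mem_mul (Ideal.mul_mem_mul h3 (Ideal.pow_mem_pow hy i)) hy)
  have h5 := Ideal.mul_mem_right y _ h1
  rw [add_mul, Finset.sum_mul, ← pow_succ] at h5
  have : y ^ (p.natDegree + 1) = - (∑ i ∈ Finset.range p.natDegree, p.coeff i * y ^ i * y) +
      (∑ i ∈ Finset.range p.natDegree, p.coeff i * y ^ i * y + y ^ (p.natDegree + 1)) := by ring
  rw [this]
  exact Ideal.add_mem _ (Ideal.neg_mem_iff _ |>.2 (Ideal.mem_sup_left h2)) (Ideal.mem_sup_right h5)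

lemma red_ideal [IsNoetherianRing A] [Module.Finite A M] {c a : Ideal A} (hca : c ≤ a)
    (h : a • (⊤ : Submodule A M) ≤ c • ⊤) :
    ∃ G, a ^ (G + 1) ≤ c * a ^ G ⊔ Module.annihilator A M := by
  have key : ∀ b : Ideal A, b ≤ a → ∃ G, b ^ (G + 1) ≤ c * a ^ G ⊔ Module.annihilator A M := by
    intro b
    refine Submodule.fg_induction (motive :=
      (fun (b : Ideal A) _ => b ≤ a → ∃ G, b ^ (G + 1) ≤ c * a ^ G ⊔ Module.annihilator A M)) ?_ ?_
      b (IsNoetherian.noetherian b)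
    · intro y hy
      obtain ⟨r, hr⟩ := det_elem hca h (hy (Submodule.mem_span_singleton_self y))
      refine ⟨r, ?_⟩
      change Ideal.span {y} ^ _ ≤ _
      rw [Ideal.span_singleton_pow, Ideal.span_singleton_le_iff_mem]
      exact hr
    · intro b1 b2 _ _ h1 h2 hb
      obtain ⟨G1, h1⟩ := h1 (le_sup_left.trans hb)
      obtain ⟨G2, h2⟩ := h2 (le_sup_right.trans hb)
      refine ⟨G1 + G2 + 1, ?_⟩
      have Q : ∀ (b : Ideal A) (G : ℕ), b ≤ a → b ^ (G + 1) ≤ c * a ^ G ⊔ Module.annihilator A M →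
          ∀ u l, u + l = G1 + G2 + 2 → G + 1 ≤ u →
          b ^ u * a ^ l ≤ c * a ^ (G1 + G2 + 1) ⊔ Module.annihilator A M := by
        intro b G hb hG u l hul hu
        obtain ⟨v, rfl⟩ : ∃ v, u = G + 1 + v := ⟨u - (G + 1), by omega⟩
        rw [pow_add, mul_assoc]
        have e : G1 + G2 + 1 = G + v + l := by omega
        calc b ^ (G + 1) * (b ^ v * a ^ l)
            ≤ (c * a ^ G ⊔ Module.annihilator A M) * (a ^ v * a ^ l) := by gcongr
          _ = c * a ^ (G1 + G2 + 1) ⊔ Module.annihilator A M * (a ^ v * a ^ l) := by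
              rw [Ideal.sup_mul, e]; congr 1; ring
          _ ≤ _ := sup_le_sup_left Ideal.mul_le_left _
      change (b1 + b2) ^ _ ≤ _
      rw [add_pow]
      refine Finset.sum_induction _ (fun I => I ≤ c * a ^ (G1 + G2 + 1) ⊔ Module.annihilator A M)
        (fun I J hI hJ => sup_le hI hJ) bot_le ?_
      intro i hi
      rw [Finset.mem_range] at hi
      refine Ideal.mul_le_left.trans ?_
      by_cases hi1 : G1 + 1 ≤ i
      · refine le_trans ?_ (Q b1 G1 (le_sup_left.trans hb) h1 i (G1 + G2 + 2 - i) (by omega) hi1)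
        gcongr
        exact le_sup_right.trans hb
      · refine le_trans ?_ (Q b2 G2 (le_sup_right.trans hb) h2 (G1 + G2 + 2 - i) i
          (by omega) (by omega))
        rw [mul_comm]
        gcongr
        exact le_sup_left.trans hb
  exact key a le_rfl

/-- sum of the ideals `x j * aa (n - e)` -/
def cc (K : Fin t → Ideal A) (c : Fin d → Fin t) (x : Fin d → A) (n : Fin t → ℕ) : Ideal A :=
  ⨆ j, Ideal.span {x j} * aa K (n - Pi.single (c j) 1)

lemma le_cc (K : Fin t → Ideal A) (c : Fin d → Fin t) (x : Fin d → A) (n : Fin t → ℕ) (j : Fin d) :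
    Ideal.span {x j} * aa K (n - Pi.single (c j) 1) ≤ cc K c x n := by
  intro a ha
  exact Submodule.mem_iSup_of_mem j ha

theorem star_of_red [IsNoetherianRing A] [Module.Finite A M] (K : Fin t → Ideal A)
    (c : Fin d → Fin t) (x : Fin d → A) (hx : ∀ j, x j ∈ K (c j)) (N : Fin t → ℕ)
    (hN : ∀ i, 1 ≤ N i) (h : aa K N • (⊤ : Submodule A M) ≤ cc K c x N • ⊤) :
    ∃ N' : Fin t → ℕ, (∀ i, 1 ≤ N' i) ∧
      aa K N' ≤ (⨆ j, Ideal.span {x j} * aa K (N' - Pi.single (c j) 1)) ⊔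
        Module.annihilator A M := by
  have hle : ∀ j, Pi.single (c j) 1 ≤ N := by
    intro j i
    rw [Pi.single_apply]; split_ifs
    · exact hN i
    · exact Nat.zero_le _
  have hca : cc K c x N ≤ aa K N := by
    refine iSup_le fun j => ?_
    rw [Ideal.span_singleton_mul_le_iff]
    intro b hb
    have hx1 : x j ∈ aa K (Pi.single (c j) 1) := by rw [aa_single]; exact hx j
    refine aa_mul_le K ?_ (Ideal.mul_mem_mul hx1 hb)
    rw [add_tsub_cancel_of_le (hle j)]
  obtain ⟨G, hG⟩ := red_ideal hca h
  have hpow : ∀ r, aa K N ^ r = aa K (r • N) := by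
    intro r
    induction r with
    | zero => simp [aa_zero]
    | succ r ih => rw [pow_succ, ih, succ_nsmul, aa_add]
  refine ⟨(G + 1) • N, fun i => ?_, ?_⟩
  · have := hN i
    simp only [Pi.smul_apply, smul_eq_mul]; nlinarith
  · rw [← hpow]
    refine hG.trans (sup_le_sup_right ?_ _)
    rw [cc, Ideal.iSup_mul]
    refine iSup_mono fun j => ?_
    rw [mul_assoc, hpow]
    refine Ideal.mul_mono le_rfl (aa_mul_le K ?_)
    intro i
    have := hle j i
    simp only [Pi.smul_apply, smul_eq_mul, Pi.sub_apply, Pi.add_apply, add_mul, one_mul] at *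
    omega

/-- the ideal of the first elements -/
def Xi (x : Fin d → A) (i : ℕ) : Ideal A := Ideal.span (x '' {j | (j : ℕ) < i})

lemma Xi_succ (x : Fin d → A) (i : Fin d) : Xi x (i + 1) = Xi x i ⊔ Ideal.span {x i} := by
  unfold Xi
  rw [← Ideal.span_union]
  congr 1
  ext a
  simp only [Set.mem_image, Set.mem_ofPred_eq, Set.union_singleton, Set.mem_insert_iff]
  constructor
  · rintro ⟨j, hj, rfl⟩
    rcases Nat.lt_succ_iff_lt_or_eq.1 hj with h | h
    · exact Or.inr ⟨j, h, rfl⟩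
    · left; rw [Fin.ext h]
  · rintro (rfl | ⟨j, hj, rfl⟩)
    · exact ⟨i, Nat.lt_succ_self _, rfl⟩
    · exact ⟨j, by omega, rfl⟩

theorem red_of_sup (K : Fin t → Ideal A)
    (c : Fin d → Fin t) (x : Fin d → A) (hx : ∀ j, x j ∈ K (c j))
    (hs : ∀ i : Fin d, ∃ N, ∀ n : Fin t → ℕ, N ≤ n (c i) →
      (Ideal.span {x i} • (⊤ : Submodule A M) ⊔ Xi x i • ⊤) ⊓
        (aa K (n + Pi.single (c i) 1) • ⊤ ⊔ Xi x i • ⊤) ≤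
      Ideal.span {x i} • (aa K n • (⊤ : Submodule A M)) ⊔ Xi x i • ⊤)
    (L : Fin t → ℕ) (hL : aa K L • (⊤ : Submodule A M) ≤ Ideal.span (Set.range x) • ⊤) :
    ∃ N : Fin t → ℕ, (∀ i, 1 ≤ N i) ∧ aa K N • (⊤ : Submodule A M) ≤ cc K c x N • ⊤ := by
  have key : ∀ l i : ℕ, i + l = d → ∃ N : Fin t → ℕ, (∀ i, 1 ≤ N i) ∧ ∀ n, N ≤ n →
      aa K n • (⊤ : Submodule A M) ≤ cc K c x n • ⊤ ⊔ Xi x i • ⊤ := by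
    intro l
    induction l with
    | zero =>
      intro i hi
      have e : Xi x i = Ideal.span (Set.range x) := by
        unfold Xi
        congr 1
        rw [← Set.image_univ]
        congr 1
        ext j; simp; omega
      refine ⟨L + 1, fun i => by simp, fun n hn => ?_⟩
      rw [e]
      refine le_trans ?_ (hL.trans le_sup_right)
      exact Submodule.smul_mono_left (aa_mono K (le_trans (le_add_of_nonneg_right zero_le_one) hn))
    | succ l ih =>
      intro i hi
      obtain ⟨N, hN1, hN⟩ := ih (i + 1) (by omega)
      let i' : Fin d := ⟨i, by omega⟩
      obtain ⟨N2, hN2⟩ := hs i'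
      refine ⟨N + fun _ => N2 + 1, fun i => by simp only [Pi.add_apply]; omega, fun n hn => ?_⟩
      have hn1 : N ≤ n := fun i => by
        have : N i + (N2 + 1) ≤ n i := hn i
        change N i ≤ n i
        omega
      have hn2 : ∀ i, N2 + 1 ≤ n i := fun i => by
        have := hn i; simp only [Pi.add_apply] at this; omega
      have hsingle : ∀ j, Pi.single (c j) 1 ≤ n := by
        intro j i
        rw [Pi.single_apply]; split_ifs
        · have := hn2 i; change 1 ≤ n i; omega
        · exact Nat.zero_le _
      have hcc : cc K c x n ≤ aa K n := by
        refine iSup_le fun j => ?_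
        rw [Ideal.span_singleton_mul_le_iff]
        intro b hb
        have hx1 : x j ∈ aa K (Pi.single (c j) 1) := by rw [aa_single]; exact hx j
        refine aa_mul_le K ?_ (Ideal.mul_mem_mul hx1 hb)
        rw [add_tsub_cancel_of_le (hsingle j)]
      intro u hu
      obtain ⟨v, hv, y, hy, rfl⟩ := Submodule.mem_sup.1 (hN n hn1 hu)
      have e : Xi x (i + 1) = Xi x i' ⊔ Ideal.span {x i'} := Xi_succ x i'
      rw [e] at hy
      have h1 : y ∈ Ideal.span {x i'} • (⊤ : Submodule A M) ⊔ Xi x i' • ⊤ := by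
        rw [← Submodule.sup_smul, sup_comm]; exact hy
      have h2 : y ∈ aa K n • (⊤ : Submodule A M) := by
        have : y = (v + y) - v := by abel
        rw [this]
        exact Submodule.sub_mem _ hu (Submodule.smul_mono_left hcc hv)
      have h3 := hN2 (n - Pi.single (c i') 1) (by
        have := hn2 (c i')
        simp only [Pi.sub_apply, Pi.single_eq_same]; omega)
      rw [tsub_add_cancel_of_le (hsingle i')] at h3
      have h4 := h3 ⟨h1, Submodule.mem_sup_left h2⟩
      refine Submodule.add_mem _ (Submodule.mem_sup_left hv) ?_
      have h5 : Ideal.span {x i'} • (aa K (n - Pi.single (c i') 1) • (⊤ : Submodule A M)) ≤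
          cc K c x n • ⊤ := by
        rw [← mul_smul]
        exact Submodule.smul_mono_left (le_cc K c x n i')
      exact (sup_le (h5.trans le_sup_left) le_sup_right :
        _ ≤ cc K c x n • (⊤ : Submodule A M) ⊔ Xi x i' • ⊤) h4
  obtain ⟨N, hN1, hN⟩ := key d 0 (by omega)
  refine ⟨N, hN1, ?_⟩
  have := hN N le_rfl
  have e : Xi x 0 = ⊥ := by simp [Xi]
  rwa [e, Submodule.bot_smul, sup_bot_eq] at this

end RED
end MM

namespace MM

section DIFF
variable {t d : ℕ}

lemma prod_diff (c : Fin d → Fin t) (T : Finset (Fin d)) (f : Fin t → ℚ → ℚ) (y : Fin t → ℚ) :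
    ∑ S ∈ T.powerset, (-1 : ℚ) ^ S.card * ∏ i, f i (y i - dg c S i) =
      ∏ i, ((fwdDiff 1)^[dg c T i] (f i)) (y i - dg c T i) := by
  induction T using Finset.induction_on generalizing f y with
  | empty => simp [dg]
  | insert j T hj ih =>
    rw [Finset.sum_powerset_insert hj, ← Finset.sum_add_distrib]
    have h1 := ih (Function.update f (c j) (fwdDiff 1 (f (c j)))) (y - Pi.single (c j) 1)
    have h2 : ∏ i, ((fwdDiff 1)^[dg c (insert j T) i] (f i)) (y i - dg c (insert j T) i) =
      ∏ i, ((fwdDiff 1)^[dg c T i] (Function.update f (c j) (fwdDiff 1 (f (c j))) i))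
        ((y - Pi.single (c j) (1 : ℚ) : Fin t → ℚ) i - dg c T i) := by
      refine Finset.prod_congr rfl fun i _ => ?_
      rw [dg_insert c hj]
      by_cases hi : i = c j
      · subst hi
        simp only [Pi.add_apply, Pi.single_eq_same, Function.update_self,
          Function.iterate_succ_apply, Pi.sub_apply]
        congr 1
        push_cast; ring
      · simp [hi]
    rw [h2, ← h1]
    refine Finset.sum_congr rfl fun S hS => ?_
    have hjS : j ∉ S := fun h => hj (Finset.mem_powerset.1 hS h)
    rw [Finset.card_insert_of_notMem hjS, pow_succ, dg_insert c hjS]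
    rw [← Finset.mul_prod_erase Finset.univ _ (Finset.mem_univ (c j)),
      ← Finset.mul_prod_erase Finset.univ (fun i => f i (y i - _)) (Finset.mem_univ (c j)),
      ← Finset.mul_prod_erase Finset.univ (fun i => Function.update f _ _ i _)
        (Finset.mem_univ (c j))]
    have e1 : ∀ i ∈ Finset.univ.erase (c j),
        f i (y i - ((dg c S + Pi.single (c j) (1 : ℕ) : Fin t → ℕ) i : ℕ)) = f i (y i - dg c S i) := by
      intro i hi
      have hi : i ≠ c j := Finset.ne_of_mem_erase hi
      simp [hi]
    have e2 : ∀ i ∈ Finset.univ.erase (c j),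
        Function.update f (c j) (fwdDiff 1 (f (c j))) i ((y - Pi.single (c j) (1 : ℚ) : Fin t → ℚ) i - dg c S i) =
          f i (y i - dg c S i) := by
      intro i hi
      have hi : i ≠ c j := Finset.ne_of_mem_erase hi
      simp [hi]
    rw [Finset.prod_congr rfl e1, Finset.prod_congr rfl e2]
    simp only [Pi.add_apply, Pi.single_eq_same, Function.update_self, Pi.sub_apply, fwdDiff]
    have e3 : y (c j) - 1 - (dg c S (c j) : ℚ) + 1 = y (c j) - dg c S (c j) := by ring
    have e4 : y (c j) - ((dg c S (c j) + 1 : ℕ) : ℚ) = y (c j) - 1 - dg c S (c j) := by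
      push_cast; ring
    rw [e3, e4]
    ring

lemma sum_dg (c : Fin d → Fin t) (T : Finset (Fin d)) : ∑ i, dg c T i = T.card := by
  unfold dg
  exact (Finset.card_eq_sum_card_fiberwise (fun _ _ => Finset.mem_coe.2 (Finset.mem_univ _))).symm

lemma mv_diff (c : Fin d → Fin t) (T : Finset (Fin d)) (P : MvPolynomial (Fin t) ℚ)
    (hP : P.totalDegree ≤ T.card) (y : Fin t → ℚ) :
    ∑ S ∈ T.powerset, (-1 : ℚ) ^ S.card * MvPolynomial.eval (fun i => y i - dg c S i) P =
      P.coeff (Finsupp.equivFunOnFinite.symm (dg c T)) * ∏ i, ((dg c T i).factorial : ℚ) := by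
  set κ : Fin t →₀ ℕ := Finsupp.equivFunOnFinite.symm (dg c T) with hκ
  have hκ' : ∀ i, κ i = dg c T i := fun i => rfl
  have h1 : ∀ m ∈ P.support, ∑ S ∈ T.powerset, (-1 : ℚ) ^ S.card *
      ∏ i, (y i - dg c S i) ^ m i = if m = κ then ∏ i, ((dg c T i).factorial : ℚ) else 0 := by
    intro m hm
    rw [prod_diff c T (fun i r => r ^ m i) y]
    by_cases hex : ∃ i, m i < dg c T i
    · obtain ⟨i, hi⟩ := hex
      rw [if_neg, Finset.prod_eq_zero (Finset.mem_univ i)]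
      · rw [fwdDiff_iter_pow_eq_zero_of_lt hi]; rfl
      · rintro rfl; rw [hκ'] at hi; exact lt_irrefl _ hi
    · push Not at hex
      have hdeg : ∑ i, m i ≤ ∑ i, dg c T i := by
        rw [sum_dg]
        refine le_trans ?_ hP
        have := MvPolynomial.le_totalDegree hm
        rwa [Finsupp.sum_fintype _ _ (fun _ => rfl)] at this
      have heq : ∀ i, dg c T i = m i := by
        have := (Finset.sum_eq_sum_iff_of_le (fun i _ => hex i)).1
          (le_antisymm (Finset.sum_le_sum fun i _ => hex i) hdeg)
        exact fun i => this i (Finset.mem_univ i)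
      have : m = κ := by ext i; rw [hκ', heq]
      rw [if_pos this]
      refine Finset.prod_congr rfl fun i _ => ?_
      rw [heq, fwdDiff_iter_eq_factorial]
      rfl
  simp only [MvPolynomial.eval_eq', Finset.mul_sum]
  rw [Finset.sum_comm]
  have h2 : ∀ m ∈ P.support, ∑ S ∈ T.powerset, (-1 : ℚ) ^ S.card *
      (P.coeff m * ∏ i, (y i - dg c S i) ^ m i) =
      if m = κ then P.coeff m * ∏ i, ((dg c T i).factorial : ℚ) else 0 := by
    intro m hm
    rw [← mul_ite_zero, ← h1 m hm, Finset.mul_sum]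
    exact Finset.sum_congr rfl fun S _ => by ring
  rw [Finset.sum_congr rfl h2, Finset.sum_ite_eq']
  split_ifs with h
  · rfl
  · rw [MvPolynomial.notMem_support_iff.1 h, zero_mul]

lemma uni_diff {α : Type*} [DecidableEq α] (T : Finset α) (f : ℚ → ℚ) (y : ℚ) :
    ∑ S ∈ T.powerset, (-1 : ℚ) ^ S.card * f (y - S.card) =
      ((fwdDiff 1)^[T.card] f) (y - T.card) := by
  induction T using Finset.induction_on generalizing f y with
  | empty => simp
  | insert j T hj ih =>
    rw [Finset.sum_powerset_insert hj, ← Finset.sum_add_distrib]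
    have h1 := ih (fwdDiff 1 f) (y - 1)
    rw [Finset.card_insert_of_notMem hj, Function.iterate_succ_apply]
    have e : y - ((T.card + 1 : ℕ) : ℚ) = y - 1 - T.card := by push_cast; ring
    rw [e, ← h1]
    refine Finset.sum_congr rfl fun S hS => ?_
    have hjS : j ∉ S := fun h => hj (Finset.mem_powerset.1 hS h)
    rw [Finset.card_insert_of_notMem hjS, pow_succ, fwdDiff]
    have e3 : y - 1 - (S.card : ℚ) + 1 = y - S.card := by ring
    have e4 : y - ((S.card + 1 : ℕ) : ℚ) = y - 1 - S.card := by
      push_cast; ring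
    rw [e3, e4]
    ring

lemma int_diff {α : Type*} [DecidableEq α] (T : Finset α) (f : ℕ → ℤ) (n : ℕ) (hn : T.card ≤ n) :
    ∑ S ∈ T.powerset, (-1 : ℤ) ^ S.card * f (n - S.card) =
      ((fwdDiff 1)^[T.card] f) (n - T.card) := by
  induction T using Finset.induction_on generalizing f n with
  | empty => simp
  | insert j T hj ih =>
    rw [Finset.card_insert_of_notMem hj] at hn
    rw [Finset.sum_powerset_insert hj, ← Finset.sum_add_distrib]
    have h1 := ih (fwdDiff 1 f) (n - 1) (by omega)
    rw [Finset.card_insert_of_notMem hj, Function.iterate_succ_apply]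
    have e : n - (T.card + 1) = n - 1 - T.card := by omega
    rw [e, ← h1]
    refine Finset.sum_congr rfl fun S hS => ?_
    have hjS : j ∉ S := fun h => hj (Finset.mem_powerset.1 hS h)
    have hc := Finset.card_le_card (Finset.mem_powerset.1 hS)
    rw [Finset.card_insert_of_notMem hjS, pow_succ, fwdDiff]
    have e3 : n - 1 - S.card + 1 = n - S.card := by omega
    have e4 : n - (S.card + 1) = n - 1 - S.card := by omega
    rw [e3, e4]
    ring

lemma poly_diff {α : Type*} [DecidableEq α] (T : Finset α) (P : Polynomial ℚ)
    (hP : P.natDegree ≤ T.card) (y : ℚ) :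
    ∑ S ∈ T.powerset, (-1 : ℚ) ^ S.card * P.eval (y - S.card) =
      P.coeff T.card * (T.card.factorial : ℚ) := by
  rw [uni_diff T (fun x => P.eval x)]
  rcases lt_or_eq_of_le hP with h | h
  · rw [Polynomial.fwdDiff_iter_eq_zero_of_degree_lt h, Polynomial.coeff_eq_zero_of_natDegree_lt h]
    simp
  · rw [← h, Polynomial.fwdDiff_iter_degree_eq_factorial]
    simp

/-- eventually vanishing difference -/
def EvZ (k : ℕ) (H : ℕ → ℤ) : Prop := ∃ B, ∀ n, B ≤ n → ((fwdDiff 1)^[k] H) n = 0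

lemma EvZ.succ {k : ℕ} {H : ℕ → ℤ} (h : EvZ k H) : EvZ (k + 1) H := by
  obtain ⟨B, hB⟩ := h
  refine ⟨B, fun n hn => ?_⟩
  rw [Function.iterate_succ_apply', fwdDiff, hB n hn, hB (n + 1) (by omega), sub_self]

lemma EvZ.mono {k l : ℕ} {H : ℕ → ℤ} (h : EvZ k H) (hl : k ≤ l) : EvZ l H := by
  induction l, hl using Nat.le_induction with
  | base => exact h
  | succ l _ ih => exact ih.succ

lemma EvZ.poly {k : ℕ} {H : ℕ → ℤ} (h : EvZ (k + 1) H) :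
    ∃ P : Polynomial ℚ, P.natDegree ≤ k ∧ ∃ B, ∀ n : ℕ, B ≤ n → (H n : ℚ) = P.eval (n : ℚ) := by
  obtain ⟨B, hB⟩ := h
  have hz : ∀ l, k + 1 ≤ l → ∀ n, B ≤ n → ((fwdDiff 1)^[l] H) n = 0 := by
    intro l hl
    induction l, hl using Nat.le_induction with
    | base => exact hB
    | succ l _ ih =>
      intro n hn
      rw [Function.iterate_succ_apply', fwdDiff, ih n hn, ih (n + 1) (by omega), sub_self]
  let Q : Polynomial ℚ := ∑ l ∈ Finset.range (k + 1),
    Polynomial.C ((((fwdDiff 1)^[l] H) B : ℚ) / l.factorial) * descPochhammer ℚ l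
  have hQd : Q.natDegree ≤ k := by
    refine Polynomial.natDegree_sum_le_of_forall_le _ _ fun l hl => ?_
    rw [Finset.mem_range] at hl
    refine (Polynomial.natDegree_C_mul_le _ _).trans ?_
    rw [descPochhammer_natDegree]
    omega
  refine ⟨Q.comp (Polynomial.X - Polynomial.C (B : ℚ)), ?_, B, fun n hn => ?_⟩
  · refine Polynomial.natDegree_comp_le.trans ?_
    rw [Polynomial.natDegree_X_sub_C, mul_one]
    exact hQd
  · obtain ⟨n, rfl⟩ := Nat.exists_eq_add_of_le hn
    have h1 := shift_eq_sum_fwdDiff_iter 1 H n B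
    rw [nsmul_one, Nat.cast_id] at h1
    have h2 : H (B + n) = ∑ l ∈ Finset.range (k + 1), (n.choose l : ℤ) * ((fwdDiff 1)^[l] H) B := by
      rw [h1]
      simp only [nsmul_eq_mul]
      rcases le_total n k with hnk | hnk
      · refine Finset.sum_subset (Finset.range_mono (by omega)) fun l _ hl => ?_
        rw [Finset.mem_range, not_lt] at hl
        rw [Nat.choose_eq_zero_of_lt (by omega)]; simp
      · symm
        refine Finset.sum_subset (Finset.range_mono (by omega)) fun l _ hl => ?_
        rw [Finset.mem_range, not_lt] at hl
        rw [hz l hl B le_rfl, mul_zero]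
    rw [h2]
    simp only [Polynomial.eval_comp, Polynomial.eval_sub, Polynomial.eval_X, Polynomial.eval_C]
    have e : ((B + n : ℕ) : ℚ) - B = n := by push_cast; ring
    rw [e, Polynomial.eval_finsetSum, Int.cast_sum]
    refine Finset.sum_congr rfl fun l _ => ?_
    rw [Polynomial.eval_mul, Polynomial.eval_C, descPochhammer_eval_eq_descFactorial,
      Nat.descFactorial_eq_factorial_mul_choose]
    have : (l.factorial : ℚ) ≠ 0 := by positivity
    push_cast
    field_simp

lemma EvZ.of_poly {k : ℕ} {H : ℕ → ℤ} {P : Polynomial ℚ} (hP : P.natDegree ≤ k)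
    {B : ℕ} (h : ∀ n : ℕ, B ≤ n → (H n : ℚ) = P.eval (n : ℚ)) : EvZ (k + 1) H := by
  refine ⟨B, fun n hn => ?_⟩
  have h1 := int_diff (Finset.range (k + 1)) H (n + (k + 1)) (by simp)
  rw [Finset.card_range, Nat.add_sub_cancel] at h1
  rw [← h1]
  have h2 := poly_diff (Finset.range (k + 1)) P (by simp; omega) ((n + (k + 1) : ℕ) : ℚ)
  rw [Finset.card_range, Polynomial.coeff_eq_zero_of_natDegree_lt (by omega), zero_mul] at h2
  have h3 : ((∑ S ∈ (Finset.range (k + 1)).powerset,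
      (-1 : ℤ) ^ S.card * H (n + (k + 1) - S.card) : ℤ) : ℚ) = 0 := by
    rw [← h2]
    push_cast
    refine Finset.sum_congr rfl fun S hS => ?_
    have hc := Finset.card_le_card (Finset.mem_powerset.1 hS)
    rw [Finset.card_range] at hc
    rw [h _ (by omega), Nat.cast_sub (by omega)]
    push_cast
    rfl
  exact_mod_cast h3

lemma natDegree_le_of_le {P Q : Polynomial ℚ} {B : ℕ}
    (h0 : ∀ n : ℕ, B ≤ n → 0 ≤ P.eval (n : ℚ))
    (h : ∀ n : ℕ, B ≤ n → P.eval (n : ℚ) ≤ Q.eval (n : ℚ)) : P.natDegree ≤ Q.natDegree := by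
  by_contra hlt
  push Not at hlt
  have hdeg := Polynomial.degree_lt_degree hlt
  let φ := Rat.castHom ℝ
  have hφ : Function.Injective φ := φ.injective
  have hdeg' : (Q.map φ).degree < (P.map φ).degree := by
    rwa [Polynomial.degree_map_eq_of_injective hφ, Polynomial.degree_map_eq_of_injective hφ]
  have ho := Polynomial.isLittleO_atTop_of_degree_lt _ _ hdeg'
  have ho2 := (ho.comp_tendsto tendsto_natCast_atTop_atTop).def (show (0 : ℝ) < 1 / 2 by norm_num)
  have hP0 : P.map φ ≠ 0 := by
    intro h
    rw [h, Polynomial.degree_zero] at hdeg'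
    exact not_lt_bot hdeg'
  have hr := (tendsto_natCast_atTop_atTop (R := ℝ)).eventually
    (Polynomial.eventually_atTop_not_isRoot _ hP0)
  obtain ⟨n, hn1, hn2, hn3⟩ := (ho2.and (hr.and (Filter.eventually_ge_atTop B))).exists
  have eP : (P.map φ).eval (n : ℝ) = ((P.eval (n : ℚ) : ℚ) : ℝ) := by
    have := Polynomial.eval_map_apply (p := P) φ (n : ℚ)
    simpa only [φ, Rat.coe_castHom, Rat.cast_natCast] using this
  have eQ : (Q.map φ).eval (n : ℝ) = ((Q.eval (n : ℚ) : ℚ) : ℝ) := by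
    have := Polynomial.eval_map_apply (p := Q) φ (n : ℚ)
    simpa only [φ, Rat.coe_castHom, Rat.cast_natCast] using this
  rw [Polynomial.IsRoot, eP] at hn2
  simp only [Function.comp_apply, eP, eQ, Real.norm_eq_abs] at hn1
  have a1 : (0 : ℝ) ≤ ((P.eval (n : ℚ) : ℚ) : ℝ) := by exact_mod_cast h0 n hn3
  have a2 : ((P.eval (n : ℚ) : ℚ) : ℝ) ≤ ((Q.eval (n : ℚ) : ℚ) : ℝ) := by exact_mod_cast h n hn3
  rw [abs_of_nonneg a1, abs_of_nonneg (a1.trans a2)] at hn1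
  have : (0 : ℝ) < ((P.eval (n : ℚ) : ℚ) : ℝ) := lt_of_le_of_ne a1 (Ne.symm hn2)
  linarith

/-- comparison of growth -/
lemma EvZ.compare {k r : ℕ} {H H' : ℕ → ℤ} (h : EvZ (k + 1) H) (h' : EvZ (r + 1) H') (g : ℕ)
    {B : ℕ} (h0 : ∀ n, 0 ≤ H n) (hle : ∀ n, B ≤ n → H n ≤ H' (g * n)) (hg : 1 ≤ g) :
    EvZ (r + 1) H := by
  obtain ⟨P, -, B1, hP⟩ := h.poly
  obtain ⟨Q, hQ, B2, hQ2⟩ := h'.poly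
  have : P.natDegree ≤ (Q.comp (Polynomial.C (g : ℚ) * Polynomial.X)).natDegree := by
    refine natDegree_le_of_le (B := B + B1 + B2) ?_ ?_
    · intro n hn
      rw [← hP n (by omega)]; exact_mod_cast h0 n
    · intro n hn
      rw [← hP n (by omega)]
      simp only [Polynomial.eval_comp, Polynomial.eval_mul, Polynomial.eval_C, Polynomial.eval_X]
      have e : (g : ℚ) * n = ((g * n : ℕ) : ℚ) := by push_cast; rfl
      rw [e, ← hQ2 (g * n) (by nlinarith)]
      exact_mod_cast hle n (by omega)
  refine EvZ.of_poly (this.trans (Polynomial.natDegree_comp_le.trans ?_)) hP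
  have h1 : (Polynomial.C (g : ℚ) * Polynomial.X).natDegree ≤ 1 :=
    (Polynomial.natDegree_C_mul_le _ _).trans (by simp)
  calc _ ≤ Q.natDegree * 1 := Nat.mul_le_mul_left _ h1
    _ ≤ r := by omega

end DIFF
end MM

namespace MM

section HS
variable {A : Type*} [CommRing A] {M : Type*} [AddCommGroup M] [Module A M]

lemma fl_quot (b : Ideal A) (hb : Module.length A (A ⧸ b) ≠ ⊤) [Module.Finite A M]
    (X : Submodule A M) (hX : b • (⊤ : Submodule A M) ≤ X) : Module.length A (M ⧸ X) ≠ ⊤ := by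
  obtain ⟨n, f, hf⟩ := Module.Finite.exists_fin' A M
  let l : Fin n → (A ⧸ b) →ₗ[A] (M ⧸ X) := fun i =>
    Submodule.liftQ b (LinearMap.toSpanSingleton A (M ⧸ X) (X.mkQ (f (Pi.single i 1)))) (by
      intro a ha
      rw [LinearMap.mem_ker, LinearMap.toSpanSingleton_apply, ← map_smul]
      exact (Submodule.Quotient.mk_eq_zero X).2 (hX (Submodule.smul_mem_smul ha trivial)))
  let φ : (Fin n → A ⧸ b) →ₗ[A] (M ⧸ X) := ∑ i, (l i).comp (LinearMap.proj i)
  have hφ : Function.Surjective φ := by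
    intro v
    obtain ⟨v, rfl⟩ := X.mkQ_surjective v
    obtain ⟨a, rfl⟩ := hf v
    refine ⟨fun i => Ideal.Quotient.mk b (a i), ?_⟩
    have h1 : a = ∑ i, a i • (Pi.single i (1 : A) : Fin n → A) := by
      ext j
      simp [Finset.sum_apply, Pi.single_apply]
    conv_rhs => rw [h1]
    simp only [φ, LinearMap.sum_apply, LinearMap.comp_apply, LinearMap.proj_apply, map_sum, map_smul]
    rfl
  refine ne_top_of_le_ne_top ?_ (Module.length_le_of_surjective φ hφ)
  rw [Module.length_pi_of_fintype]
  exact (ENat.sum_lt_top.2 fun i _ => lt_top_iff_ne_top.2 hb).ne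

variable [IsNoetherianRing A] [IsLocalRing A] [Module.Finite A M]

lemma fl_pow (g : ℕ) :
    rl (⊤ : Submodule A M) ((IsLocalRing.maximalIdeal A) ^ g • (⊤ : Submodule A M)) ≠ ⊤ := by
  induction g with
  | zero => rw [rl_self_zero (by simp)]; simp
  | succ g ih =>
    rw [rl_add (Y := (IsLocalRing.maximalIdeal A) ^ g • (⊤ : Submodule A M)) le_top
      (Submodule.smul_mono_left (Ideal.pow_le_pow_right (Nat.le_succ g)))]
    refine WithTop.add_ne_top.2 ⟨?_, ih⟩
    refine fl_quot (IsLocalRing.maximalIdeal A) ?_ _ ?_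
    · have : IsSimpleModule A (A ⧸ IsLocalRing.maximalIdeal A) :=
        isSimpleModule_iff_isCoatom.2 (IsLocalRing.maximalIdeal.isMaximal A).out
      rw [Module.length_eq_one]
      simp
    · rw [Submodule.smul_le]
      intro a ha v _
      rw [mem_sOf, pow_succ', mul_smul]
      exact Submodule.smul_mem_smul ha v.2

lemma fl_of_pow (g : ℕ) (X : Submodule A M)
    (h : (IsLocalRing.maximalIdeal A) ^ g • (⊤ : Submodule A M) ≤ X) : rl ⊤ X ≠ ⊤ :=
  ne_top_of_le_ne_top (fl_pow g) (rl_mono le_rfl (by simpa using h))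

lemma pow_le_of_fl (X : Submodule A M) (h : rl ⊤ X ≠ ⊤) :
    ∃ g, (IsLocalRing.maximalIdeal A) ^ g • (⊤ : Submodule A M) ≤ X := by
  rw [rl_top, Module.length_ne_top_iff, isFiniteLength_iff_isNoetherian_isArtinian] at h
  obtain ⟨_, _⟩ := h
  let f : ℕ →o (Submodule A (M ⧸ X))ᵒᵈ :=
    ⟨fun g => OrderDual.toDual ((IsLocalRing.maximalIdeal A) ^ g • (⊤ : Submodule A (M ⧸ X))),
      fun a b hab => Submodule.smul_mono_left (Ideal.pow_le_pow_right hab)⟩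
  obtain ⟨g, hg⟩ := IsArtinian.monotone_stabilizes f
  have h1 : (IsLocalRing.maximalIdeal A) ^ g • (⊤ : Submodule A (M ⧸ X)) =
    (IsLocalRing.maximalIdeal A) ^ (g + 1) • (⊤ : Submodule A (M ⧸ X)) := hg (g + 1) (Nat.le_succ g)
  have h2 : (IsLocalRing.maximalIdeal A) ^ g • (⊤ : Submodule A (M ⧸ X)) = ⊥ := by
    refine Submodule.eq_bot_of_le_smul_of_le_jacobson_bot (IsLocalRing.maximalIdeal A) _
      (IsNoetherian.noetherian _) ?_ (IsLocalRing.maximalIdeal_le_jacobson _)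
    rw [← mul_smul, ← pow_succ', ← h1]
  refine ⟨g, ?_⟩
  have h3 := congrArg (Submodule.comap X.mkQ) h2
  rw [Submodule.comap_bot, Submodule.ker_mkQ] at h3
  rw [← h3, ← Submodule.map_le_iff_le_comap, Submodule.map_smul'']
  exact Submodule.smul_mono le_rfl le_top

lemma pow_mul_le (q : Ideal A) (g : ℕ)
    (h : (IsLocalRing.maximalIdeal A) ^ g • (⊤ : Submodule A M) ≤ q • ⊤) (n : ℕ) :
    (IsLocalRing.maximalIdeal A) ^ (g * n) • (⊤ : Submodule A M) ≤ q ^ n • ⊤ := by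
  induction n with
  | zero => simp
  | succ n ih =>
    rw [mul_add, mul_one, pow_add, mul_smul, pow_succ', mul_smul]
    refine (Submodule.smul_mono le_rfl h).trans ?_
    rw [← mul_smul, mul_comm, mul_smul]
    exact Submodule.smul_mono le_rfl ih

lemma fl_qpow (q : Ideal A) (h : rl (⊤ : Submodule A M) (q • ⊤) ≠ ⊤) (n : ℕ) :
    rl (⊤ : Submodule A M) (q ^ n • ⊤) ≠ ⊤ := by
  obtain ⟨g, hg⟩ := pow_le_of_fl _ h
  exact fl_of_pow _ _ (pow_mul_le q g hg n)

lemma qev {d : ℕ} (x : Fin d → A)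
    (h : rl (⊤ : Submodule A M) (Ideal.span (Set.range x) • ⊤) ≠ ⊤) :
    EvZ (d + 1) (fun n => rn (⊤ : Submodule A M) (Ideal.span (Set.range x) ^ n • ⊤)) := by
  obtain ⟨B, hB⟩ := exact_qadic (M := M) x (fun _ => ⊤) (fun _ _ => le_rfl)
  simp only [inf_top_eq] at hB
  refine ⟨B, fun n hn => ?_⟩
  set H : ℕ → ℤ := fun n => rn (⊤ : Submodule A M) (Ideal.span (Set.range x) ^ n • ⊤)
  have h1 := alt_sum_zero (x := x)
    (P := fun S => (Ideal.span (Set.range x) ^ (n + d + 1 - S.card)) • (⊤ : Submodule A M))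
    (Q := fun S => (Ideal.span (Set.range x) ^ (n + d - S.card)) • (⊤ : Submodule A M))
    (fun S => Submodule.smul_mono_left (Ideal.pow_le_pow_right (by omega)))
    (qadic_KSt x _) (qadic_KSt x _) (hB _ (by omega)) (hB _ (by omega))
    (fun S => ne_top_of_le_ne_top (fl_qpow _ h _) (rl_mono le_top inf_le_left))
  have h2 := int_diff (Finset.univ : Finset (Fin d)) (fwdDiff 1 H) (n + d) (by simp)
  rw [Finset.card_univ, Fintype.card_fin, Nat.add_sub_cancel, ← Function.iterate_succ_apply] at h2
  rw [← h2, ← h1, Finset.powerset_univ]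
  refine Finset.sum_congr rfl fun S _ => ?_
  have hc : S.card ≤ d := by simpa using Finset.card_le_univ S
  congr 1
  have e : n + d + 1 - S.card = n + d - S.card + 1 := by omega
  have := rn_add (X := (⊤ : Submodule A M))
    (Y := (Ideal.span (Set.range x) ^ (n + d - S.card)) • (⊤ : Submodule A M))
    (Z := (Ideal.span (Set.range x) ^ (n + d - S.card + 1)) • (⊤ : Submodule A M)) le_top
    (Submodule.smul_mono_left (Ideal.pow_le_pow_right (by omega))) (fl_qpow _ h _)
  rw [e]
  simp only [fwdDiff, H]
  linarith

lemma exists_sop (a : Ideal A) (r : ℕ) (h : ringKrullDim (A ⧸ a) ≤ r) :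
    ∃ r', r' ≤ r ∧ ∃ y : Fin r' → A, (∀ j, y j ∈ IsLocalRing.maximalIdeal A) ∧
      ∃ g, (IsLocalRing.maximalIdeal A) ^ g ≤ Ideal.span (Set.range y) ⊔ a := by
  by_cases ha : a = ⊤
  · exact ⟨0, Nat.zero_le _, Fin.elim0, fun j => j.elim0, 0, by simp [ha]⟩
  have : Nontrivial (A ⧸ a) := Ideal.Quotient.nontrivial_iff.2 ha
  have : IsLocalRing (A ⧸ a) :=
    IsLocalRing.of_surjective' (Ideal.Quotient.mk a) Ideal.Quotient.mk_surjective
  obtain ⟨s, hs, hcard⟩ :=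
    Ideal.exists_finset_card_eq_height_of_isNoetherianRing (IsLocalRing.maximalIdeal (A ⧸ a))
  rw [← IsLocalRing.maximalIdeal_height_eq_ringKrullDim, ← hcard] at h
  have hle : s.card ≤ r := by exact_mod_cast h
  choose z hz using fun b : A ⧸ a => Ideal.Quotient.mk_surjective b
  let e := s.equivFin
  let y : Fin s.card → A := fun j => z (e.symm j)
  have hy : ∀ j, Ideal.Quotient.mk a (y j) = e.symm j := fun j => hz _
  have hmap : (Ideal.span (Set.range y)).map (Ideal.Quotient.mk a) = Ideal.span (s : Set (A ⧸ a)) := by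
    rw [Ideal.map_span]
    congr 1
    ext b
    constructor
    · rintro ⟨_, ⟨j, rfl⟩, rfl⟩
      rw [hy]; exact (e.symm j).2
    · intro hb
      refine ⟨_, ⟨e ⟨b, hb⟩, rfl⟩, ?_⟩
      rw [hy]; simp
  have hcm : (IsLocalRing.maximalIdeal (A ⧸ a)).comap (Ideal.Quotient.mk a) =
      IsLocalRing.maximalIdeal A := by
    have : ((IsLocalRing.maximalIdeal (A ⧸ a)).comap (Ideal.Quotient.mk a)).IsMaximal :=
      Ideal.comap_isMaximal_of_surjective _ Ideal.Quotient.mk_surjective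
    exact IsLocalRing.eq_maximalIdeal this
  have hrad : IsLocalRing.maximalIdeal (A ⧸ a) ≤ (Ideal.span (s : Set (A ⧸ a))).radical := by
    rw [Ideal.radical_eq_sInf]
    refine le_sInf ?_
    rintro p ⟨hp1, hp2⟩
    exact hs.2 ⟨hp2, hp1⟩ (IsLocalRing.le_maximalIdeal hp2.ne_top)
  refine ⟨s.card, hle, y, fun j => ?_, ?_⟩
  · rw [← hcm, Ideal.mem_comap, hy]
    exact hs.1.2 (Ideal.subset_span (e.symm j).2)
  · refine Ideal.exists_pow_le_of_le_radical_of_fg ?_ (IsNoetherian.noetherian _)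
    have h1 : Ideal.span (Set.range y) ⊔ a =
        (Ideal.span (s : Set (A ⧸ a))).comap (Ideal.Quotient.mk a) := by
      rw [← hmap, Ideal.comap_map_of_surjective _ Ideal.Quotient.mk_surjective,
        ← RingHom.ker_eq_comap_bot, Ideal.mk_ker]
    rw [h1, ← Ideal.comap_radical, ← hcm]
    exact Ideal.comap_mono hrad

lemma hs_bound {d : ℕ} (x : Fin d → A) (hx : ∀ j, x j ∈ IsLocalRing.maximalIdeal A)
    (h : rl (⊤ : Submodule A M) (Ideal.span (Set.range x) • ⊤) ≠ ⊤) (r : ℕ)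
    (hr : ringKrullDim (A ⧸ Module.annihilator A M) ≤ r) :
    EvZ (r + 1) (fun n => rn (⊤ : Submodule A M) (Ideal.span (Set.range x) ^ n • ⊤)) := by
  obtain ⟨r', hr', y, hy, g, hg⟩ := exists_sop _ r hr
  have hy' : Ideal.span (Set.range y) ≤ IsLocalRing.maximalIdeal A := by
    rw [Ideal.span_le]; rintro _ ⟨j, rfl⟩; exact hy j
  have hg' : (IsLocalRing.maximalIdeal A) ^ g • (⊤ : Submodule A M) ≤
      Ideal.span (Set.range y) • ⊤ := by
    refine (Submodule.smul_mono_left hg).trans ?_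
    rw [Submodule.sup_smul, Submodule.annihilator_top.symm, Submodule.annihilator_smul, sup_bot_eq]
  have e1 := qev x h
  have e2 := qev y (fl_of_pow g _ hg')
  obtain ⟨g2, hg2⟩ := pow_le_of_fl _ h
  refine (EvZ.compare e1 e2 (g2 + 1) (B := 0) (fun n => ?_) (fun n _ => ?_) (by omega)).mono (by omega)
  · exact Int.natCast_nonneg _
  · have : rl (⊤ : Submodule A M) (Ideal.span (Set.range x) ^ n • ⊤) ≤
        rl (⊤ : Submodule A M) (Ideal.span (Set.range y) ^ ((g2 + 1) * n) • ⊤) := by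
      refine rl_mono le_rfl (inf_le_left.trans ?_)
      refine le_trans ?_ (pow_mul_le _ g2 hg2 n)
      refine Submodule.smul_mono_left ((Ideal.pow_right_mono hy' _).trans
        (Ideal.pow_le_pow_right (by nlinarith)))
    unfold rn
    exact_mod_cast ENat.toNat_le_toNat this (fl_qpow _ (fl_of_pow g _ hg') _)

end HS
end MM

namespace MM

section DIM
variable {A : Type*} [CommRing A]

lemma dim_bound (a b : Ideal A) (hab : a ≤ b) (I : Ideal A) (d h r : ℕ)
    (hd : ringKrullDim (A ⧸ a) = (d : WithBot ℕ∞))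
    (hh : ∀ p : PrimeSpectrum (A ⧸ a), I.map (Ideal.Quotient.mk a) ≤ p.asIdeal →
      (h : ℕ∞) ≤ Order.height p)
    (hI : ∀ p : Ideal A, p.IsPrime → b ≤ p → I ≤ p) (hr : d ≤ r + h) :
    ringKrullDim (A ⧸ b) ≤ r := by
  refine iSup_le fun l => ?_
  let f := Ideal.Quotient.factor hab
  have hf : Function.Surjective f := Ideal.Quotient.factor_surjective hab
  have hmono : StrictMono (PrimeSpectrum.comap f) := by
    refine Monotone.strictMono_of_injective ?_ (PrimeSpectrum.comap_injective_of_surjective f hf)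
    intro p q hpq
    exact Ideal.comap_mono (show p.asIdeal ≤ q.asIdeal from hpq)
  have h1 : (h : ℕ∞) ≤ Order.height (PrimeSpectrum.comap f l.head) := by
    refine hh _ ?_
    rw [Ideal.map_le_iff_le_comap]
    have hp : ((PrimeSpectrum.comap f l.head).asIdeal.comap (Ideal.Quotient.mk a)).IsPrime :=
      inferInstance
    refine hI _ hp ?_
    intro v hv
    rw [Ideal.mem_comap, PrimeSpectrum.comap_asIdeal, Ideal.mem_comap]
    have : f (Ideal.Quotient.mk a v) = 0 := by
      simp only [f, Ideal.Quotient.factor_mk]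
      exact Ideal.Quotient.eq_zero_iff_mem.2 hv
    rw [this]; exact zero_mem _
  have h2 : (l.length : ℕ∞) ≤ Order.coheight (PrimeSpectrum.comap f l.head) := by
    have := Order.length_le_coheight_head (p := l.map _ hmono)
    simpa using this
  have h3 : ((Order.height (PrimeSpectrum.comap f l.head) +
      Order.coheight (PrimeSpectrum.comap f l.head) : ℕ∞) : WithBot ℕ∞) ≤ d := by
    rw [← hd, ringKrullDim]
    have : Nonempty (PrimeSpectrum (A ⧸ a)) := ⟨PrimeSpectrum.comap f l.head⟩
    rw [Order.krullDim_eq_iSup_height_add_coheight_of_nonempty]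
    exact_mod_cast le_iSup (fun p : PrimeSpectrum (A ⧸ a) => Order.height p + Order.coheight p) _
  have h4 : ((h : ℕ∞) + (l.length : ℕ∞)) ≤ d :=
    (add_le_add h1 h2).trans (by exact_mod_cast h3)
  have h5 : h + l.length ≤ d := by exact_mod_cast h4
  have : l.length ≤ r := by omega
  exact_mod_cast this

lemma le_prime_of_aa {t : ℕ} (I : Fin t → Ideal A) (n : Fin t → ℕ) (p : Ideal A) (hp : p.IsPrime)
    (h : ∏ i, I i ^ n i ≤ p) : ∏ i, I i ≤ p := by
  rw [hp.prod_le] at h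
  obtain ⟨i, hi, h⟩ := h
  exact (Ideal.prod_le_inf).trans ((Finset.inf_le hi).trans (hp.le_of_pow_le h))

end DIM

section CORE
variable {A : Type*} [CommRing A] {M : Type*} [AddCommGroup M] [Module A M] {s d : ℕ}

lemma sum_powerset_union {α β : Type*} [DecidableEq α] [AddCommMonoid β] (T U : Finset α)
    (hd : Disjoint T U) (f : Finset α → β) :
    ∑ S ∈ (T ∪ U).powerset, f S = ∑ V ∈ T.powerset, ∑ W ∈ U.powerset, f (V ∪ W) := by
  induction U using Finset.induction_on generalizing f with
  | empty => simp
  | insert j U hj ih =>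
    rw [Finset.disjoint_insert_right] at hd
    rw [Finset.union_insert, Finset.sum_powerset_insert (by simp [hd.1, hj]), ih hd.2,
      ih hd.2 (fun S => f (insert j S)), ← Finset.sum_add_distrib]
    refine Finset.sum_congr rfl fun V _ => ?_
    rw [Finset.sum_powerset_insert hj]
    simp only [Finset.union_insert]

lemma rl_quot (C : Submodule A M) (q : Ideal A) :
    rl (⊤ : Submodule A (M ⧸ C)) (q • ⊤) = rl (⊤ : Submodule A M) (q • ⊤ ⊔ C) := by
  rw [rl_top]
  symm
  refine rl_of_surj _ _ (((Submodule.mkQ (q • (⊤ : Submodule A (M ⧸ C)))).comp C.mkQ).comp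
    (⊤ : Submodule A M).subtype) ?_ ?_
  · intro v
    obtain ⟨v, rfl⟩ := Submodule.mkQ_surjective _ v
    obtain ⟨v, rfl⟩ := Submodule.mkQ_surjective _ v
    exact ⟨⟨v, trivial⟩, rfl⟩
  · intro v
    have e : q • (⊤ : Submodule A (M ⧸ C)) = (q • (⊤ : Submodule A M)).map C.mkQ := by
      rw [Submodule.map_smul'', Submodule.map_top, Submodule.range_mkQ]
    have e2 : ((q • (⊤ : Submodule A M)).map C.mkQ).comap C.mkQ = q • ⊤ ⊔ C := by
      rw [Submodule.comap_map_eq, Submodule.ker_mkQ]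
    rw [← e2, Submodule.mem_comap, ← e]
    exact Submodule.Quotient.mk_eq_zero _

lemma aa_single_pow {t : ℕ} (K : Fin t → Ideal A) (i : Fin t) (e : ℕ) :
    aa K (Pi.single i e) = K i ^ e := by
  unfold aa
  rw [Finset.prod_eq_single i]
  · simp
  · intro j _ hj; simp [hj]
  · simp

lemma dg_mono {t : ℕ} (c : Fin d → Fin t) {S T : Finset (Fin d)} (h : S ⊆ T) : dg c S ≤ dg c T :=
  fun _ => Finset.card_le_card (Finset.filter_subset_filter _ h)

lemma fam_eq (K : Fin (s + 1) → Ideal A) (c : Fin d → Fin (s + 1)) (n : Fin (s + 1) → ℕ)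
    (S : Finset (Fin d)) :
    fam M K c n S = K (Fin.last s) ^ (n (Fin.last s) - dg c S (Fin.last s)) •
      fam M K c (Function.update n (Fin.last s) 0) S := by
  unfold fam
  rw [← mul_smul, ← aa_single_pow, ← aa_add]
  congr 2
  ext i
  by_cases hi : i = Fin.last s
  · subst hi; simp
  · simp [hi]

variable [IsNoetherianRing A] [IsLocalRing A] [Module.Finite A M]

lemma fl_sub (C : Submodule A M) (J : Ideal A) (b : ℕ) (hb : IsLocalRing.maximalIdeal A ^ b ≤ J) :
    rl C (J • C) ≠ ⊤ := by
  have := fl_of_pow (M := C) b ((J • C).submoduleOf C) (by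
    rw [Submodule.smul_le]
    intro a ha v _
    rw [mem_sOf]
    exact Submodule.smul_mem_smul (hb ha) v.2)
  rw [rl_top] at this
  exact this

theorem term_top (K : Fin (s + 1) → Ideal A) (c : Fin d → Fin (s + 1)) (x : Fin d → A)
    (hxm : ∀ j, x j ∈ IsLocalRing.maximalIdeal A)
    (hfl : rl (⊤ : Submodule A M) (Ideal.span (Set.range x) • ⊤) ≠ ⊤)
    (k0 : ℕ) (hk0 : dg c Finset.univ (Fin.last s) = k0 + 1)
    (n : Fin (s + 1) → ℕ) (hn : n (Fin.last s) = 0)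
    (hdim : ∀ n : Fin (s + 1) → ℕ, n (Fin.last s) = 0 →
      ringKrullDim (A ⧸ Module.annihilator A (M ⧸ aa K n • (⊤ : Submodule A M))) ≤ k0) :
    ∃ B, ∀ n', B ≤ n' → ∑ S : Finset (Fin d), (-1 : ℤ) ^ S.card *
      rn (⊤ : Submodule A M) (Ideal.span (Set.range x) ^ (n' - S.card) • ⊤ ⊔ fam M K c n S) = 0 := by
  set q := Ideal.span (Set.range x)
  have hU : ∀ U : Finset (Fin d),
      EvZ (k0 + 1) (fun m => rn (⊤ : Submodule A M) (q ^ m • ⊤ ⊔ fam M K c n U)) := by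
    intro U
    have h1 := hs_bound (M := M ⧸ fam M K c n U) x hxm (by
      rw [rl_quot]
      exact ne_top_of_le_ne_top hfl (rl_mono le_rfl (inf_le_left.trans le_sup_left))) k0
      (hdim (n - dg c U) (by simp [hn]))
    have h2 : ∀ m, rn (⊤ : Submodule A (M ⧸ fam M K c n U)) (q ^ m • ⊤) =
        rn (⊤ : Submodule A M) (q ^ m • ⊤ ⊔ fam M K c n U) := by
      intro m; unfold rn; rw [rl_quot]
    exact (congrArg (EvZ (k0 + 1)) (funext h2)).mp h1
  choose B hB using hU
  refine ⟨∑ U, B U + 2 * d + 2, fun n' hn' => ?_⟩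
  set TI : Finset (Fin d) := Finset.univ.filter fun j => ¬ c j = Fin.last s
  set TJ : Finset (Fin d) := Finset.univ.filter fun j => c j = Fin.last s with hTJ
  have hdis : Disjoint TI TJ := (Finset.disjoint_filter_filter_not _ _ _).symm
  have hun : TI ∪ TJ = Finset.univ := by
    rw [Finset.union_comm]; exact Finset.filter_union_filter_not_eq _ _
  have hTJc : TJ.card = k0 + 1 := hk0
  rw [← Finset.powerset_univ, ← hun, sum_powerset_union _ _ hdis]
  refine Finset.sum_eq_zero fun V hV => ?_
  rw [Finset.mem_powerset] at hV
  have hcV : V.card ≤ d := by simpa using Finset.card_le_univ V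
  have hcJ : TJ.card ≤ d := by simpa using Finset.card_le_univ TJ
  have hBV : B V ≤ ∑ U, B U := Finset.single_le_sum (fun _ _ => Nat.zero_le _) (Finset.mem_univ V)
  have h1 := int_diff TJ (fun m => rn (⊤ : Submodule A M) (q ^ m • ⊤ ⊔ fam M K c n V)) (n' - V.card)
    (by omega)
  rw [hTJc, hB V _ (by omega)] at h1
  have h2 : ∀ W ∈ TJ.powerset, (-1 : ℤ) ^ (V ∪ W).card *
      rn (⊤ : Submodule A M) (q ^ (n' - (V ∪ W).card) • ⊤ ⊔ fam M K c n (V ∪ W)) =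
      (-1 : ℤ) ^ V.card * ((-1 : ℤ) ^ W.card *
        rn (⊤ : Submodule A M) (q ^ (n' - V.card - W.card) • ⊤ ⊔ fam M K c n V)) := by
    intro W hW
    rw [Finset.mem_powerset] at hW
    have hVW : Disjoint V W := hdis.mono hV hW
    have e : fam M K c n (V ∪ W) = fam M K c n V := by
      unfold fam
      congr 2
      ext i
      by_cases hi : i = Fin.last s
      · subst hi; simp [hn]
      · have : dg c (V ∪ W) i = dg c V i := by
          unfold dg
          rw [Finset.filter_union]
          have : W.filter (fun j => c j = i) = ∅ := by
            rw [Finset.filter_eq_empty_iff]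
            intro j hj hji
            have := hW hj
            rw [hTJ, Finset.mem_filter] at this
            exact hi (hji.symm.trans this.2)
          rw [this, Finset.union_empty]
        simp [this]
    rw [Finset.card_union_of_disjoint hVW, e, Nat.sub_sub, pow_add, mul_assoc]
  rw [Finset.sum_congr rfl h2, ← Finset.mul_sum, h1, mul_zero]

theorem core (K : Fin (s + 1) → Ideal A) (hJ : (K (Fin.last s)).radical = IsLocalRing.maximalIdeal A)
    (c : Fin d → Fin (s + 1)) (x : Fin d → A)
    (hx : ∀ j, x j ∈ K (c j))
    (hxm : ∀ j, x j ∈ IsLocalRing.maximalIdeal A)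
    (hs : ∀ i : Fin d, ∃ N, ∀ n : Fin (s + 1) → ℕ, N ≤ n (c i) →
      (Ideal.span {x i} • (⊤ : Submodule A M) ⊔ Xi x i • ⊤) ⊓
        (aa K (n + Pi.single (c i) 1) • ⊤ ⊔ Xi x i • ⊤) ≤
      Ideal.span {x i} • (aa K n • (⊤ : Submodule A M)) ⊔ Xi x i • ⊤)
    (hfl : rl (⊤ : Submodule A M) (Ideal.span (Set.range x) • ⊤) ≠ ⊤)
    (k0 : ℕ) (hk0 : dg c Finset.univ (Fin.last s) = k0 + 1)
    (hdim : ∀ n : Fin (s + 1) → ℕ, n (Fin.last s) = 0 →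
      ringKrullDim (A ⧸ Module.annihilator A (M ⧸ aa K n • (⊤ : Submodule A M))) ≤ k0) :
    ∃ B : Fin (s + 1) → ℕ, ∀ n, B ≤ n → ∃ B', ∀ n', B' ≤ n' →
      ∑ S : Finset (Fin d), (-1 : ℤ) ^ S.card *
        rn (⊤ : Submodule A M) (Ideal.span (Set.range x) ^ (n' - S.card) • ⊤) =
      ∑ S : Finset (Fin d), (-1 : ℤ) ^ S.card *
        rn (fam M K c (Function.update n (Fin.last s) 0) S) (fam M K c n S) := by
  obtain ⟨g, hg⟩ := pow_le_of_fl _ hfl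
  have hJm : K (Fin.last s) ≤ IsLocalRing.maximalIdeal A := hJ ▸ Ideal.le_radical
  obtain ⟨N, hN, hred⟩ := red_of_sup (M := M) K c x hx hs (Pi.single (Fin.last s) g) (by
    rw [aa_single_pow]
    exact (Submodule.smul_mono_left (Ideal.pow_right_mono hJm g)).trans hg)
  obtain ⟨N', hN', hstar⟩ := star_of_red K c x hx N hN hred
  obtain ⟨B, hB⟩ := exact_fam (M := M) K c x N' (fun j => hN' _) hstar (fun _ => ⊤)
    (fun _ _ => le_rfl)
  simp only [inf_top_eq] at hB
  refine ⟨B, fun n hn => ?_⟩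
  set q := Ideal.span (Set.range x)
  have hq : q ≤ IsLocalRing.maximalIdeal A := by
    rw [Ideal.span_le]; rintro _ ⟨j, rfl⟩; exact hxm j
  set nI := Function.update n (Fin.last s) 0
  obtain ⟨b, hb⟩ : ∃ b, IsLocalRing.maximalIdeal A ^ b ≤ K (Fin.last s) ^ n (Fin.last s) := by
    obtain ⟨b, hb⟩ := Ideal.exists_pow_le_of_le_radical_of_fg hJ.ge (IsNoetherian.noetherian _)
    exact ⟨b * n (Fin.last s), by rw [pow_mul]; exact Ideal.pow_right_mono hb _⟩
  have hRC : ∀ S, fam M K c n S ≤ fam M K c nI S := by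
    intro S; rw [fam_eq K c n S]; exact Submodule.smul_le_right
  have hbC : ∀ S, IsLocalRing.maximalIdeal A ^ b • fam M K c nI S ≤ fam M K c n S := by
    intro S; rw [fam_eq K c n S]
    exact Submodule.smul_mono_left (hb.trans (Ideal.pow_le_pow_right (by omega)))
  have hflC : ∀ S, rl (fam M K c nI S) (fam M K c n S) ≠ ⊤ := by
    intro S; rw [fam_eq K c n S]
    exact fl_sub _ _ b (hb.trans (Ideal.pow_le_pow_right (by omega)))
  have hAR : ∀ S, ∃ k, ∀ m, k ≤ m → fam M K c nI S ⊓ q ^ m • ⊤ ≤ fam M K c n S := by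
    intro S
    obtain ⟨k, hk⟩ := Ideal.exists_pow_inf_eq_pow_smul q (fam M K c nI S)
    refine ⟨k + b, fun m hm => ?_⟩
    rw [inf_comm, hk m (by omega)]
    refine le_trans ?_ (hbC S)
    refine Submodule.smul_mono ?_ inf_le_right
    exact (Ideal.pow_right_mono hq _).trans (Ideal.pow_le_pow_right (by omega))
  choose kk hkk using hAR
  obtain ⟨B1, hB1⟩ := term_top (M := M) K c x hxm hfl k0 hk0 nI (by simp [nI]) hdim
  obtain ⟨B2, hB2⟩ := exact_qadic (M := M) x (fam M K c n) (fun S j => Submodule.smul_mono_left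
    (aa_mono K (tsub_le_tsub_left (dg_mono c (Finset.subset_insert j S)) n)))
  refine ⟨B1 + B2 + ∑ S, kk S + d, fun n' hn' => ?_⟩
  have hkS : ∀ S, fam M K c nI S ⊓ q ^ (n' - S.card) • ⊤ ≤ fam M K c n S := by
    intro S
    have h1 : kk S ≤ ∑ S, kk S := Finset.single_le_sum (fun _ _ => Nat.zero_le _) (Finset.mem_univ S)
    have hc : S.card ≤ d := by simpa using Finset.card_le_univ S
    exact hkk S _ (by omega)
  have hflq : ∀ m, rl (⊤ : Submodule A M) (q ^ m • ⊤) ≠ ⊤ := fl_qpow q hfl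
  have z1 := hB1 n' (by omega)
  have z2 := alt_sum_zero (x := x)
    (P := fun S => q ^ (n' - S.card) • (⊤ : Submodule A M) ⊓ fam M K c n S)
    (Q := fam M K c n) (fun S => inf_le_right)
    ((qadic_KSt x n').inf (fam_KSt K c x hx n)) (fam_KSt K c x hx n) (hB2 n' (by omega)) (hB n hn)
    (fun S => ne_top_of_le_ne_top (hflq (n' - S.card)) (rl_mono le_top le_rfl))
  have key : ∀ S : Finset (Fin d), rn (⊤ : Submodule A M) (q ^ (n' - S.card) • ⊤) =
      rn (fam M K c nI S) (fam M K c n S) +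
      rn (fam M K c n S) (q ^ (n' - S.card) • (⊤ : Submodule A M) ⊓ fam M K c n S) +
      rn (⊤ : Submodule A M) (q ^ (n' - S.card) • ⊤ ⊔ fam M K c nI S) := by
    intro S
    set C := fam M K c nI S
    set R := fam M K c n S
    set Q := q ^ (n' - S.card) • (⊤ : Submodule A M) with hQ
    have hf : rl (⊤ : Submodule A M) Q ≠ ⊤ := hflq _
    have a1 := rn_add (X := ⊤) (Y := Q ⊔ C) (Z := Q) le_top le_sup_left hf
    have a2 : rn (Q ⊔ C) Q = rn C (C ⊓ Q) := by unfold rn; rw [sup_comm, rl_sup]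
    have e : C ⊓ Q = Q ⊓ R := le_antisymm (le_inf inf_le_right (hkS S))
      (le_inf (inf_le_right.trans (hRC S)) inf_le_left)
    have a3 := rn_add (X := C) (Y := R) (Z := Q ⊓ R) (hRC S) inf_le_right (by
      rw [← e]
      exact ne_top_of_le_ne_top hf (rl_mono le_top (by rw [inf_comm])))
    rw [a1, a2, e, a3]
    ring
  simp only [key, mul_add, Finset.sum_add_distrib]
  rw [z1, z2]
  ring

end CORE
end MM

namespace MM

section FIN
variable {A : Type*} [CommRing A] {M : Type*} [AddCommGroup M] [Module A M] {s d : ℕ}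

lemma cm (X Y : Submodule A M) (b : Ideal A) :
    (b • (Y.map X.mkQ)).comap X.mkQ = b • Y ⊔ X := by
  rw [← Submodule.map_smul'', Submodule.comap_map_eq, Submodule.ker_mkQ]

lemma cm_top (X : Submodule A M) (b : Ideal A) :
    (b • (⊤ : Submodule A (M ⧸ X))).comap X.mkQ = b • ⊤ ⊔ X := by
  rw [← cm, Submodule.map_top, Submodule.range_mkQ]

lemma hs_of_seq {t : ℕ} (K : Fin t → Ideal A) (x : Fin d → A) (c : Fin d → Fin t)
    (h : IsReesSuperficialSeq A M K x c) (i : Fin d) : ∃ N, ∀ n : Fin t → ℕ, N ≤ n (c i) →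
      (Ideal.span {x i} • (⊤ : Submodule A M) ⊔ Xi x i • ⊤) ⊓
        (aa K (n + Pi.single (c i) 1) • ⊤ ⊔ Xi x i • ⊤) ≤
      Ideal.span {x i} • (aa K n • (⊤ : Submodule A M)) ⊔ Xi x i • ⊤ := by
  obtain ⟨_, N, hN⟩ := h i
  refine ⟨N, fun n hn => ?_⟩
  have h1 := hN n hn
  set X : Submodule A M := Xi x i • ⊤ with hX
  have e1 : ∏ j, K j ^ (n j + if j = c i then 1 else 0) = aa K (n + Pi.single (c i) 1) := by
    simp [aa, Pi.single_apply]
  rw [e1] at h1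
  have h2 : (Ideal.span {x i} • (⊤ : Submodule A (M ⧸ X))) ⊓
      (aa K (n + Pi.single (c i) 1) • (⊤ : Submodule A (M ⧸ X))) =
      Ideal.span {x i} • (aa K n • (⊤ : Submodule A (M ⧸ X))) := h1
  have h3 := congrArg (Submodule.comap X.mkQ) h2
  rw [Submodule.comap_inf, cm_top, cm_top] at h3
  rw [h3, ← mul_smul, ← mul_smul, cm_top]

lemma lenNat_eq (N : Type*) [AddCommGroup N] [Module A N] :
    lenNat A N = (Module.length A N).toNat := by
  rw [Module.length_eq_height]; rfl

/-- moves the last index to the front -/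
def shf (i : Fin (s + 1)) : Fin (s + 1) := Fin.lastCases 0 Fin.succ i

lemma shf_last : shf (Fin.last s) = 0 := by simp [shf]

lemma shf_castSucc (i : Fin s) : shf i.castSucc = i.succ := by simp [shf]

lemma dg_shf_zero (c : Fin d → Fin (s + 1)) (S : Finset (Fin d)) :
    dg (fun j => shf (c j)) S 0 = dg c S (Fin.last s) := by
  unfold dg
  congr 1
  refine Finset.filter_congr fun j _ => ?_
  show (shf (c j) = 0 ↔ c j = Fin.last s)
  generalize c j = t
  induction t using Fin.lastCases with
  | last => simp [shf_last]
  | cast i => simp [shf_castSucc, Fin.castSucc_ne_last]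

lemma dg_shf_succ (c : Fin d → Fin (s + 1)) (S : Finset (Fin d)) (i : Fin s) :
    dg (fun j => shf (c j)) S i.succ = dg c S i.castSucc := by
  unfold dg
  congr 1
  refine Finset.filter_congr fun j _ => ?_
  show (shf (c j) = i.succ ↔ c j = i.castSucc)
  generalize c j = t
  induction t using Fin.lastCases with
  | last => simp [shf_last, (Fin.succ_ne_zero _).symm, (Fin.castSucc_ne_last _).symm]
  | cast i => simp [shf_castSucc]

lemma mixed_eq (J : Ideal A) (I : Fin s → Ideal A) (n : Fin (s + 1) → ℕ) (p : ℕ)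
    (m : Fin s → ℕ) (h0 : n (Fin.last s) = p) (h1 : ∀ i : Fin s, n i.castSucc = m i) :
    aa (Fin.snoc I J : Fin (s + 1) → Ideal A) n = J ^ p * ∏ i, I i ^ m i := by
  unfold aa
  rw [Fin.prod_univ_castSucc]
  simp [h0, h1, mul_comm]

end FIN
end MM

/-- Remark 3.4.  If `ht((I + Ann_A M)/Ann_A M) = h > 0`,
`k 0 + k 1 + ⋯ + k s = d - 1`, `k 1 + ⋯ + k s < h`, and `x 1, …, x d` is a Rees superficial
sequence of `(I 1, …, I s, J)` with respect to `M` of type `(k 1, …, k s, k 0 + 1)` which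
is a system of parameters for `M`, then
`e_A(J^{[k 0 + 1]}, I 1^{[k 1]}, …, I s^{[k s]}; M) = e_A(x 1, …, x d; M)`. -/
theorem mixedMult_eq_multiplicity_of_reesSuperficialSeq
    (A : Type*) [CommRing A] [IsNoetherianRing A] [IsLocalRing A]
    [Infinite (ResidueField A)]
    (M : Type*) [AddCommGroup M] [Module A M] [Module.Finite A M]
    {s : ℕ} (J : Ideal A) (hJ : J.radical = maximalIdeal A)
    (I : Fin s → Ideal A)
    (d : ℕ) (hd : 0 < d) (hdim : modDim A M = (d : WithBot ℕ∞))
    (h : ℕ) (hh : 0 < h)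
    (hht : idealHeight (A ⧸ Module.annihilator A M)
        (Ideal.map (Ideal.Quotient.mk (Module.annihilator A M)) (∏ i, I i)) = (h : ℕ∞))
    (k0 : ℕ) (k : Fin s → ℕ)
    (hsum : k0 + ∑ i, k i = d - 1) (hlt : ∑ i, k i < h)
    (x : Fin d → A) (c : Fin d → Fin (s + 1))
    (hseq : IsReesSuperficialSeq A M (Fin.snoc I J) x c)
    (htype : OfTypeCount c (Fin.snoc k (k0 + 1)))
    (hsop : IsSOP A M x) :
    ∀ e₁ e₂ : ℕ, IsMixedMult A M J I k0 k e₁ →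
      IsHSMult A M (Ideal.span (Set.range x)) d e₂ → e₁ = e₂ := by
  rintro e₁ e₂ ⟨P1, hP1d, ⟨N1, hN1⟩, he1⟩ ⟨P2, hP2d, ⟨N2, hN2⟩, he2⟩
  obtain ⟨-, hxm, hfl⟩ := hsop
  set K : Fin (s + 1) → Ideal A := Fin.snoc I J with hK
  have hKl : K (Fin.last s) = J := by simp [hK]
  have hx : ∀ j, x j ∈ K (c j) := fun j => (hseq j).1
  have hfl' : MM.rl (⊤ : Submodule A M) (Ideal.span (Set.range x) • ⊤) ≠ ⊤ := by
    rw [MM.rl_top]; exact Module.length_ne_top_iff.2 hfl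
  have htl : MM.dg c Finset.univ (Fin.last s) = k0 + 1 := by
    have := htype (Fin.last s)
    rw [Fin.snoc_last] at this
    exact this
  have htc : ∀ i : Fin s, MM.dg c Finset.univ i.castSucc = k i := by
    intro i
    have := htype i.castSucc
    rw [Fin.snoc_castSucc] at this
    exact this
  obtain ⟨B, hB⟩ := MM.core (M := M) K (by rw [hKl, hJ]) c x hx hxm (MM.hs_of_seq K x c hseq) hfl' k0
    htl (by
      intro n hn
      refine MM.dim_bound (Module.annihilator A M) _ ?_ (∏ i, I i) d h k0 hdim ?_ ?_ (by omega)
      · intro a ha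
        rw [Module.mem_annihilator] at ha ⊢
        intro v
        obtain ⟨v, rfl⟩ := Submodule.mkQ_surjective _ v
        rw [← map_smul, ha, map_zero]
      · intro p hp
        rw [← hht]
        exact iInf₂_le p hp
      · intro p hp hle
        refine MM.le_prime_of_aa I (fun i => n i.castSucc) p hp (le_trans ?_ hle)
        intro a ha
        rw [Module.mem_annihilator]
        intro v
        obtain ⟨v, rfl⟩ := Submodule.mkQ_surjective _ v
        rw [← map_smul]
        refine (Submodule.Quotient.mk_eq_zero _).2 (Submodule.smul_mem_smul ?_ trivial)
        rw [hK, MM.mixed_eq J I n 0 (fun i => n i.castSucc) hn (fun _ => rfl), pow_zero, one_mul]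
        exact ha)
  set n : Fin (s + 1) → ℕ := fun i => B i + N1 + d + 1 with hn
  obtain ⟨B', hB'⟩ := hB n (fun i => by simp only [hn]; omega)
  have hmain := hB' (B' + N2 + d) (by omega)
  set n' := B' + N2 + d with hn'
  have hcd : ∀ S : Finset (Fin d), S.card ≤ d := fun S => by simpa using Finset.card_le_univ S
  have hL : ((∑ S : Finset (Fin d), (-1 : ℤ) ^ S.card *
      MM.rn (⊤ : Submodule A M) (Ideal.span (Set.range x) ^ (n' - S.card) • ⊤) : ℤ) : ℚ) = e₂ := by
    have h1 := MM.poly_diff (Finset.univ : Finset (Fin d)) P2 (by simpa using hP2d) (n' : ℚ)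
    rw [Finset.powerset_univ, Finset.card_univ, Fintype.card_fin, ← he2] at h1
    rw [← h1]
    push_cast
    refine Finset.sum_congr rfl fun S _ => ?_
    have hc := hcd S
    have h2 := (hN2 (n' - S.card) (by omega)).2
    rw [MM.lenNat_eq, ← MM.rl_top, Nat.cast_sub (by omega)] at h2
    rw [← h2]
    simp [MM.rn]
  obtain ⟨js, hjs⟩ : ∃ j, c j = Fin.last s := by
    have : 0 < MM.dg c Finset.univ (Fin.last s) := by omega
    obtain ⟨j, hj⟩ := Finset.card_pos.1 this
    exact ⟨j, (Finset.mem_filter.1 hj).2⟩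
  have hR : ((∑ S : Finset (Fin d), (-1 : ℤ) ^ S.card *
      MM.rn (MM.fam M K c (Function.update n (Fin.last s) 0) S) (MM.fam M K c n S) : ℤ) : ℚ) =
      e₁ := by
    set T : Finset (Fin d) := Finset.univ.erase js with hT
    have hjT : js ∉ T := Finset.notMem_erase _ _
    have hins : insert js T = Finset.univ := Finset.insert_erase (Finset.mem_univ _)
    have hTc : T.card = d - 1 := by
      rw [hT, Finset.card_erase_of_mem (Finset.mem_univ _), Finset.card_univ, Fintype.card_fin]
    set c' : Fin d → Fin (s + 1) := fun j => MM.shf (c j) with hc'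
    have hdgT := MM.dg_insert c hjT
    rw [hins, hjs] at hdgT
    have hTdg : MM.dg c' T = Fin.cons k0 k := by
      ext i
      induction i using Fin.cases with
      | zero =>
        rw [MM.dg_shf_zero, Fin.cons_zero]
        have := congrFun hdgT (Fin.last s)
        rw [htl, Pi.add_apply, Pi.single_eq_same] at this
        omega
      | succ i =>
        rw [MM.dg_shf_succ, Fin.cons_succ]
        have := congrFun hdgT i.castSucc
        rw [htc, Pi.add_apply, Pi.single_eq_of_ne (Fin.castSucc_ne_last i)] at this
        omega
    set y : Fin (s + 1) → ℕ := Fin.cons (n (Fin.last s) - 1) (fun i => n i.castSucc) with hy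
    have h1 := MM.mv_diff c' T P1 (by rw [hTc, ← hsum]; exact hP1d) (fun i => (y i : ℚ))
    have hprod : ∏ i, ((MM.dg c' T i).factorial : ℚ) =
        ((Nat.factorial k0 * ∏ i, Nat.factorial (k i) : ℕ) : ℚ) := by
      rw [hTdg, Fin.prod_univ_succ]
      simp
    rw [hprod, hTdg, ← he1] at h1
    rw [← h1, ← Finset.powerset_univ, ← hins, Finset.sum_powerset_insert hjT,
      ← Finset.sum_add_distrib]
    push_cast
    refine Finset.sum_congr rfl fun S hS => ?_
    have hjS : js ∉ S := fun h => hjT (Finset.mem_powerset.1 hS h)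
    have hc := hcd S
    have hdS : ∀ i, MM.dg c S i ≤ d := fun i => (Finset.card_filter_le _ _).trans hc
    have hdi := MM.dg_insert c hjS
    rw [hjs] at hdi
    set nI := Function.update n (Fin.last s) 0 with hnI
    have eC : MM.fam M K c nI (insert js S) = MM.fam M K c nI S := by
      unfold MM.fam
      congr 2
      ext i
      rw [hdi]
      by_cases hi : i = Fin.last s
      · subst hi; simp [hnI]
      · simp [hi]
    set p : Fin (s + 1) → ℕ := fun i => y i - MM.dg c' S i with hp
    have hp0 : p 0 = n (Fin.last s) - 1 - MM.dg c S (Fin.last s) := by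
      simp only [hp, hy, Fin.cons_zero, hc', MM.dg_shf_zero]
    have hps : ∀ i : Fin s, p i.succ = n i.castSucc - MM.dg c S i.castSucc := by
      intro i
      simp only [hp, hy, Fin.cons_succ, hc', MM.dg_shf_succ]
    have eR1 : MM.fam M K c n (insert js S) = mixedSub A M J I p := by
      unfold MM.fam mixedSub
      rw [hK, MM.mixed_eq J I _ (p 0) (fun i => p i.succ)]
      · rw [hdi, hp0]; simp; omega
      · intro i; rw [hdi, hps]; simp [Fin.castSucc_ne_last]
    have eR2 : MM.fam M K c n S =
        (J ^ (p 0 + 1) * ∏ i : Fin s, I i ^ (p i.succ)) • (⊤ : Submodule A M) := by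
      unfold MM.fam
      rw [hK, MM.mixed_eq J I _ (p 0 + 1) (fun i => p i.succ)]
      · rw [hp0]
        have := hdS (Fin.last s)
        simp only [Pi.sub_apply, hn]; omega
      · intro i; rw [hps]; simp
    have hpN : ∀ i, N1 ≤ p i := by
      intro i
      induction i using Fin.cases with
      | zero =>
        rw [hp0]
        have := hdS (Fin.last s)
        simp only [hn]; omega
      | succ i =>
        rw [hps]
        have := hdS i.castSucc
        simp only [hn]; omega
    obtain ⟨-, hval⟩ := hN1 p hpN
    have hlen : (MM.rn (MM.fam M K c n (insert js S)) (MM.fam M K c n S) : ℚ) =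
        lenNat A (mixedPiece A M J I p) := by
      rw [MM.lenNat_eq, eR1, eR2]
      unfold MM.rn MM.rl
      rw [Int.cast_natCast]
      rfl
    have hRC : MM.fam M K c n (insert js S) ≤ MM.fam M K c nI (insert js S) := by
      rw [MM.fam_eq K c n]; exact Submodule.smul_le_right
    have hRR : MM.fam M K c n S ≤ MM.fam M K c n (insert js S) :=
      Submodule.smul_mono_left (MM.aa_mono K (tsub_le_tsub_left
        (MM.dg_mono c (Finset.subset_insert js S)) n))
    have hfin : MM.rl (MM.fam M K c nI S) (MM.fam M K c n S) ≠ ⊤ := by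
      obtain ⟨b, hb⟩ := Ideal.exists_pow_le_of_le_radical_of_fg hJ.ge (IsNoetherian.noetherian _)
      rw [MM.fam_eq K c n S, hKl]
      refine MM.fl_sub _ _ (b * (n (Fin.last s) - MM.dg c S (Fin.last s))) ?_
      rw [pow_mul]; exact Ideal.pow_right_mono hb _
    rw [eC] at hRC ⊢
    have hadd := MM.rn_add hRC hRR hfin
    have hev : (fun i => ((y i : ℕ) : ℚ) - (MM.dg c' S i : ℚ)) = fun i => ((p i : ℕ) : ℚ) := by
      ext i
      have : MM.dg c' S i ≤ y i := by
        induction i using Fin.cases with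
        | zero =>
          have := hdS (Fin.last s)
          simp only [hy, Fin.cons_zero, hc', MM.dg_shf_zero, hn]; omega
        | succ i =>
          have := hdS i.castSucc
          simp only [hy, Fin.cons_succ, hc', MM.dg_shf_succ, hn]; omega
      simp only [hp]
      rw [Nat.cast_sub this]
    rw [hev, ← hval, ← hlen, hadd, Finset.card_insert_of_notMem hjS, pow_succ]
    push_cast
    ring
  have : (e₁ : ℚ) = e₂ := by rw [← hL, ← hR, hmain]
  exact_mod_cast this
end

section
/- Let (A, m) be a noetherian local ring with infinite residue field, M a finitely generated A-module with dim M = d > 0, and I_1, ..., I_s m-primary ideals of A. Assume k_1, ..., k_s are non-negative integers with k_1 + ··· + k_s = d, and let R be a joint reduction of (I_1, ..., I_s) with respect to M of the type (k_1, ..., k_s). Then e_A(I_1^{[k_1]}, ..., I_s^{[k_s]}, M) = e_A(R, M), i.e., the mixed multiplicity of (I_1, ..., I_s) with respect to M of type (k_1, ..., k_s) equals the Hilbert–Samuel multiplicity of the parameter ideal generated by R on M. -/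
open IsLocalRing

section ReesAux
set_option linter.unusedSectionVars false
universe v
open MvPolynomial

variable {A : Type*} [CommRing A] {σ : Type*} [Fintype σ]

/-- Product of powers of ideals. -/
def rmIP (I : σ → Ideal A) (n : σ →₀ ℕ) : Ideal A := ∏ i, I i ^ n i

theorem rmIP_add (I : σ → Ideal A) (n m : σ →₀ ℕ) :
    rmIP I (n + m) = rmIP I n * rmIP I m := by
  simp [rmIP, pow_add, Finset.prod_mul_distrib]

theorem rmIP_single (I : σ → Ideal A) (i : σ) :
    rmIP I (Finsupp.single i 1) = I i := by
  classical
  unfold rmIP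
  rw [Finset.prod_eq_single i]
  · simp
  · intro b _ hb
    rw [Finsupp.single_eq_of_ne hb, pow_zero]
  · simp

theorem rmIP_zero (I : σ → Ideal A) : rmIP I 0 = ⊤ := by
  simp [rmIP]

/-- A family of submodules stable under the ideals. -/
def RmStab {N : Type*} [AddCommGroup N] [Module A N] (I : σ → Ideal A)
    (P : (σ →₀ ℕ) → Submodule A N) : Prop :=
  ∀ n m, rmIP I m • P n ≤ P (n + m)

/-- A family of submodules that is eventually generated. -/
def RmGood {N : Type*} [AddCommGroup N] [Module A N] (I : σ → Ideal A)
    (P : (σ →₀ ℕ) → Submodule A N) : Prop :=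
  ∃ D, ∀ n, D ≤ n → ∀ m, P (n + m) ≤ rmIP I m • P n

/-- The multi-Rees algebra. -/
noncomputable def rmRees (I : σ → Ideal A) : Subalgebra A (MvPolynomial σ A) where
  carrier := {f | ∀ m, coeff m f ∈ rmIP I m}
  mul_mem' := by
    classical
    intro f g hf hg m
    rw [coeff_mul]
    refine Ideal.sum_mem _ fun p hp => ?_
    rw [← Finset.HasAntidiagonal.mem_antidiagonal.mp hp, rmIP_add]
    exact Ideal.mul_mem_mul (hf _) (hg _)
  add_mem' := by
    intro f g hf hg m
    rw [coeff_add]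
    exact Ideal.add_mem _ (hf _) (hg _)
  algebraMap_mem' := by
    classical
    intro a m
    rw [algebraMap_eq, coeff_C]
    split_ifs with h
    · rw [← h, rmIP_zero]; trivial
    · exact Ideal.zero_mem _

theorem rmRees_eq_adjoin [IsNoetherianRing A] (I : σ → Ideal A) :
    ∃ G : Finset (MvPolynomial σ A), rmRees I = Algebra.adjoin A (G : Set (MvPolynomial σ A)) := by
  classical
  have hfg : ∀ i, ∃ S : Finset A, Ideal.span (S : Set A) = I i := fun i =>
    (isNoetherianRing_iff_ideal_fg A).mp inferInstance (I i)
  choose S hS using hfg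
  let G : Finset (MvPolynomial σ A) :=
    Finset.univ.biUnion fun i => (S i).image fun a => monomial (Finsupp.single i 1) a
  refine ⟨G, le_antisymm ?_ ?_⟩
  · -- the coefficient ideals
    set R := Algebra.adjoin A (G : Set (MvPolynomial σ A)) with hR
    let J : (σ →₀ ℕ) → Ideal A := fun m =>
      (Subalgebra.toSubmodule R).comap (monomial m : A →ₗ[A] MvPolynomial σ A)
    have hJ : ∀ m a, a ∈ J m ↔ monomial m a ∈ R := fun m a => Iff.rfl
    have hJadd : ∀ m m', J m * J m' ≤ J (m + m') := by
      intro m m'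
      refine Ideal.mul_le.mpr fun a ha b hb => ?_
      rw [hJ] at *
      rw [← monomial_mul]
      exact R.mul_mem ha hb
    have hJ0 : J 0 = ⊤ := by
      rw [Ideal.eq_top_iff_one, hJ]
      exact R.one_mem
    have hJI : ∀ i, I i ≤ J (Finsupp.single i 1) := by
      intro i
      rw [← hS i, Ideal.span_le]
      intro a ha
      refine Algebra.subset_adjoin ?_
      simp only [G, Finset.coe_biUnion, Set.mem_iUnion]
      exact ⟨i, by simp, by simpa using ⟨a, ha, rfl⟩⟩
    have hJpow : ∀ i k, I i ^ k ≤ J (Finsupp.single i k) := by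
      intro i k
      induction k with
      | zero => simp [hJ0]
      | succ k ih =>
        rw [pow_succ, Finsupp.single_add]
        exact (Ideal.mul_mono ih (hJI i)).trans (hJadd _ _)
    have hIJ : ∀ m, rmIP I m ≤ J m := by
      intro m
      have : ∀ T : Finset σ, ∏ i ∈ T, I i ^ m i ≤ J (∑ i ∈ T, Finsupp.single i (m i)) := by
        intro T
        induction T using Finset.induction_on with
        | empty => simp [hJ0]
        | insert i T hi ih =>
          rw [Finset.prod_insert hi, Finset.sum_insert hi]
          exact (Ideal.mul_mono (hJpow _ _) ih).trans (hJadd _ _)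
      have h := this Finset.univ
      rwa [Finsupp.univ_sum_single] at h
    intro f hf
    rw [f.as_sum]
    exact R.sum_mem fun m _ => hIJ m (hf m)
  · refine Algebra.adjoin_le ?_
    intro f hf
    simp only [G, Finset.coe_biUnion, Set.mem_iUnion] at hf
    obtain ⟨i, _, hf⟩ := hf
    simp only [Finset.coe_image, Set.mem_image] at hf
    obtain ⟨a, ha, rfl⟩ := hf
    intro m
    rw [coeff_monomial]
    split_ifs with h
    · rw [← h, rmIP_single, ← hS i]
      exact Ideal.subset_span ha
    · exact Ideal.zero_mem _

theorem rmRees_noeth [IsNoetherianRing A] (I : σ → Ideal A) : IsNoetherianRing (rmRees I) := by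
  obtain ⟨G, hG⟩ := rmRees_eq_adjoin I
  exact isNoetherianRing_of_fg ⟨G, hG.symm⟩

/-- coefficient vector -/
noncomputable def rmCoeff {r : ℕ} (m : σ →₀ ℕ) (f : Fin r → MvPolynomial σ A) : Fin r → A :=
  fun i => coeff m (f i)

/-- The submodule attached to a stable family. -/
noncomputable def rmT {r : ℕ} (I : σ → Ideal A) (Q : (σ →₀ ℕ) → Submodule A (Fin r → A))
    (hQ : RmStab I Q) : Submodule (rmRees I) (Fin r → MvPolynomial σ A) where
  carrier := {f | ∀ m, rmCoeff m f ∈ Q m}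
  add_mem' := by
    intro f g hf hg m
    have : rmCoeff m (f + g) = rmCoeff m f + rmCoeff m g := by
      ext i; simp [rmCoeff]
    rw [this]
    exact (Q m).add_mem (hf m) (hg m)
  zero_mem' := by
    intro m
    have : rmCoeff m (0 : Fin r → MvPolynomial σ A) = 0 := by
      ext i; simp [rmCoeff]
    rw [this]
    exact (Q m).zero_mem
  smul_mem' := by
    classical
    intro a f hf m
    have : rmCoeff m (a • f) = ∑ p ∈ Finset.HasAntidiagonal.antidiagonal m, coeff p.1 a.1 • rmCoeff p.2 f := by
      ext i
      simp only [rmCoeff, Pi.smul_apply, Finset.sum_apply, smul_eq_mul]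
      rw [← coeff_mul]
      rfl
    rw [this]
    refine (Q m).sum_mem fun p hp => ?_
    have h := hQ p.2 p.1
    rw [add_comm, Finset.HasAntidiagonal.mem_antidiagonal.mp hp] at h
    exact h (Submodule.smul_mem_smul (a.2 _) (hf _))

theorem rm_fg_of_le_span {R V : Type*} [CommRing R] [IsNoetherianRing R] [AddCommGroup V]
    [Module R V] (S : Set V) (hS : S.Finite) (T : Submodule R V)
    (hT : T ≤ Submodule.span R S) : T.FG :=
  isNoetherian_submodule.mp (isNoetherian_span_of_finite R hS) T hT

theorem rmGood_free [IsNoetherianRing A] {r : ℕ} (I : σ → Ideal A)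
    (Q : (σ →₀ ℕ) → Submodule A (Fin r → A)) (hQ : RmStab I Q)
    (hle : ∀ n, Q n ≤ rmIP I n • ⊤) : RmGood I Q := by
  classical
  have := rmRees_noeth I
  let E : Submodule (rmRees I) (Fin r → MvPolynomial σ A) :=
    Submodule.span _ (Set.range fun i : Fin r => (Pi.single i 1 : Fin r → MvPolynomial σ A))
  have hcoord : ∀ n (v : Fin r → A), v ∈ rmIP I n • (⊤ : Submodule A (Fin r → A)) →
      ∀ i, v i ∈ rmIP I n := by
    intro n v hv i
    induction hv using Submodule.smul_induction_on' with
    | smul a ha w _ => exact Ideal.mul_mem_right _ _ ha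
    | add v _ w _ hv hw => exact Ideal.add_mem _ hv hw
  have hTE : rmT I Q hQ ≤ E := by
    intro f hf
    have hfi : ∀ i, f i ∈ rmRees I := fun i m => hcoord m _ (hle m (hf m)) i
    have : f = ∑ i, (⟨f i, hfi i⟩ : rmRees I) • (Pi.single i 1 : Fin r → MvPolynomial σ A) := by
      ext1 j
      rw [Finset.sum_apply, Finset.sum_eq_single j]
      · simp [Algebra.smul_def]
      · intro b _ hb
        rw [Pi.smul_apply, Pi.single_eq_of_ne hb.symm, Algebra.smul_def, mul_zero]
      · exact fun h => absurd (Finset.mem_univ _) h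
    rw [this]
    exact E.sum_mem fun i _ => E.smul_mem _ (Submodule.subset_span ⟨i, rfl⟩)
  obtain ⟨G, hG⟩ : (rmT I Q hQ).FG := rm_fg_of_le_span _ (Set.finite_range _) _ hTE
  obtain ⟨D, hD⟩ : ∃ D : σ →₀ ℕ, ∀ g ∈ G, ∀ i, ∀ m ∈ (g i).support, m ≤ D := by
    refine ⟨G.sup fun g => Finset.univ.sup fun i => (g i).support.sup id, ?_⟩
    intro g hg i m hm
    exact ((Finset.le_sup (f := id) hm).trans
      (Finset.le_sup (f := fun i => (g i).support.sup id) (Finset.mem_univ i))).trans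
      (Finset.le_sup (f := fun g : Fin r → MvPolynomial σ A =>
        Finset.univ.sup fun i => (g i).support.sup id) hg)
  let Z : (σ →₀ ℕ) → Submodule A (Fin r → A) := fun k =>
    ⨆ (b : σ →₀ ℕ) (_ : b ≤ D) (l : σ →₀ ℕ) (_ : b + l = k), rmIP I l • Q b
  have hZ : RmStab I Z := by
    intro n m
    simp only [Z, Submodule.smul_iSup]
    refine iSup_le fun b => iSup_le fun hb => iSup_le fun l => iSup_le fun hl => ?_
    refine le_iSup_of_le b (le_iSup_of_le hb (le_iSup_of_le (m + l) (le_iSup_of_le ?_ ?_)))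
    · rw [← hl]; abel
    · rw [rmIP_add, mul_smul]
  have hTZ : rmT I Q hQ ≤ rmT I Z hZ := by
    rw [← hG, Submodule.span_le]
    intro g hg k
    have hgT : g ∈ rmT I Q hQ := hG ▸ Submodule.subset_span hg
    by_cases hk : k ≤ D
    · have : Q k ≤ Z k := by
        refine le_iSup_of_le k (le_iSup_of_le hk (le_iSup_of_le 0 (le_iSup_of_le (add_zero _) ?_)))
        rw [rmIP_zero, Submodule.top_smul]
      exact this (hgT k)
    · have : rmCoeff k g = 0 := by
        ext i
        by_contra h
        exact hk (hD g hg i k (mem_support_iff.mpr h))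
      rw [this]
      exact Submodule.zero_mem _
  have hQZ : ∀ k, Q k ≤ Z k := by
    intro k v hv
    have hcm : ∀ m, rmCoeff m (fun i => monomial k (v i)) = if k = m then v else 0 := by
      intro m
      ext i
      simp only [rmCoeff, coeff_monomial]
      split_ifs <;> rfl
    have : (fun i => monomial k (v i)) ∈ rmT I Q hQ := by
      intro m
      rw [hcm]
      split_ifs with h
      · exact h ▸ hv
      · exact Submodule.zero_mem _
    have := hTZ this k
    rwa [hcm, if_pos rfl] at this
  refine ⟨D, fun n hn m => (hQZ _).trans ?_⟩
  refine iSup_le fun b => iSup_le fun hb => iSup_le fun l => iSup_le fun hl => ?_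
  obtain ⟨u, rfl⟩ := exists_add_of_le (hb.trans hn)
  have : l = m + u := by
    rw [add_assoc] at hl
    rw [add_left_cancel hl, add_comm]
  rw [this, rmIP_add, mul_smul]
  exact Submodule.smul_mono le_rfl (hQ b u)

theorem rmGood_core [IsNoetherianRing A] {N : Type*} [AddCommGroup N] [Module A N]
    [Module.Finite A N] (I : σ → Ideal A)
    (Q : (σ →₀ ℕ) → Submodule A N) (hQ : RmStab I Q)
    (hle : ∀ n, Q n ≤ rmIP I n • ⊤) : RmGood I Q := by
  obtain ⟨r, π, hπ⟩ := Module.Finite.exists_fin' A N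
  let Q' : (σ →₀ ℕ) → Submodule A (Fin r → A) := fun n => (Q n).comap π ⊓ rmIP I n • ⊤
  have hmap : ∀ n, (Q' n).map π = Q n := by
    intro n
    refine le_antisymm ?_ ?_
    · rintro _ ⟨v, hv, rfl⟩
      exact hv.1
    · intro y hy
      have h := hle n hy
      rw [← LinearMap.range_eq_top.mpr hπ, LinearMap.range_eq_map, ← Submodule.map_smul''] at h
      obtain ⟨v, hv, rfl⟩ := h
      exact ⟨v, ⟨hy, hv⟩, rfl⟩
  have hst : RmStab I Q' := by
    intro n m
    refine le_inf ?_ ?_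
    · rw [← Submodule.map_le_iff_le_comap, Submodule.map_smul'', hmap]
      exact hQ n m
    · refine (Submodule.smul_mono le_rfl inf_le_right).trans ?_
      rw [← mul_smul, add_comm n m, rmIP_add]
  obtain ⟨D, hD⟩ := rmGood_free I Q' hst fun n => inf_le_right
  refine ⟨D, fun n hn m => ?_⟩
  have := Submodule.map_mono (f := π) (hD n hn m)
  rwa [Submodule.map_smul'', hmap, hmap] at this

theorem rmGood_of_le [IsNoetherianRing A] {N : Type*} [AddCommGroup N] [Module A N]
    [Module.Finite A N] (I : σ → Ideal A)
    (P Q : (σ →₀ ℕ) → Submodule A N) (hP : RmGood I P) (hQ : RmStab I Q)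
    (hle : ∀ n, Q n ≤ P n) : RmGood I Q := by
  obtain ⟨D, hD⟩ := hP
  obtain ⟨D', hD'⟩ := rmGood_core I (fun n => Q (D + n))
    (fun n m => by simpa only [add_assoc] using hQ (D + n) m)
    (fun n => (hle _).trans ((hD D le_rfl n).trans (Submodule.smul_mono le_rfl le_top)))
  refine ⟨D + D', fun n hn m => ?_⟩
  obtain ⟨u, rfl⟩ := exists_add_of_le hn
  have := hD' (D' + u) le_self_add m
  simpa only [add_assoc] using this


section Len

variable {N N' : Type*} [AddCommGroup N] [Module A N] [AddCommGroup N'] [Module A N']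

/-- Relative length. -/
noncomputable def rmLen (P Q : Submodule A N) : ℕ∞ :=
  Module.length A (↥P ⧸ Q.comap P.subtype)

theorem rmLen_map (f : N →ₗ[A] N') (P : Submodule A N) (Q' : Submodule A N') :
    rmLen (P.map f ⊔ Q') Q' = rmLen P (P ⊓ Q'.comap f) := by
  let T := P.map f ⊔ Q'
  let g0 : P →ₗ[A] T := (f.comp P.subtype).codRestrict T
    (fun v => Submodule.mem_sup_left ⟨v, v.2, rfl⟩)
  let g := (Q'.comap T.subtype).mkQ.comp g0
  have hsurj : Function.Surjective g := by
    intro y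
    obtain ⟨⟨y, hy⟩, rfl⟩ := Submodule.mkQ_surjective _ y
    obtain ⟨_, ⟨v, hv, rfl⟩, w, hw, rfl⟩ := Submodule.mem_sup.mp hy
    refine ⟨⟨v, hv⟩, ?_⟩
    simp only [g, LinearMap.comp_apply, Submodule.mkQ_apply]
    rw [Submodule.Quotient.eq]
    simp only [Submodule.mem_comap, map_sub, Submodule.subtype_apply]
    have : ((g0 ⟨v, hv⟩ : T) : N') = f v := rfl
    rw [this]
    have : f v - (f v + w) = -w := by abel
    rw [this]
    exact Q'.neg_mem hw
  have hker : LinearMap.ker g = (P ⊓ Q'.comap f).comap P.subtype := by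
    ext v
    simp only [g, LinearMap.mem_ker, LinearMap.comp_apply, Submodule.mkQ_apply,
      Submodule.Quotient.mk_eq_zero, Submodule.mem_comap, Submodule.mem_inf]
    exact ⟨fun h => ⟨v.2, h⟩, fun h => h.2⟩
  have e := g.quotKerEquivOfSurjective hsurj
  unfold rmLen
  rw [← hker]
  exact e.length_eq.symm

theorem rmLen_add {P Q R : Submodule A N} (hRQ : R ≤ Q) (hQP : Q ≤ P) :
    rmLen P R = rmLen P Q + rmLen Q R := by
  unfold rmLen
  rw [add_comm]
  have h1 : R.comap Q.subtype ≤ (R.comap P.subtype).comap (Submodule.inclusion hQP) :=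
    fun v hv => hv
  have h2 : R.comap P.subtype ≤ (Q.comap P.subtype).comap LinearMap.id :=
    fun v hv => hRQ hv
  refine Module.length_eq_add_of_exact
    (Submodule.mapQ _ _ (Submodule.inclusion hQP) h1)
    (Submodule.mapQ _ _ LinearMap.id h2) ?_ ?_ ?_
  · rw [← LinearMap.ker_eq_bot, LinearMap.ker_eq_bot']
    intro y hy
    obtain ⟨y, rfl⟩ := Submodule.mkQ_surjective _ y
    simp only [Submodule.mkQ_apply, Submodule.mapQ_apply, Submodule.Quotient.mk_eq_zero] at hy ⊢
    exact hy
  · intro y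
    obtain ⟨y, rfl⟩ := Submodule.mkQ_surjective _ y
    exact ⟨Submodule.Quotient.mk y, rfl⟩
  · intro y
    obtain ⟨y, rfl⟩ := Submodule.mkQ_surjective _ y
    simp only [Submodule.mkQ_apply, Submodule.mapQ_apply, LinearMap.id_apply,
      Submodule.Quotient.mk_eq_zero]
    constructor
    · intro h
      exact ⟨Submodule.Quotient.mk ⟨y, h⟩, rfl⟩
    · rintro ⟨z, hz⟩
      obtain ⟨z, rfl⟩ := Submodule.mkQ_surjective _ z
      simp only [Submodule.mkQ_apply, Submodule.mapQ_apply] at hz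
      rw [Submodule.Quotient.eq] at hz
      have h3 : (z : N) - y ∈ R := hz
      have h4 := Q.sub_mem z.2 (hRQ h3)
      simpa using h4

theorem rmLen_self (P : Submodule A N) : rmLen P P = 0 := by
  unfold rmLen
  rw [Module.length_eq_zero_iff]
  rw [Submodule.Quotient.subsingleton_iff]
  simp

/-- Fundamental identity. -/
theorem rmLen_four (f : N →ₗ[A] N') {P Q : Submodule A N} {P' Q' : Submodule A N'}
    (hQ : Q ≤ P) (hQ' : Q' ≤ P') (hP : P.map f ≤ P') (hQf : Q.map f ≤ Q')
    (h1 : rmLen P Q ≠ ⊤) (h2 : rmLen P' Q' ≠ ⊤) :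
    rmLen P' (P.map f ⊔ Q') ≠ ⊤ ∧ rmLen (P ⊓ Q'.comap f) Q ≠ ⊤ ∧
    ((rmLen P' Q').toNat : ℤ) - ((rmLen P Q).toNat : ℤ) =
      ((rmLen P' (P.map f ⊔ Q')).toNat : ℤ) - ((rmLen (P ⊓ Q'.comap f) Q).toNat : ℤ) := by
  have e1 : rmLen P Q = rmLen P (P ⊓ Q'.comap f) + rmLen (P ⊓ Q'.comap f) Q :=
    rmLen_add (le_inf hQ (Submodule.map_le_iff_le_comap.mp hQf)) inf_le_left
  have e2 : rmLen P' Q' = rmLen P' (P.map f ⊔ Q') + rmLen (P.map f ⊔ Q') Q' :=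
    rmLen_add le_sup_right (sup_le hP hQ')
  rw [rmLen_map] at e2
  rw [e1] at h1
  rw [e2] at h2
  rw [ne_eq, ENat.add_eq_top, not_or] at h1 h2
  refine ⟨h2.1, h1.2, ?_⟩
  rw [e1, e2, ENat.toNat_add h1.1 h1.2, ENat.toNat_add h2.1 h2.2]
  push_cast
  ring

end Len

open Filter

/-- Difference operator. -/
noncomputable def rmD (i : σ) {R : Type*} [CommRing R] (F : (σ →₀ ℕ) → R) : (σ →₀ ℕ) → R :=
  fun n => F (n + Finsupp.single i 1) - F n

/-- Iterated difference operator. -/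
noncomputable def rmDL {R : Type*} [CommRing R] {d : ℕ} (c : Fin d → σ) :
    List (Fin d) → ((σ →₀ ℕ) → R) → ((σ →₀ ℕ) → R)
  | [], F => F
  | j :: L, F => rmDL c L (rmD (c j) F)

theorem rm_shift (e : σ →₀ ℕ) {p : (σ →₀ ℕ) → Prop} (h : ∀ᶠ n in atTop, p n) :
    ∀ᶠ n in atTop, p (n + e) :=
  (tendsto_atTop_mono (fun _ => le_self_add) tendsto_id).eventually h

theorem rmDL_congr {R : Type*} [CommRing R] {d : ℕ} (c : Fin d → σ) (L : List (Fin d)) :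
    ∀ {F G : (σ →₀ ℕ) → R}, (∀ᶠ n in atTop, F n = G n) →
      ∀ᶠ n in atTop, rmDL c L F n = rmDL c L G n := by
  induction L with
  | nil => intro F G h; exact h
  | cons j L ih =>
    intro F G h
    refine ih ?_
    filter_upwards [h, rm_shift (Finsupp.single (c j) 1) h] with n h1 h2
    simp only [rmD, h1, h2]

theorem rmDL_sub {R : Type*} [CommRing R] {d : ℕ} (c : Fin d → σ) (L : List (Fin d)) :
    ∀ (F G : (σ →₀ ℕ) → R) n, rmDL c L (fun n => F n - G n) n = rmDL c L F n - rmDL c L G n := by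
  induction L with
  | nil => intro F G n; rfl
  | cons j L ih =>
    intro F G n
    simp only [rmDL]
    rw [← ih]
    congr 1
    funext n
    simp only [rmD]
    ring

theorem rmDL_shift {R : Type*} [CommRing R] {d : ℕ} (c : Fin d → σ) (L : List (Fin d)) (e : σ →₀ ℕ) :
    ∀ (F : (σ →₀ ℕ) → R) n, rmDL c L (fun n => F (n + e)) n = rmDL c L F (n + e) := by
  induction L with
  | nil => intro F n; rfl
  | cons j L ih =>
    intro F n
    simp only [rmDL]
    rw [← ih]
    congr 1
    funext n
    simp only [rmD]
    rw [add_right_comm]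

theorem RmStab.mem {N : Type*} [AddCommGroup N] [Module A N] {I : σ → Ideal A}
    {P : (σ →₀ ℕ) → Submodule A N} (hP : RmStab I P) {i : σ} {a : A} (ha : a ∈ I i)
    {n : σ →₀ ℕ} {v : N} (hv : v ∈ P n) : a • v ∈ P (n + Finsupp.single i 1) :=
  hP n _ (Submodule.smul_mem_smul (by rwa [rmIP_single]) hv)

theorem rm_lemma1 [IsNoetherianRing A] {N : Type*} [AddCommGroup N] [Module A N]
    [Module.Finite A N] {d : ℕ} (I : σ → Ideal A) (x : Fin d → A) (c : Fin d → σ)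
    (hx : ∀ j, x j ∈ I (c j)) (t : σ →₀ ℕ) (u : Fin d → σ →₀ ℕ)
    (hu : ∀ j, u j + Finsupp.single (c j) 1 = t)
    (ht : rmIP I t ≤ (⨆ j, Ideal.span {x j} * rmIP I (u j)) ⊔ Module.annihilator A N)
    (L : List (Fin d)) :
    ∀ (P Q : (σ →₀ ℕ) → Submodule A N), RmStab I P → RmGood I P → RmStab I Q →
      (∀ n, Q n ≤ P n) → (∀ᶠ n in atTop, rmLen (P n) (Q n) ≠ ⊤) →
      (∀ j, j ∉ L → ∀ n, ∀ v ∈ P n, x j • v ∈ Q (n + Finsupp.single (c j) 1)) →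
      ∀ᶠ n in atTop, rmDL c L (fun n => ((rmLen (P n) (Q n)).toNat : ℤ)) n = 0 := by
  induction L with
  | nil =>
    intro P Q hP hPg hQ hle hfin hdead
    obtain ⟨D, hD⟩ := hPg
    refine eventually_atTop.mpr ⟨D + t, fun n hn => ?_⟩
    obtain ⟨w, rfl⟩ := exists_add_of_le hn
    have hn' : D + t + w = (D + w) + t := by abel
    rw [hn']
    generalize hm : D + w = m
    have hDm : D ≤ m := hm ▸ le_self_add
    have key : P (m + t) ≤ Q (m + t) := by
      refine (hD m hDm t).trans ((Submodule.smul_mono_left ht).trans ?_)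
      rw [Submodule.sup_smul]
      refine sup_le ?_ ?_
      · rw [Submodule.iSup_smul]
        refine iSup_le fun j => ?_
        rw [mul_comm, mul_smul, ← hu j, add_comm (u j), ← add_assoc]
        refine le_trans (Submodule.smul_mono le_rfl ?_) (hQ _ (u j))
        rw [Submodule.smul_le]
        intro r hr v hv
        obtain ⟨b, rfl⟩ := Ideal.mem_span_singleton'.mp hr
        rw [mul_smul]
        exact Submodule.smul_mem _ _ (hdead j (by simp) m v hv)
      · rw [Submodule.smul_le]
        intro r hr v _
        rw [Module.mem_annihilator.mp hr v]
        exact Submodule.zero_mem _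
    have : P (m + t) = Q (m + t) := le_antisymm key (hle _)
    simp only [rmDL]
    rw [this, rmLen_self]
    simp
  | cons j L ih =>
    intro P Q hP hPg hQ hle hfin hdead
    set e := Finsupp.single (c j) 1 with he
    let f : N →ₗ[A] N := LinearMap.lsmul A N (x j)
    have hf : ∀ v, f v = x j • v := fun v => rfl
    let Q1 : (σ →₀ ℕ) → Submodule A N := fun n => (P n).map f ⊔ Q (n + e)
    let P2 : (σ →₀ ℕ) → Submodule A N := fun n => P n ⊓ (Q (n + e)).comap f
    have hPf : ∀ n, (P n).map f ≤ P (n + e) := by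
      rintro n _ ⟨v, hv, rfl⟩
      exact hP.mem (hx j) hv
    have hQf : ∀ n, (Q n).map f ≤ Q (n + e) := by
      rintro n _ ⟨v, hv, rfl⟩
      exact hQ.mem (hx j) hv
    have hP1s : RmStab I (fun n => P (n + e)) := by
      intro n m
      have := hP (n + e) m
      rwa [add_right_comm] at this
    have hP1g : RmGood I (fun n => P (n + e)) := by
      obtain ⟨D, hD⟩ := hPg
      refine ⟨D, fun n hn m => ?_⟩
      have := hD (n + e) (hn.trans le_self_add) m
      rwa [add_right_comm] at this
    have hQ1s : RmStab I Q1 := by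
      intro n m
      simp only [Q1, Submodule.smul_sup]
      refine sup_le_sup ?_ ?_
      · rw [← Submodule.map_smul'']
        exact Submodule.map_mono (hP n m)
      · have := hQ (n + e) m
        rwa [add_right_comm] at this
    have hP2s : RmStab I P2 := by
      intro n m
      rw [Submodule.smul_le]
      intro r hr v hv
      refine ⟨hP n m (Submodule.smul_mem_smul hr hv.1), ?_⟩
      have := hQ (n + e) m (Submodule.smul_mem_smul hr hv.2)
      rw [add_right_comm] at this
      simpa using this
    have hP2g : RmGood I P2 := rmGood_of_le I P P2 hPg hP2s fun n => inf_le_left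
    have hQP2 : ∀ n, Q n ≤ P2 n := fun n =>
      le_inf (hle n) (Submodule.map_le_iff_le_comap.mp (hQf n))
    have hfour : ∀ᶠ n in atTop, rmLen (P (n + e)) (Q1 n) ≠ ⊤ ∧ rmLen (P2 n) (Q n) ≠ ⊤ ∧
        ((rmLen (P (n + e)) (Q (n + e))).toNat : ℤ) - ((rmLen (P n) (Q n)).toNat : ℤ) =
        ((rmLen (P (n + e)) (Q1 n)).toNat : ℤ) - ((rmLen (P2 n) (Q n)).toNat : ℤ) := by
      filter_upwards [hfin, rm_shift e hfin] with n h1 h2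
      exact rmLen_four f (hle n) (hle (n + e)) (hPf n) (hQf n) h1 h2
    have r1 := ih (fun n => P (n + e)) Q1 hP1s hP1g hQ1s (fun n => sup_le (hPf n) (hle _))
      (hfour.mono fun n h => h.1) (by
        intro i hi n v hv
        by_cases hij : i = j
        · subst hij
          exact Submodule.mem_sup_left ⟨v, hv, rfl⟩
        · refine Submodule.mem_sup_right ?_
          have := hdead i (by simp [hij, hi]) (n + e) v hv
          rwa [add_right_comm] at this)
    have r2 := ih P2 Q hP2s hP2g hQ hQP2
      (hfour.mono fun n h => h.2.1) (by
        intro i hi n v hv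
        by_cases hij : i = j
        · subst hij
          exact hv.2
        · exact hdead i (by simp [hij, hi]) n v hv.1)
    have r3 := rmDL_congr c L (hfour.mono fun n h => h.2.2)
    filter_upwards [r1, r2, r3] with n h1 h2 h3
    simp only [rmDL]
    rw [rmDL_sub c L (fun n => ((rmLen (P (n + e)) (Q1 n)).toNat : ℤ))
      (fun n => ((rmLen (P2 n) (Q n)).toNat : ℤ)), h1, h2, sub_zero] at h3
    exact h3

theorem rm_lemma2 [IsNoetherianRing A] {d : ℕ} (x : Fin d → A) (L : List (Fin d)) :
    ∀ (N : Type v) [AddCommGroup N] [Module A N] [Module.Finite A N],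
      (∀ j, j ∉ L → ∀ w : N, x j • w = 0) →
      ∃ val : ℤ, ∀ (s : ℕ) (I : Fin s → Ideal A) (c : Fin d → Fin s),
        (∀ j, x j ∈ I (c j)) → ∀ (t : Fin s →₀ ℕ) (u : Fin d → Fin s →₀ ℕ),
        (∀ j, u j + Finsupp.single (c j) 1 = t) →
        (rmIP I t ≤ (⨆ j, Ideal.span {x j} * rmIP I (u j)) ⊔ Module.annihilator A N) →
        ∀ (P : (Fin s →₀ ℕ) → Submodule A N), RmStab I P → RmGood I P →
          (∀ᶠ n in atTop, rmLen ⊤ (P n) ≠ ⊤) →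
          ∀ᶠ n in atTop, rmDL c L (fun n => ((rmLen ⊤ (P n)).toNat : ℤ)) n = val := by
  induction L with
  | nil =>
    intro N _ _ _ hdead
    refine ⟨((rmLen (⊤ : Submodule A N) ⊥).toNat : ℤ), ?_⟩
    intro s I c hx t u hu ht P hP hPg hfin
    obtain ⟨D, hD⟩ := hPg
    have hann : rmIP I t ≤ Module.annihilator A N := by
      refine ht.trans (sup_le (iSup_le fun j => ?_) le_rfl)
      refine Ideal.mul_le_left.trans ?_
      rw [Ideal.span_singleton_le_iff_mem, Module.mem_annihilator]
      exact hdead j (by simp)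
    refine eventually_atTop.mpr ⟨D + t, fun n hn => ?_⟩
    obtain ⟨w, rfl⟩ := exists_add_of_le hn
    have hn' : D + t + w = (D + w) + t := by abel
    have hbot : P (D + t + w) = ⊥ := by
      rw [hn', eq_bot_iff]
      refine (hD _ le_self_add t).trans ?_
      rw [Submodule.smul_le]
      intro r hr v _
      rw [Module.mem_annihilator.mp (hann hr) v]
      exact Submodule.zero_mem _
    simp only [rmDL]
    rw [hbot]
  | cons j L ih =>
    intro N _ _ _ hdead
    let f : N →ₗ[A] N := LinearMap.lsmul A N (x j)
    have hf : ∀ v, f v = x j • v := fun v => rfl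
    have hd1 : ∀ i, i ∉ L → ∀ w : N ⧸ LinearMap.range f, x i • w = 0 := by
      intro i hi w
      obtain ⟨w, rfl⟩ := Submodule.mkQ_surjective _ w
      rw [← map_smul, Submodule.mkQ_apply, Submodule.Quotient.mk_eq_zero]
      by_cases hij : i = j
      · subst hij
        exact ⟨w, rfl⟩
      · rw [hdead i (by simp [hij, hi])]
        exact Submodule.zero_mem _
    have hd2 : ∀ i, i ∉ L → ∀ w : LinearMap.ker f, x i • w = 0 := by
      intro i hi w
      ext
      by_cases hij : i = j
      · subst hij
        exact w.2
      · exact hdead i (by simp [hij, hi]) w.1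
    obtain ⟨v1, hv1⟩ := ih (N ⧸ LinearMap.range f) hd1
    obtain ⟨v2, hv2⟩ := ih (LinearMap.ker f) hd2
    refine ⟨v1 - v2, ?_⟩
    intro s I c hx t u hu ht P hP hPg hfin
    set e := Finsupp.single (c j) 1 with he
    have hPf : ∀ n, (P n).map f ≤ P (n + e) := by
      rintro n _ ⟨v, hv, rfl⟩
      exact hP.mem (hx j) hv
    -- the induced filtrations
    let P1 : (Fin s →₀ ℕ) → Submodule A (N ⧸ LinearMap.range f) :=
      fun n => (P n).map (LinearMap.range f).mkQ
    let P2 : (Fin s →₀ ℕ) → Submodule A (LinearMap.ker f) :=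
      fun n => (P n).comap (LinearMap.ker f).subtype
    let HP : (Fin s →₀ ℕ) → Submodule A N := fun n => LinearMap.range f ⊓ P (n + e)
    let HQ : (Fin s →₀ ℕ) → Submodule A N := fun n => (P n).map f
    have hP1s : RmStab I P1 := by
      intro n m
      simp only [P1]
      rw [← Submodule.map_smul'']
      exact Submodule.map_mono (hP n m)
    have hP1g : RmGood I P1 := by
      obtain ⟨D, hD⟩ := hPg
      refine ⟨D, fun n hn m => ?_⟩
      simp only [P1]
      rw [← Submodule.map_smul'']
      exact Submodule.map_mono (hD n hn m)
    have hP2s : RmStab I P2 := by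
      intro n m
      rw [Submodule.smul_le]
      intro r hr v hv
      exact hP n m (Submodule.smul_mem_smul hr hv)
    have hKs : RmStab I (fun n => LinearMap.ker f ⊓ P n) := by
      intro n m
      rw [Submodule.smul_le]
      intro r hr v hv
      exact ⟨Submodule.smul_mem _ _ hv.1, hP n m (Submodule.smul_mem_smul hr hv.2)⟩
    have hP2g : RmGood I P2 := by
      obtain ⟨D, hD⟩ := rmGood_of_le I P _ hPg hKs fun n => inf_le_right
      refine ⟨D, fun n hn m => ?_⟩
      rw [← Submodule.map_le_map_iff_of_injective (LinearMap.ker f).injective_subtype,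
        Submodule.map_smul'']
      simp only [P2, Submodule.map_comap_subtype]
      exact hD n hn m
    have hPshs : RmStab I (fun n => P (n + e)) := by
      intro n m
      have := hP (n + e) m
      rwa [add_right_comm] at this
    have hPshg : RmGood I (fun n => P (n + e)) := by
      obtain ⟨D, hD⟩ := hPg
      refine ⟨D, fun n hn m => ?_⟩
      have := hD (n + e) (hn.trans le_self_add) m
      rwa [add_right_comm] at this
    have hHPs : RmStab I HP := by
      intro n m
      rw [Submodule.smul_le]
      intro r hr v hv
      exact ⟨Submodule.smul_mem _ _ hv.1, hPshs n m (Submodule.smul_mem_smul hr hv.2)⟩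
    have hHPg : RmGood I HP := rmGood_of_le I _ HP hPshg hHPs fun n => inf_le_right
    have hHQs : RmStab I HQ := by
      intro n m
      simp only [HQ]
      rw [← Submodule.map_smul'']
      exact Submodule.map_mono (hP n m)
    have hHle : ∀ n, HQ n ≤ HP n := fun n => le_inf LinearMap.map_le_range (hPf n)
    -- lengths
    have hlen : ∀ᶠ n in atTop, rmLen ⊤ (P1 (n + e)) ≠ ⊤ ∧ rmLen ⊤ (P2 n) ≠ ⊤ ∧
        rmLen (HP n) (HQ n) ≠ ⊤ ∧
        ((rmLen ⊤ (P (n + e))).toNat : ℤ) - ((rmLen ⊤ (P n)).toNat : ℤ) =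
        ((rmLen ⊤ (P1 (n + e))).toNat : ℤ) - ((rmLen ⊤ (P2 n)).toNat : ℤ)
          - ((rmLen (HP n) (HQ n)).toNat : ℤ) := by
      filter_upwards [hfin, rm_shift e hfin] with n h1 h2
      obtain ⟨a1, a2, a3⟩ := rmLen_four f (P := ⊤) (P' := ⊤) le_top le_top le_top (hPf n) h1 h2
      have b1 : rmLen ⊤ (P1 (n + e)) = rmLen ⊤ (Submodule.map f ⊤ ⊔ P (n + e)) := by
        have := rmLen_map (LinearMap.range f).mkQ ⊤ (P1 (n + e))
        rw [Submodule.map_top, Submodule.range_mkQ, top_sup_eq, top_inf_eq] at this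
        rw [this]
        simp only [P1]
        rw [Submodule.comap_map_mkQ, Submodule.map_top]
      have b2 : rmLen (LinearMap.ker f ⊔ P n) (P n) = rmLen ⊤ (P2 n) := by
        have := rmLen_map (LinearMap.ker f).subtype ⊤ (P n)
        rwa [Submodule.map_top, Submodule.range_subtype, top_inf_eq] at this
      have hker : LinearMap.ker f ⊔ P n ≤ (P (n + e)).comap f := by
        refine sup_le ?_ (Submodule.map_le_iff_le_comap.mp (hPf n))
        intro v hv
        rw [Submodule.mem_comap, LinearMap.mem_ker.mp hv]
        exact Submodule.zero_mem _
      have b3 : rmLen (HP n) (HQ n) =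
          rmLen ((P (n + e)).comap f) (LinearMap.ker f ⊔ P n) := by
        have := rmLen_map f ((P (n + e)).comap f) (HQ n)
        rw [Submodule.map_comap_eq, sup_eq_left.mpr (hHle n)] at this
        rw [this]
        simp only [HQ]
        rw [Submodule.comap_map_eq, sup_comm (P n), inf_eq_right.mpr hker]
      rw [top_inf_eq, rmLen_add le_sup_right hker, b2, ← b3] at a2 a3
      rw [← b1] at a1 a3
      rw [ne_eq, ENat.add_eq_top, not_or] at a2
      refine ⟨a1, a2.2, a2.1, ?_⟩
      rw [a3, ENat.toNat_add a2.1 a2.2]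
      push_cast
      ring
    have hfin1 : ∀ᶠ n in atTop, rmLen ⊤ (P1 n) ≠ ⊤ := by
      obtain ⟨D, hD⟩ := eventually_atTop.mp (hlen.mono fun n h => h.1)
      refine eventually_atTop.mpr ⟨D + e, fun n hn => ?_⟩
      obtain ⟨w, rfl⟩ := exists_add_of_le hn
      have := hD (D + w) le_self_add
      rwa [add_right_comm] at this
    have ann1 : Module.annihilator A N ≤ Module.annihilator A (N ⧸ LinearMap.range f) :=
      LinearMap.annihilator_le_of_surjective _ (Submodule.mkQ_surjective _)
    have ann2 : Module.annihilator A N ≤ Module.annihilator A (LinearMap.ker f) :=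
      LinearMap.annihilator_le_of_injective _ (LinearMap.ker f).injective_subtype
    have r1 := rm_shift e (hv1 s I c hx t u hu (ht.trans (sup_le_sup_left ann1 _)) P1 hP1s hP1g
      hfin1)
    have r2 := hv2 s I c hx t u hu (ht.trans (sup_le_sup_left ann2 _)) P2 hP2s hP2g
      (hlen.mono fun n h => h.2.1)
    have r3 := rm_lemma1 I x c hx t u hu ht L HP HQ hHPs hHPg hHQs hHle
      (hlen.mono fun n h => h.2.2.1) (by
        intro i hi n v hv
        by_cases hij : i = j
        · subst hij
          exact ⟨v, hv.2, rfl⟩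
        · rw [hdead i (by simp [hij, hi])]
          exact Submodule.zero_mem _)
    have r4 := rmDL_congr c L (hlen.mono fun n h => h.2.2.2)
    filter_upwards [r1, r2, r3, r4] with n h1 h2 h3 h4
    simp only [rmDL]
    rw [rmDL_sub c L (fun n => ((rmLen ⊤ (P1 (n + e))).toNat : ℤ) - ((rmLen ⊤ (P2 n)).toNat : ℤ))
      (fun n => ((rmLen (HP n) (HQ n)).toNat : ℤ)),
      rmDL_sub c L (fun n => ((rmLen ⊤ (P1 (n + e))).toNat : ℤ))
      (fun n => ((rmLen ⊤ (P2 n)).toNat : ℤ)),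
      rmDL_shift c L e (fun n => ((rmLen ⊤ (P1 n)).toNat : ℤ)), h1, h2, h3, sub_zero] at h4
    exact h4

theorem rm_pow_mem (K J : Ideal A) {M : Type*} [AddCommGroup M] [Module A M] [Module.Finite A M]
    (hKJ : K ≤ J) (h : J • (⊤ : Submodule A M) ≤ K • ⊤) :
    ∃ r : ℕ, ∀ a ∈ J, a ^ (r + 1) ∈ K * J ^ r ⊔ Module.annihilator A M := by
  refine ⟨(⊤ : Submodule A M).spanFinrank, fun a ha => ?_⟩
  obtain ⟨p, hmon, hdeg, hco, hev⟩ :=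
    LinearMap.exists_monic_and_natDegree_eq_and_coeff_mem_pow_and_aeval_eq_zero A
      (algebraMap A (Module.End A M) a) K (by
        rintro _ ⟨v, rfl⟩
        exact h (Submodule.smul_mem_smul ha trivial))
  rw [← hdeg]
  generalize hr : p.natDegree = r at hco
  have hann : p.eval a ∈ Module.annihilator A M := by
    rw [Module.mem_annihilator]
    intro v
    rw [Polynomial.aeval_algebraMap_apply] at hev
    have := LinearMap.congr_fun hev v
    simpa using this
  rw [Polynomial.eval_eq_sum_range, Finset.sum_range_succ, hr] at hann
  have hlead : p.coeff r = 1 := by rw [← hr]; exact hmon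
  rw [hlead, one_mul] at hann
  have h2 := Ideal.mul_mem_left _ a hann
  rw [mul_add, ← pow_succ'] at h2
  have h3 : a * ∑ k ∈ Finset.range r, p.coeff k * a ^ k ∈ K * J ^ r := by
    rw [Finset.mul_sum]
    refine Ideal.sum_mem _ fun k hk => ?_
    have hk' : k < r := Finset.mem_range.mp hk
    have e1 : a * (p.coeff k * a ^ k) = p.coeff k * a ^ (k + 1) := by ring
    rw [e1]
    have h4 : p.coeff k * a ^ (k + 1) ∈ K ^ (r - k) * J ^ (k + 1) :=
      Ideal.mul_mem_mul (hco k) (Ideal.pow_mem_pow ha _)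
    refine (?_ : K ^ (r - k) * J ^ (k + 1) ≤ K * J ^ r) h4
    obtain ⟨l, rfl⟩ : ∃ l, r = k + 1 + l := ⟨r - (k + 1), by omega⟩
    have : k + 1 + l - k = l + 1 := by omega
    rw [this, pow_succ', mul_assoc, add_comm (k + 1) l, pow_add J l]
    exact Ideal.mul_mono le_rfl (Ideal.mul_mono (Ideal.pow_right_mono hKJ _) le_rfl)
  have h5 : a ^ (r + 1) = (a * ∑ k ∈ Finset.range r, p.coeff k * a ^ k + a ^ (r + 1)) -
      a * ∑ k ∈ Finset.range r, p.coeff k * a ^ k := by ring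
  rw [h5]
  exact Ideal.sub_mem _ (Ideal.mem_sup_right h2) (Ideal.mem_sup_left h3)

theorem rm_pow_le [IsNoetherianRing A] (K J : Ideal A) {M : Type*} [AddCommGroup M] [Module A M]
    [Module.Finite A M] (hKJ : K ≤ J) (h : J • (⊤ : Submodule A M) ≤ K • ⊤) :
    ∃ q : ℕ, J ^ (q + 1) ≤ K * J ^ q ⊔ Module.annihilator A M := by
  obtain ⟨r, hr⟩ := rm_pow_mem K J hKJ h
  have main : ∀ J1 : Ideal A, J1.FG → J1 ≤ J →
      ∃ q : ℕ, J1 ^ (q + 1) ≤ K * J ^ q ⊔ Module.annihilator A M := by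
    intro J1 hfg
    refine Submodule.fg_induction
      (motive := fun J1 _ => J1 ≤ J → ∃ q : ℕ, J1 ^ (q + 1) ≤ K * J ^ q ⊔ Module.annihilator A M)
      ?_ ?_ J1 hfg
    · intro a ha
      refine ⟨r, ?_⟩
      have ha' : a ∈ J := ha (Submodule.mem_span_singleton_self a)
      change (Ideal.span {a}) ^ (r + 1) ≤ _
      rw [Ideal.span_singleton_pow, Ideal.span_singleton_le_iff_mem]
      exact hr a ha'
    · intro J1 J2 _ _ ih1 ih2 hle
      obtain ⟨q1, h1⟩ := ih1 (le_sup_left.trans hle)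
      obtain ⟨q2, h2⟩ := ih2 (le_sup_right.trans hle)
      have hJ1 : J1 ≤ J := le_sup_left.trans hle
      have hJ2 : J2 ≤ J := le_sup_right.trans hle
      refine ⟨q1 + q2, ?_⟩
      have aux : ∀ (B : Ideal A) (q l : ℕ), B ≤ K * J ^ q ⊔ Module.annihilator A M →
          B * J ^ l ≤ K * J ^ (q + l) ⊔ Module.annihilator A M := by
        intro B q l hB
        refine (Ideal.mul_mono hB le_rfl).trans ?_
        rw [Ideal.sup_mul, mul_assoc, ← pow_add]
        exact sup_le_sup le_rfl Ideal.mul_le_left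
      rw [← Submodule.add_eq_sup J1, add_pow]
      refine Finset.sum_induction _ (fun B => B ≤ K * J ^ (q1 + q2) ⊔ Module.annihilator A M)
        (fun _ _ ha hb => sup_le ha hb) bot_le ?_
      intro m hm
      have hm' := Finset.mem_range.mp hm
      refine Ideal.mul_le_left.trans ?_
      by_cases hmq : q1 + 1 ≤ m
      · obtain ⟨l, rfl⟩ := Nat.exists_eq_add_of_le hmq
        refine le_trans ?_ ((aux _ q1 q2 h1).trans le_rfl)
        obtain ⟨w, hw⟩ : ∃ w, q2 = l + w := ⟨q2 - l, by omega⟩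
        have : q1 + q2 + 1 - (q1 + 1 + l) = w := by omega
        rw [this, pow_add, mul_assoc, hw, pow_add J]
        exact Ideal.mul_mono le_rfl
          (Ideal.mul_mono (Ideal.pow_right_mono hJ1 _) (Ideal.pow_right_mono hJ2 _))
      · obtain ⟨l, hl⟩ : ∃ l, q1 + q2 + 1 - m = q2 + 1 + l := ⟨q1 - m, by omega⟩
        have hw : q1 = m + l := by omega
        refine le_trans ?_ ((aux _ q2 q1 h2).trans ?_)
        · rw [hl, pow_add, mul_left_comm, hw, pow_add J]
          exact Ideal.mul_mono le_rfl
            (Ideal.mul_mono (Ideal.pow_right_mono hJ1 _) (Ideal.pow_right_mono hJ2 _))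
        · rw [add_comm q2]
  exact main J ((isNoetherianRing_iff_ideal_fg A).mp inferInstance J) le_rfl

theorem rmDL_cast {d : ℕ} (c : Fin d → σ) (L : List (Fin d)) :
    ∀ (F : (σ →₀ ℕ) → ℤ) n, ((rmDL c L F n : ℤ) : ℚ) = rmDL c L (fun n => (F n : ℚ)) n := by
  induction L with
  | nil => intro F n; rfl
  | cons j L ih =>
    intro F n
    simp only [rmDL]
    rw [ih]
    congr 1
    funext n
    simp [rmD]

theorem rmDL_sum {d : ℕ} (c : Fin d → σ) {ι : Type*} (T : Finset ι) (a : ι → ℚ)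
    (L : List (Fin d)) :
    ∀ (g : ι → (σ →₀ ℕ) → ℚ) n, rmDL c L (fun n => ∑ m ∈ T, a m * g m n) n =
      ∑ m ∈ T, a m * rmDL c L (g m) n := by
  induction L with
  | nil => intro g n; rfl
  | cons j L ih =>
    intro g n
    simp only [rmDL]
    rw [← ih]
    congr 1
    funext n
    simp [rmD, mul_sub, Finset.sum_sub_distrib]

theorem rmDL_prod [DecidableEq σ] {d : ℕ} (c : Fin d → σ) (L : List (Fin d)) :
    ∀ (f : σ → ℚ → ℚ) n, rmDL c L (fun n => ∏ i, f i (n i : ℚ)) n =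
      ∏ i, ((fwdDiff (1 : ℚ))^[(L.map c).count i] (f i)) (n i : ℚ) := by
  induction L with
  | nil => intro f n; simp [rmDL]
  | cons j L ih =>
    intro f n
    simp only [rmDL]
    have h1 : rmD (c j) (fun n : σ →₀ ℕ => ∏ i, f i (n i : ℚ)) =
        fun n => ∏ i, (Function.update f (c j) (fwdDiff (1 : ℚ) (f (c j)))) i (n i : ℚ) := by
      funext n
      simp only [rmD]
      rw [← Finset.mul_prod_erase Finset.univ _ (Finset.mem_univ (c j)),
        ← Finset.mul_prod_erase Finset.univ (fun i => f i (n i : ℚ)) (Finset.mem_univ (c j)),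
        ← Finset.mul_prod_erase Finset.univ (fun i => (Function.update f (c j)
          (fwdDiff (1 : ℚ) (f (c j)))) i (n i : ℚ)) (Finset.mem_univ (c j))]
      have e1 : ∏ i ∈ Finset.univ.erase (c j),
          f i (((n + Finsupp.single (c j) 1 : σ →₀ ℕ) i : ℕ) : ℚ) =
          ∏ i ∈ Finset.univ.erase (c j), f i (n i : ℚ) := by
        refine Finset.prod_congr rfl fun i hi => ?_
        rw [Finsupp.add_apply, Finsupp.single_eq_of_ne (Finset.ne_of_mem_erase hi), add_zero]
      have e2 : ∏ i ∈ Finset.univ.erase (c j), (Function.update f (c j)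
          (fwdDiff (1 : ℚ) (f (c j)))) i (n i : ℚ) =
          ∏ i ∈ Finset.univ.erase (c j), f i (n i : ℚ) := by
        refine Finset.prod_congr rfl fun i hi => ?_
        rw [Function.update_of_ne (Finset.ne_of_mem_erase hi)]
      rw [e1, e2, Function.update_self, fwdDiff]
      simp only [Finsupp.add_apply, Finsupp.single_eq_same]
      push_cast
      ring
    rw [h1, ih]
    refine Finset.prod_congr rfl fun i _ => ?_
    by_cases hi : i = c j
    · subst hi
      simp
    · rw [Function.update_of_ne hi, List.map_cons, List.count_cons_of_ne (Ne.symm hi)]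

theorem rmDL_monomial [DecidableEq σ] {d : ℕ} (c : Fin d → σ) (L : List (Fin d))
    (k m : σ → ℕ) (hk : ∀ i, (L.map c).count i = k i) (hm : ∑ i, m i ≤ ∑ i, k i) (n : σ →₀ ℕ) :
    rmDL c L (fun n => ∏ i, (n i : ℚ) ^ m i) n =
      if m = k then ((∏ i, Nat.factorial (k i) : ℕ) : ℚ) else 0 := by
  rw [rmDL_prod c L (fun i r => r ^ m i) n]
  simp only [hk]
  split_ifs with h
  · subst h
    push_cast
    refine Finset.prod_congr rfl fun i _ => ?_
    rw [fwdDiff_iter_eq_factorial]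
    simp
  · obtain ⟨i, hi⟩ : ∃ i, m i < k i := by
      by_contra hcon
      push Not at hcon
      refine h (funext fun i => ?_)
      have heq := le_antisymm hm (Finset.sum_le_sum fun i _ => hcon i)
      exact ((Finset.sum_eq_sum_iff_of_le fun i _ => hcon i).mp heq.symm i (Finset.mem_univ i)).symm
    refine Finset.prod_eq_zero (Finset.mem_univ i) ?_
    rw [fwdDiff_iter_pow_eq_zero_of_lt hi]
    rfl

theorem rmDL_mv [DecidableEq σ] {d : ℕ} (c : Fin d → σ) (L : List (Fin d))
    (k : σ → ℕ) (hk : ∀ i, (L.map c).count i = k i) (P : MvPolynomial σ ℚ)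
    (hP : P.totalDegree ≤ ∑ i, k i) (n : σ →₀ ℕ) :
    rmDL c L (fun n => MvPolynomial.eval (fun i => (n i : ℚ)) P) n =
      MvPolynomial.coeff (Finsupp.equivFunOnFinite.symm k) P *
        ((∏ i, Nat.factorial (k i) : ℕ) : ℚ) := by
  simp only [MvPolynomial.eval_eq']
  rw [rmDL_sum c P.support (fun m => MvPolynomial.coeff m P) L
    (fun m n => ∏ i, (n i : ℚ) ^ m i)]
  rw [Finset.sum_congr rfl (g := fun m => MvPolynomial.coeff m P *
    (if (m : σ → ℕ) = k then ((∏ i, Nat.factorial (k i) : ℕ) : ℚ) else 0))]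
  · rw [Finset.sum_eq_single (Finsupp.equivFunOnFinite.symm k)]
    · simp
    · intro m _ hm
      rw [if_neg, mul_zero]
      intro h
      exact hm (by rw [← h]; simp)
    · intro h
      rw [MvPolynomial.notMem_support_iff.mp h, zero_mul]
  · intro m hm
    rw [rmDL_monomial c L k m hk]
    refine le_trans ?_ hP
    have := MvPolynomial.le_totalDegree hm
    rwa [Finsupp.sum_fintype _ _ (fun _ => rfl)] at this

theorem rmLen_top {N : Type*} [AddCommGroup N] [Module A N] (Q : Submodule A N) :
    rmLen ⊤ Q = Module.length A (N ⧸ Q) := by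
  refine LinearEquiv.length_eq (Submodule.Quotient.equiv _ _ Submodule.topEquiv ?_)
  ext v
  simp


theorem rmIP_nsmul (I : σ → Ideal A) (t : σ →₀ ℕ) (q : ℕ) :
    rmIP I (q • t) = rmIP I t ^ q := by
  induction q with
  | zero => simp [rmIP_zero]
  | succ q ih => rw [succ_nsmul, rmIP_add, ih, pow_succ]

theorem rm_stab (I : σ → Ideal A) (M : Type*) [AddCommGroup M] [Module A M] :
    RmStab I (fun n => rmIP I n • (⊤ : Submodule A M)) := by
  intro n m
  simp only
  rw [add_comm, rmIP_add, mul_smul]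

theorem rm_good (I : σ → Ideal A) (M : Type*) [AddCommGroup M] [Module A M] :
    RmGood I (fun n => rmIP I n • (⊤ : Submodule A M)) := by
  refine ⟨0, fun n _ m => ?_⟩
  simp only
  rw [add_comm, rmIP_add, mul_smul]

theorem rm_jr [IsNoetherianRing A] (M : Type*) [AddCommGroup M] [Module A M] [Module.Finite A M]
    {s d : ℕ} (I : Fin s → Ideal A) (x : Fin d → A) (c : Fin d → Fin s)
    (h : IsJointReductionEq A M I x c) :
    ∃ (t : Fin s →₀ ℕ) (u : Fin d → Fin s →₀ ℕ), (∀ j, u j + Finsupp.single (c j) 1 = t) ∧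
      rmIP I t ≤ (⨆ j, Ideal.span {x j} * rmIP I (u j)) ⊔ Module.annihilator A M := by
  obtain ⟨hx, N, hN⟩ := h
  have h0 := hN (fun _ => N) (fun _ => le_rfl)
  let τ : Fin s →₀ ℕ := Finsupp.equivFunOnFinite.symm (fun _ => N + 1)
  let τ' : Fin s → Fin s →₀ ℕ := fun i =>
    Finsupp.equivFunOnFinite.symm (fun j => N + if j = i then 0 else 1)
  have hτ : ∀ i, τ' i + Finsupp.single i 1 = τ := by
    intro i
    ext j
    by_cases hj : j = i
    · subst hj; simp [τ, τ']
    · simp [τ, τ', hj, Finsupp.single_eq_of_ne hj]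
  set J := rmIP I τ with hJ
  set K : Ideal A := ⨆ j, Ideal.span {x j} * rmIP I (τ' (c j)) with hK
  have hKJ : K ≤ J := by
    refine iSup_le fun j => ?_
    rw [hJ, ← hτ (c j), rmIP_add, rmIP_single, mul_comm]
    exact Ideal.mul_mono le_rfl ((Ideal.span_singleton_le_iff_mem _).mpr (hx j))
  have hle : J • (⊤ : Submodule A M) ≤ K • ⊤ := by
    have e : J = ∏ i, I i ^ (N + 1) := rfl
    rw [e, h0]
    refine Finset.sum_induction _ (fun B => B ≤ K • (⊤ : Submodule A M))
      (fun _ _ ha hb => sup_le ha hb) bot_le ?_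
    intro i _
    have e2 : (∏ j, I j ^ (N + if j = i then 0 else 1)) = rmIP I (τ' i) := rfl
    rw [e2, ← mul_smul]
    refine Submodule.smul_mono_left ?_
    have e3 : jrIdeal A x c i ≤ ⨆ j, ⨆ (_ : c j = i), Ideal.span {x j} := by
      refine Ideal.span_le.mpr ?_
      rintro _ ⟨j, hj, rfl⟩
      have e4 : Ideal.span {x j} ≤ ⨆ j, ⨆ (_ : c j = i), Ideal.span {x j} :=
        le_iSup₂_of_le j hj le_rfl
      exact e4 (Ideal.mem_span_singleton_self _)
    refine (Ideal.mul_mono e3 le_rfl).trans ?_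
    rw [Ideal.iSup_mul]
    refine iSup_le fun j => ?_
    rw [Ideal.iSup_mul]
    refine iSup_le fun hj => ?_
    have hj' : c j = i := hj
    subst hj'
    exact le_iSup (fun j => Ideal.span {x j} * rmIP I (τ' (c j))) j
  obtain ⟨q, hq⟩ := rm_pow_le K J hKJ hle
  refine ⟨(q + 1) • τ, fun j => τ' (c j) + q • τ, ?_, ?_⟩
  · intro j
    rw [add_right_comm, hτ, succ_nsmul, add_comm]
  · rw [rmIP_nsmul]
    refine hq.trans (sup_le_sup ?_ le_rfl)
    rw [hK, Ideal.iSup_mul]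
    refine iSup_mono fun j => ?_
    rw [rmIP_add, rmIP_nsmul, mul_assoc]

theorem rm_lenNat {N : Type*} [AddCommGroup N] [Module A N] (Q : Submodule A N) :
    lenNat A (N ⧸ Q) = (rmLen ⊤ Q).toNat := by
  rw [rmLen_top, lenNat, modLength, Module.length_eq_height]

theorem rm_fin {N : Type*} [AddCommGroup N] [Module A N] (Q : Submodule A N)
    (h : IsFiniteLength A (N ⧸ Q)) : rmLen ⊤ Q ≠ ⊤ := by
  rw [rmLen_top]
  exact Module.length_ne_top_iff.mpr h

theorem rm_main [IsNoetherianRing A]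
    (M : Type*) [AddCommGroup M] [Module A M] [Module.Finite A M]
    {s : ℕ} (I : Fin s → Ideal A)
    (d : ℕ) (k : Fin s → ℕ) (hsum : ∑ i, k i = d)
    (x : Fin d → A) (c : Fin d → Fin s)
    (hjr : IsJointReduction A M I x c k) (e₁ e₂ : ℕ)
    (he₁ : IsMixedMultPrimary A M I k e₁)
    (he₂ : IsHSMult A M (Ideal.span (Set.range x)) d e₂) : e₁ = e₂ := by
  obtain ⟨val, hval⟩ := rm_lemma2 x (List.finRange d) M (fun j hj => absurd (List.mem_finRange j) hj)
  have h1 : (e₁ : ℚ) = val := by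
    obtain ⟨t, u, hu, ht⟩ := rm_jr M I x c hjr.1
    obtain ⟨P, hP, ⟨N, hN⟩, he⟩ := he₁
    have hev : ∀ᶠ n : Fin s →₀ ℕ in atTop, ∀ i, N ≤ n i := by
      refine eventually_atTop.mpr ⟨Finsupp.equivFunOnFinite.symm (fun _ => N), fun n hn i => ?_⟩
      exact hn i
    have hA := hval s I c hjr.1.1 t u hu ht _ (rm_stab I M) (rm_good I M) (by
      filter_upwards [hev] with n hn
      exact rm_fin _ (hN n hn).1)
    have hB : ∀ᶠ n : Fin s →₀ ℕ in atTop,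
        (((rmLen ⊤ (rmIP I n • (⊤ : Submodule A M))).toNat : ℤ) : ℚ) =
          MvPolynomial.eval (fun i => (n i : ℚ)) P := by
      filter_upwards [hev] with n hn
      rw [← (hN n hn).2, rm_lenNat]
      rfl
    have hC := rmDL_congr c (List.finRange d) hB
    obtain ⟨n, hn1, hn2⟩ := (hA.and hC).exists
    have hcount : ∀ i, ((List.finRange d).map c).count i = k i := by
      intro i
      rw [← hjr.2 i, List.count, List.countP_map, List.countP_eq_length_filter]
      rw [← List.toFinset_card_of_nodup ((List.nodup_finRange d).filter _)]
      congr 1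
      ext j
      simp
    rw [rmDL_mv c _ k hcount P hP, ← he, ← rmDL_cast, hn1] at hn2
    exact hn2.symm
  have h2 : (e₂ : ℚ) = val := by
    obtain ⟨P, hP, ⟨N, hN⟩, he⟩ := he₂
    set I' : Fin 1 → Ideal A := fun _ => Ideal.span (Set.range x) with hI'
    let c' : Fin d → Fin 1 := fun _ => 0
    have hev : ∀ᶠ n : Fin 1 →₀ ℕ in atTop, N ≤ n 0 := by
      refine eventually_atTop.mpr ⟨Finsupp.equivFunOnFinite.symm (fun _ => N), fun n hn => ?_⟩
      exact hn 0
    have hip : ∀ n : Fin 1 →₀ ℕ, rmIP I' n = Ideal.span (Set.range x) ^ n 0 := by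
      intro n
      simp [rmIP, hI']
    have hA := hval 1 I' c' (fun j => Ideal.subset_span ⟨j, rfl⟩) (Finsupp.single 0 1) (fun _ => 0)
      (fun j => zero_add _) (by
        rw [rmIP_single, hI']
        refine le_sup_of_le_left ?_
        refine Ideal.span_le.mpr ?_
        rintro _ ⟨j, rfl⟩
        refine (le_iSup (fun j => Ideal.span {x j} * rmIP I' 0) j) ?_
        rw [rmIP_zero, Ideal.mul_top]
        exact Ideal.mem_span_singleton_self _) _ (rm_stab I' M) (rm_good I' M) (by
      filter_upwards [hev] with n hn
      rw [hip]
      exact rm_fin _ (hN _ hn).1)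
    have hB : ∀ᶠ n : Fin 1 →₀ ℕ in atTop,
        (((rmLen ⊤ (rmIP I' n • (⊤ : Submodule A M))).toNat : ℤ) : ℚ) =
          ∑ i ∈ Finset.range (d + 1), P.coeff i * ∏ l, (n l : ℚ) ^ ((fun _ => i : Fin 1 → ℕ) l) := by
      filter_upwards [hev] with n hn
      rw [hip, ← rm_lenNat, Int.cast_natCast, (hN _ hn).2,
        Polynomial.eval_eq_sum_range' (Nat.lt_succ_of_le hP)]
      simp
    have hC := rmDL_congr c' (List.finRange d) hB
    obtain ⟨n, hn1, hn2⟩ := (hA.and hC).exists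
    have hcount : ∀ i, ((List.finRange d).map c').count i = d := by
      intro i
      have : i = 0 := Subsingleton.elim _ _
      subst this
      simp [c', List.map_const']
    rw [rmDL_sum c' _ (fun i => P.coeff i) _
      (fun i n => ∏ l, (n l : ℚ) ^ ((fun _ => i : Fin 1 → ℕ) l)), ← rmDL_cast, hn1] at hn2
    rw [hn2, Finset.sum_eq_single d]
    · rw [rmDL_monomial c' _ (fun _ => d) (fun _ => d) hcount le_rfl, if_pos rfl, he]
      simp
    · intro i hi hne
      have := Finset.mem_range.mp hi
      rw [rmDL_monomial c' _ (fun _ => d) (fun _ => i) hcount (by simp; omega), if_neg, mul_zero]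
      intro hh
      exact hne (congrFun hh 0)
    · simp
  have h3 : (e₁ : ℚ) = e₂ := h1.trans h2.symm
  exact_mod_cast h3


end ReesAux

/-- Corollary 3.6; Rees's theorem.  If `I 1, …, I s` are `m`-primary,
`k 1 + ⋯ + k s = d`, and `R` is a joint reduction of `(I 1, …, I s)` with respect to `M` of
type `(k 1, …, k s)`, then `e_A(I 1^{[k 1]}, …, I s^{[k s]}; M) = e_A(R; M)`. -/
theorem rees_mixedMult_eq_multiplicity_of_jointReduction
    (A : Type*) [CommRing A] [IsNoetherianRing A] [IsLocalRing A]
    [Infinite (ResidueField A)]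
    (M : Type*) [AddCommGroup M] [Module A M] [Module.Finite A M]
    {s : ℕ} (I : Fin s → Ideal A)
    (hprim : ∀ i, (I i).radical = maximalIdeal A)
    (d : ℕ) (hd : 0 < d) (hdim : modDim A M = (d : WithBot ℕ∞))
    (k : Fin s → ℕ) (hsum : ∑ i, k i = d)
    (x : Fin d → A) (c : Fin d → Fin s)
    (hjr : IsJointReduction A M I x c k) :
    ∀ e₁ e₂ : ℕ, IsMixedMultPrimary A M I k e₁ →
      IsHSMult A M (Ideal.span (Set.range x)) d e₂ → e₁ = e₂ := by
  intro e₁ e₂ h₁ h₂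
  exact rm_main M I d k hsum x c hjr e₁ e₂ h₁ h₂
end
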